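/- arXiv:2510.07405 — 3 statements merged into one kernel-verified Lean document; each statement's English description precedes it below -/
import Mathlib

section
/- Let A be an Iwanaga-Gorenstein algebra of Gorenstein dimension at most 1. Then the stable Cohen-Macaulay category CMP A (equivalently, the category of non-projective syzygies) is generated under extensions and direct summands by the A-module rad A = ⊕_i rad P(i), the direct sum of the radicals of the indecomposable projective modules. -/
noncomputable section

open CategoryTheory Opposite DirectSum MulOpposite

/-- An idempotent is primitive if it is nonzero and is not the sum of two nonzero
orthogonal idempotents. -/
def IsPrimitiveIdempotent {A : Type} [Ring A] (a : A) : Prop :=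
  IsIdempotentElem a ∧ a ≠ 0 ∧
    ∀ b c : A, IsIdempotentElem b → IsIdempotentElem c → b * c = 0 → c * b = 0 →
      a = b + c → b = 0 ∨ c = 0

/-- A complete family of orthogonal idempotents. -/
def CompOrthIdem {A ι : Type} [Ring A] [Fintype ι] (e : ι → A) : Prop :=
  (∀ i j, i ≠ j → e i * e j = 0) ∧ (∀ i, IsIdempotentElem (e i)) ∧ (∑ i, e i) = 1

/-- The two-sided ideal `A e A` generated by an idempotent `e`, viewed as a
right `A`-module (i.e. a module over `Aᵐᵒᵖ`): it is the right `A`-submodule of `A`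
spanned by all elements `b * e`. -/
def genIdeal {A : Type} [Ring A] (e : A) : Submodule Aᵐᵒᵖ A :=
  Submodule.span Aᵐᵒᵖ {x | ∃ b : A, x = b * e}

/-- The indecomposable projective right module `e A` at the idempotent `e`. -/
def pIdeal {A : Type} [Ring A] (e : A) : Submodule Aᵐᵒᵖ A :=
  Submodule.span Aᵐᵒᵖ ({e} : Set A)

/-- The radical of a module: the intersection of all maximal submodules.
For a finite dimensional module `M` over a finite dimensional algebra this is `M · rad A`. -/
def radical (R M : Type) [Ring R] [AddCommGroup M] [Module R M] : Submodule R M :=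
  sInf {m | IsCoatom m}

/-- `Ext¹` for right `A`-modules, as a `k`-module. -/
abbrev rext1 (k : Type) [Field k] (A : Type) [Ring A] [Algebra k A]
    (M N : ModuleCat.{0} Aᵐᵒᵖ) : ModuleCat.{0} k :=
  ((Ext k (ModuleCat.{0} Aᵐᵒᵖ) 1).obj (op M)).obj N

/-- A right `A`-module `M` is Cohen-Macaulay if `Ext¹_A(M, A) = 0`. -/
def IsCM (k : Type) [Field k] (A : Type) [Ring A] [Algebra k A]
    (M : ModuleCat.{0} Aᵐᵒᵖ) : Prop :=
  Subsingleton (rext1 k A M (ModuleCat.of Aᵐᵒᵖ A))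

/-- A module has injective dimension at most 1: it admits an injective
coresolution `0 → M → I₀ → I₁ → 0`. -/
def InjDimLE1 (R : Type) [Ring R] (M : ModuleCat.{0} R) : Prop :=
  ∃ (I₀ I₁ : ModuleCat.{0} R) (f : M →ₗ[R] I₀) (g : I₀ →ₗ[R] I₁),
    Module.Injective R I₀ ∧ Module.Injective R I₁ ∧
    Function.Injective f ∧ Function.Surjective g ∧ Function.Exact f g

/-- A module has projective dimension at most 1: it admits a projective
resolution `0 → P₁ → P₀ → M → 0`. -/
def ProjDimLE1 (R : Type) [Ring R] (M : ModuleCat.{0} R) : Prop :=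
  ∃ (P₀ P₁ : ModuleCat.{0} R) (g : P₀ →ₗ[R] M) (f : P₁ →ₗ[R] P₀),
    Module.Projective R P₀ ∧ Module.Projective R P₁ ∧
    Function.Surjective g ∧ Function.Injective f ∧ Function.Exact f g

/-- `R` is Iwanaga-Gorenstein of Gorenstein dimension at most 1: every projective
module has injective dimension at most 1 and every injective module has projective
dimension at most 1. -/
def IwanagaGorenstein1 (R : Type) [Ring R] : Prop :=
  (∀ P : ModuleCat.{0} R, Module.Projective R P → InjDimLE1 R P) ∧
  (∀ I : ModuleCat.{0} R, Module.Injective R I → ProjDimLE1 R I)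

/-- The smallest class of objects of the stable Cohen-Macaulay category containing
`rad A` (hence its summands `rad P(i)`), the projective modules (which are zero objects of
the stable category), closed under isomorphism, extensions, and direct summands. -/
inductive GenRad (A : Type) [Ring A] : ModuleCat.{0} Aᵐᵒᵖ → Prop
  /-- the generator `rad A` -/
  | gen (M : ModuleCat.{0} Aᵐᵒᵖ)
      (h : Nonempty (M ≃ₗ[Aᵐᵒᵖ] ↥(radical Aᵐᵒᵖ A))) : GenRad A M
  /-- projectives are zero in the stable category -/
  | proj (M : ModuleCat.{0} Aᵐᵒᵖ) (h : Module.Projective Aᵐᵒᵖ M) : GenRad A M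
  /-- closure under extensions -/
  | ext (L M N : ModuleCat.{0} Aᵐᵒᵖ) (f : L →ₗ[Aᵐᵒᵖ] M) (g : M →ₗ[Aᵐᵒᵖ] N)
      (hf : Function.Injective f) (hg : Function.Surjective g) (hfg : Function.Exact f g)
      (hL : GenRad A L) (hN : GenRad A N) : GenRad A M
  /-- closure under direct summands -/
  | summand (M Y : ModuleCat.{0} Aᵐᵒᵖ) (s : M →ₗ[Aᵐᵒᵖ] Y) (r : Y →ₗ[Aᵐᵒᵖ] M)
      (h : r ∘ₗ s = LinearMap.id) (hY : GenRad A Y) : GenRad A M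

section helpers

variable {k A : Type} [Field k] [Ring A] [Algebra k A]

/-- Vanishing of `Ext¹` gives extension of maps from a syzygy. -/
theorem aux_extend (M N : ModuleCat.{0} Aᵐᵒᵖ) (h : Subsingleton (rext1 k A M N))
    (F : Type) [AddCommGroup F] [Module Aᵐᵒᵖ F] [Module.Projective Aᵐᵒᵖ F]
    (p : F →ₗ[Aᵐᵒᵖ] M) (hp : Function.Surjective p)
    (u : LinearMap.ker p →ₗ[Aᵐᵒᵖ] N) :
    ∃ w : F →ₗ[Aᵐᵒᵖ] N, ∀ x : LinearMap.ker p, w x = u x := by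
  let P := projectiveResolution M
  have hz : Limits.IsZero ((P.complex.linearYonedaObj k N).homology 1) :=
    Limits.IsZero.of_iso (ModuleCat.isZero_of_subsingleton _) (P.isoExt 1 N).symm
  rw [← HomologicalComplex.exactAt_iff_isZero_homology,
    HomologicalComplex.exactAt_iff' _ 0 1 2 (by simp) (by simp)] at hz
  have key : ∀ f : P.complex.X 1 ⟶ N, P.complex.d 2 1 ≫ f = 0 →
      ∃ g : P.complex.X 0 ⟶ N, P.complex.d 1 0 ≫ g = f := by
    rw [ShortComplex.moduleCat_exact_iff] at hz
    intro f hf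
    exact hz f hf
  let e : P.complex.X 0 ⟶ M := P.π.f 0
  have hex : Function.Exact (P.complex.d 1 0).hom e.hom :=
    (ShortComplex.ShortExact.moduleCat_exact_iff_function_exact _).1 P.exact₀
  have hesurj : Function.Surjective e.hom :=
    (ModuleCat.epi_iff_surjective e).1 (inferInstanceAs (Epi (P.π.f 0)))
  have hproj : Module.Projective Aᵐᵒᵖ (P.complex.X 0) :=
    (IsProjective.iff_projective (P.complex.X 0)).2 (P.projective 0)
  obtain ⟨b, hb⟩ := Module.projective_lifting_property p e.hom hp
  obtain ⟨c, hc⟩ := Module.projective_lifting_property e.hom p hesurj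
  have hb' : ∀ x, p (b x) = e.hom x := fun x => LinearMap.congr_fun hb x
  have hc' : ∀ x, e.hom (c x) = p x := fun x => LinearMap.congr_fun hc x
  let bd : P.complex.X 1 →ₗ[Aᵐᵒᵖ] LinearMap.ker p :=
    LinearMap.codRestrict (LinearMap.ker p) (b ∘ₗ (P.complex.d 1 0).hom) (by
      intro y
      simp only [LinearMap.mem_ker, LinearMap.comp_apply, hb']
      exact hex.apply_apply_eq_zero y)
  obtain ⟨v, hv⟩ := key (ModuleCat.ofHom (u ∘ₗ bd)) (by
    ext y
    have h0 : (P.complex.d 1 0).hom ((P.complex.d 2 1).hom y) = 0 := by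
      have := P.complex.d_comp_d 2 1 0
      exact LinearMap.congr_fun (congrArg ModuleCat.Hom.hom this) y
    have h1 : bd ((P.complex.d 2 1).hom y) = 0 := by
      apply Subtype.ext
      simp only [bd, LinearMap.codRestrict_apply, LinearMap.comp_apply, h0, map_zero]
      rfl
    change u (bd ((P.complex.d 2 1).hom y)) = 0
    rw [h1, map_zero])
  have hv' : ∀ y, v.hom ((P.complex.d 1 0).hom y) = u (bd y) := fun y =>
    LinearMap.congr_fun (congrArg ModuleCat.Hom.hom hv) y
  let q : F →ₗ[Aᵐᵒᵖ] LinearMap.ker p :=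
    LinearMap.codRestrict (LinearMap.ker p) (LinearMap.id - b ∘ₗ c) (by
      intro x
      simp [hb', hc'])
  refine ⟨v.hom ∘ₗ c + u ∘ₗ q, ?_⟩
  intro x
  have hx : e.hom (c x) = 0 := by rw [hc']; exact x.2
  obtain ⟨y, hy⟩ := (hex _).1 hx
  have : bd y + q x = x := by
    apply Subtype.ext
    simp [bd, q, hy]
  rw [LinearMap.add_apply, LinearMap.comp_apply, LinearMap.comp_apply, ← hy, hv', ← map_add, this]

abbrev GR (A : Type) [Ring A] (X : Type) [AddCommGroup X] [Module Aᵐᵒᵖ X] : Prop :=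
  GenRad A (ModuleCat.of Aᵐᵒᵖ X)

section
variable {K X N Q K' S : Type} [AddCommGroup K] [Module Aᵐᵒᵖ K] [AddCommGroup X] [Module Aᵐᵒᵖ X]
  [AddCommGroup N] [Module Aᵐᵒᵖ N] [AddCommGroup Q] [Module Aᵐᵒᵖ Q]
  [AddCommGroup K'] [Module Aᵐᵒᵖ K'] [AddCommGroup S] [Module Aᵐᵒᵖ S]

theorem GR_ext (f : K →ₗ[Aᵐᵒᵖ] X) (g : X →ₗ[Aᵐᵒᵖ] N) (hf : Function.Injective f)
    (hg : Function.Surjective g) (hfg : Function.Exact f g) (h1 : GR A K) (h2 : GR A N) :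
    GR A X :=
  GenRad.ext (ModuleCat.of _ K) (ModuleCat.of _ X) (ModuleCat.of _ N) f g hf hg hfg h1 h2

theorem GR_summand (s : K →ₗ[Aᵐᵒᵖ] X) (r : X →ₗ[Aᵐᵒᵖ] K) (h : r ∘ₗ s = LinearMap.id)
    (h2 : GR A X) : GR A K :=
  GenRad.summand (ModuleCat.of _ K) (ModuleCat.of _ X) s r h h2

theorem GR_equiv (e : K ≃ₗ[Aᵐᵒᵖ] X) (h : GR A X) : GR A K :=
  GR_summand e.toLinearMap e.symm.toLinearMap (by ext; simp) h

/-- Pullback lemma. -/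
theorem GR_pullback [Module.Projective Aᵐᵒᵖ Q]
    (p : X →ₗ[Aᵐᵒᵖ] N) (hp : Function.Surjective p)
    (q : Q →ₗ[Aᵐᵒᵖ] N) (hq : Function.Surjective q)
    (hX : GR A X) (hk : GR A (LinearMap.ker q)) : GR A (LinearMap.ker p) := by
  let t : X × Q →ₗ[Aᵐᵒᵖ] N :=
    p ∘ₗ LinearMap.fst Aᵐᵒᵖ X Q - q ∘ₗ LinearMap.snd Aᵐᵒᵖ X Q
  let E := LinearMap.ker t
  have hE : ∀ z : E, p z.1.1 = q z.1.2 := fun z => by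
    have h0 : p z.1.1 - q z.1.2 = 0 := z.2
    exact sub_eq_zero.1 h0
  let i : LinearMap.ker q →ₗ[Aᵐᵒᵖ] E :=
    LinearMap.codRestrict E (LinearMap.inr Aᵐᵒᵖ X Q ∘ₗ (LinearMap.ker q).subtype) (by
      intro x; simp [E, t])
  let g : E →ₗ[Aᵐᵒᵖ] X := LinearMap.fst Aᵐᵒᵖ X Q ∘ₗ E.subtype
  have hGE : GR A E := by
    refine GR_ext i g ?_ ?_ ?_ hk hX
    · intro x y hxy
      have := congrArg (fun z : E => z.1.2) hxy
      exact Subtype.ext this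
    · intro x
      obtain ⟨y, hy⟩ := hq (p x)
      exact ⟨⟨(x, y), by simp [E, t, hy]⟩, rfl⟩
    · intro z
      constructor
      · intro hz
        have hz' : z.1.1 = 0 := hz
        refine ⟨⟨z.1.2, ?_⟩, ?_⟩
        · have := hE z
          rw [hz', map_zero] at this
          exact this.symm
        · apply Subtype.ext
          exact Prod.ext hz'.symm rfl
      · rintro ⟨x, rfl⟩
        rfl
  obtain ⟨c, hc⟩ := Module.projective_lifting_property p q hp
  have hc' : ∀ x, p (c x) = q x := fun x => LinearMap.congr_fun hc x
  let s : LinearMap.ker p →ₗ[Aᵐᵒᵖ] E :=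
    LinearMap.codRestrict E (LinearMap.inl Aᵐᵒᵖ X Q ∘ₗ (LinearMap.ker p).subtype) (by
      intro x; simp [E, t])
  let r : E →ₗ[Aᵐᵒᵖ] LinearMap.ker p :=
    LinearMap.codRestrict (LinearMap.ker p)
      ((LinearMap.fst Aᵐᵒᵖ X Q - c ∘ₗ LinearMap.snd Aᵐᵒᵖ X Q) ∘ₗ E.subtype) (by
      intro z
      simp [hc', hE z])
  refine GR_summand s r ?_ hGE
  refine LinearMap.ext fun x => Subtype.ext ?_
  change (x : X) - c 0 = x
  rw [map_zero, sub_zero]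

theorem GR_proj [h : Module.Projective Aᵐᵒᵖ X] : GR A X := GenRad.proj _ h

/-- Syzygies of summands. -/
theorem GR_syz_summand [Module.Projective Aᵐᵒᵖ Q] [Module.Projective Aᵐᵒᵖ X]
    (q : Q →ₗ[Aᵐᵒᵖ] N) (hq : Function.Surjective q) (hk : GR A (LinearMap.ker q))
    (i : S →ₗ[Aᵐᵒᵖ] N) (r : N →ₗ[Aᵐᵒᵖ] S) (hir : r ∘ₗ i = LinearMap.id)
    (p : X →ₗ[Aᵐᵒᵖ] S) (hp : Function.Surjective p) : GR A (LinearMap.ker p) := by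
  have hir' : ∀ x, r (i x) = x := fun x => LinearMap.congr_fun hir x
  let t : X × Q →ₗ[Aᵐᵒᵖ] N :=
    i ∘ₗ p ∘ₗ LinearMap.fst Aᵐᵒᵖ X Q + (LinearMap.id - i ∘ₗ r) ∘ₗ q ∘ₗ LinearMap.snd Aᵐᵒᵖ X Q
  have ht : Function.Surjective t := by
    intro n
    obtain ⟨x, hx⟩ := hp (r n)
    obtain ⟨y, hy⟩ := hq n
    exact ⟨(x, y), by simp [t, hx, hy]⟩
  have h1 : GR A (LinearMap.ker t) := GR_pullback t ht q hq GR_proj hk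
  let s : LinearMap.ker p →ₗ[Aᵐᵒᵖ] LinearMap.ker t :=
    LinearMap.codRestrict _ (LinearMap.inl Aᵐᵒᵖ X Q ∘ₗ (LinearMap.ker p).subtype) (by
      intro x; simp [t])
  let r' : LinearMap.ker t →ₗ[Aᵐᵒᵖ] LinearMap.ker p :=
    LinearMap.codRestrict _ (LinearMap.fst Aᵐᵒᵖ X Q ∘ₗ (LinearMap.ker t).subtype) (by
      intro z
      have h0 : i (p z.1.1) + (q z.1.2 - i (r (q z.1.2))) = 0 := z.2
      have h1 := congrArg r h0
      simp only [map_add, map_sub, hir', sub_self, add_zero, map_zero] at h1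
      exact h1)
  refine GR_summand s r' ?_ h1
  exact LinearMap.ext fun x => Subtype.ext rfl

end

/-- The regular right module is free of rank one. -/
def regEquiv (A : Type) [Ring A] : A ≃ₗ[Aᵐᵒᵖ] Aᵐᵒᵖ :=
  { MulOpposite.opAddEquiv with
    map_smul' := fun r a => by
      simp [MulOpposite.smul_eq_mul_unop] }

theorem reg_projective : Module.Projective Aᵐᵒᵖ A :=
  Module.Projective.of_equiv (regEquiv A).symm

theorem reg_finite : Module.Finite Aᵐᵒᵖ A :=
  Module.Finite.equiv (regEquiv A).symm

/-- Syzygies of simple modules. -/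
theorem GR_simple [IsArtinianRing Aᵐᵒᵖ]
    {S X : Type} [AddCommGroup S] [Module Aᵐᵒᵖ S] [IsSimpleModule Aᵐᵒᵖ S]
    [AddCommGroup X] [Module Aᵐᵒᵖ X] [Module.Projective Aᵐᵒᵖ X]
    (p : X →ₗ[Aᵐᵒᵖ] S) (hp : Function.Surjective p) : GR A (LinearMap.ker p) := by
  have := reg_projective (A := A)
  have := reg_finite (A := A)
  let J := radical Aᵐᵒᵖ A
  have hJ : J = Module.jacobson Aᵐᵒᵖ A := rfl
  have hss : IsSemisimpleModule Aᵐᵒᵖ (A ⧸ J) := by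
    rw [IsArtinian.isSemisimpleModule_iff_jacobson]
    exact Module.jacobson_quotient_jacobson Aᵐᵒᵖ A
  have := IsSimpleModule.nontrivial Aᵐᵒᵖ S
  obtain ⟨m, hm⟩ := exists_ne (0 : S)
  let φ : A →ₗ[Aᵐᵒᵖ] S := LinearMap.toSpanSingleton Aᵐᵒᵖ S m ∘ₗ (regEquiv A).toLinearMap
  have hφ : Function.Surjective φ :=
    (IsSimpleModule.toSpanSingleton_surjective Aᵐᵒᵖ hm).comp (regEquiv A).surjective
  have hco : IsCoatom (LinearMap.ker φ) := by
    rw [← isSimpleModule_iff_isCoatom]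
    exact IsSimpleModule.congr (φ.quotKerEquivOfSurjective hφ)
  have hle : J ≤ LinearMap.ker φ := sInf_le hco
  let r : (A ⧸ J) →ₗ[Aᵐᵒᵖ] S := J.liftQ φ hle
  have hr : Function.Surjective r := by
    intro s
    obtain ⟨a, rfl⟩ := hφ s
    exact ⟨J.mkQ a, by simp [r]⟩
  obtain ⟨i, hi⟩ : ∃ i : S →ₗ[Aᵐᵒᵖ] (A ⧸ J), r ∘ₗ i = LinearMap.id :=
    IsSemisimpleModule.lifting_property r hr LinearMap.id
  refine GR_syz_summand J.mkQ J.mkQ_surjective ?_ i r hi p hp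
  rw [Submodule.ker_mkQ]
  exact GenRad.gen _ ⟨LinearEquiv.refl _ _⟩

/-- Syzygies of finite length modules. -/
theorem GR_syz [IsArtinianRing Aᵐᵒᵖ]
    {N : Type} [AddCommGroup N] [Module Aᵐᵒᵖ N] (hN : IsFiniteLength Aᵐᵒᵖ N) :
    ∀ (X : Type) [AddCommGroup X] [Module Aᵐᵒᵖ X] [Module.Projective Aᵐᵒᵖ X]
      (p : X →ₗ[Aᵐᵒᵖ] N) (_ : Function.Surjective p), GR A (LinearMap.ker p) := by
  induction hN with
  | of_subsingleton =>
    intro X _ _ _ p _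
    have : LinearMap.ker p = ⊤ := by
      ext x; simpa using Subsingleton.elim _ _
    rw [this]
    exact GR_equiv Submodule.topEquiv GR_proj
  | @of_simple_quotient N _ _ N' _ _ ih =>
    intro X _ _ _ p hp
    let p' : X →ₗ[Aᵐᵒᵖ] (N ⧸ N') := N'.mkQ ∘ₗ p
    have h1 : GR A (LinearMap.ker p') := GR_simple p' (N'.mkQ_surjective.comp hp)
    let Q := (N' →₀ Aᵐᵒᵖ)
    let q : Q →ₗ[Aᵐᵒᵖ] N' := Finsupp.linearCombination Aᵐᵒᵖ id
    have hq : Function.Surjective q := Finsupp.linearCombination_id_surjective _ _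
    have h2 := ih Q q hq
    let t : LinearMap.ker p' →ₗ[Aᵐᵒᵖ] N' :=
      LinearMap.codRestrict N' (p ∘ₗ (LinearMap.ker p').subtype) (by
        intro x
        have h0 : N'.mkQ (p x) = 0 := x.2
        rwa [Submodule.mkQ_apply, Submodule.Quotient.mk_eq_zero] at h0)
    have ht : Function.Surjective t := by
      intro n
      obtain ⟨x, hx⟩ := hp n
      exact ⟨⟨x, by simp [p', hx]⟩, Subtype.ext hx⟩
    have h3 : GR A (LinearMap.ker t) := GR_pullback t ht q hq h1 h2
    let s : LinearMap.ker p →ₗ[Aᵐᵒᵖ] LinearMap.ker t :=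
      LinearMap.codRestrict _ (LinearMap.codRestrict _ (LinearMap.ker p).subtype (by
        intro x; simp [p'])) (by
        intro x
        exact Subtype.ext x.2)
    let r : LinearMap.ker t →ₗ[Aᵐᵒᵖ] LinearMap.ker p :=
      LinearMap.codRestrict _ ((LinearMap.ker p').subtype ∘ₗ (LinearMap.ker t).subtype) (by
        intro x
        exact congrArg Subtype.val x.2)
    refine GR_summand s r ?_ h3
    exact LinearMap.ext fun x => Subtype.ext rfl

/-- Extension of maps from a finite syzygy into an arbitrary projective. -/
theorem aux_extend_proj {F M P : Type} [AddCommGroup F] [Module Aᵐᵒᵖ F]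
    [AddCommGroup M] [Module Aᵐᵒᵖ M] [AddCommGroup P] [Module Aᵐᵒᵖ P]
    [Module.Projective Aᵐᵒᵖ P]
    (p : F →ₗ[Aᵐᵒᵖ] M) [Module.Finite Aᵐᵒᵖ (LinearMap.ker p)]
    (H : ∀ u : LinearMap.ker p →ₗ[Aᵐᵒᵖ] A,
      ∃ w : F →ₗ[Aᵐᵒᵖ] A, ∀ x : LinearMap.ker p, w x = u x)
    (f : LinearMap.ker p →ₗ[Aᵐᵒᵖ] P) :
    ∃ w : F →ₗ[Aᵐᵒᵖ] P, ∀ x : LinearMap.ker p, w x = f x := by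
  classical
  have H' : ∀ u : LinearMap.ker p →ₗ[Aᵐᵒᵖ] Aᵐᵒᵖ,
      ∃ w : F →ₗ[Aᵐᵒᵖ] Aᵐᵒᵖ, ∀ x : LinearMap.ker p, w x = u x := by
    intro u
    obtain ⟨w, hw⟩ := H ((regEquiv A).symm.toLinearMap ∘ₗ u)
    exact ⟨(regEquiv A).toLinearMap ∘ₗ w, fun x => by simp [hw]⟩
  obtain ⟨s, hs⟩ := (Module.projective_def'.1 ‹Module.Projective Aᵐᵒᵖ P›)
  let g := s ∘ₗ f
  obtain ⟨G, hG⟩ := (Module.Finite.fg_top : (⊤ : Submodule Aᵐᵒᵖ (LinearMap.ker p)).FG)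
  let T : Finset P := G.biUnion fun x => (g x).support
  have hT : ∀ x, g x ∈ Finsupp.supported Aᵐᵒᵖ Aᵐᵒᵖ (T : Set P) := by
    intro x
    have hx : x ∈ Submodule.span Aᵐᵒᵖ (G : Set (LinearMap.ker p)) := by rw [hG]; trivial
    have hle : Submodule.span Aᵐᵒᵖ (G : Set (LinearMap.ker p)) ≤
        (Finsupp.supported Aᵐᵒᵖ Aᵐᵒᵖ (T : Set P)).comap g := by
      rw [Submodule.span_le]
      intro y hy
      simp only [SetLike.mem_coe, Submodule.mem_comap, Finsupp.mem_supported]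
      intro z hz
      exact Finset.mem_coe.2 (Finset.mem_biUnion.2 ⟨y, hy, hz⟩)
    exact hle hx
  choose w hw using fun i : P => H' (Finsupp.lapply i ∘ₗ g)
  let W : F →ₗ[Aᵐᵒᵖ] (P →₀ Aᵐᵒᵖ) := ∑ i ∈ T, Finsupp.lsingle i ∘ₗ w i
  refine ⟨Finsupp.linearCombination Aᵐᵒᵖ id ∘ₗ W, fun x => ?_⟩
  have hW : W x = g x := by
    have h1 : W x = ∑ i ∈ T, Finsupp.single i (g x i) := by
      simp [W, LinearMap.sum_apply, hw]
    rw [h1]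
    have h2 : (g x).support ⊆ T := by
      have := hT x
      rw [Finsupp.mem_supported] at this
      exact_mod_cast this
    conv_rhs => rw [← Finsupp.sum_single (g x)]
    rw [Finsupp.sum_of_support_subset _ h2 _ (by simp)]
  rw [LinearMap.comp_apply, hW]
  exact LinearMap.congr_fun hs (f x)

end helpers

/-- Let `A` be an Iwanaga-Gorenstein algebra of Gorenstein dimension at
most 1. Then the stable Cohen-Macaulay category of `A` is generated, under extensions and
direct summands, by the module `rad A` (the direct sum of the radicals of the
indecomposable projective modules). -/
theorem stable_cmp_generated_by_radical
    (k A : Type) [Field k] [IsAlgClosed k] [Ring A] [Algebra k A] [FiniteDimensional k A]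
    (hIG : IwanagaGorenstein1 Aᵐᵒᵖ) :
    ∀ M : ModuleCat.{0} Aᵐᵒᵖ, Module.Finite Aᵐᵒᵖ M → IsCM k A M → GenRad A M := by
  intro M hfin hCM
  have hA : IsArtinianRing Aᵐᵒᵖ := IsArtinianRing.of_finite k Aᵐᵒᵖ
  have hNo : IsNoetherianRing Aᵐᵒᵖ := inferInstance
  have H := fun (F : Type) [AddCommGroup F] [Module Aᵐᵒᵖ F] [Module.Projective Aᵐᵒᵖ F]
    (p : F →ₗ[Aᵐᵒᵖ] M) (hp : Function.Surjective p) (u : LinearMap.ker p →ₗ[Aᵐᵒᵖ] A) =>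
      aux_extend (k := k) M (ModuleCat.of Aᵐᵒᵖ A) hCM F p hp u
  obtain ⟨n, p, hp⟩ := Module.Finite.exists_fin' Aᵐᵒᵖ M
  -- embed `M` in an injective
  let I : ModuleCat.{0} Aᵐᵒᵖ := Injective.under M
  let j : M →ₗ[Aᵐᵒᵖ] I := (Injective.ι M).hom
  have hj : Function.Injective j := (ModuleCat.mono_iff_injective _).1 inferInstance
  have hI : Module.Injective Aᵐᵒᵖ I :=
    Module.injective_module_of_injective_object _ _ (inj := inferInstanceAs (Injective I))
  obtain ⟨P₀, P₁, g, f, hP0, hP1, hg, hf, hfg⟩ := hIG.2 I hI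
  obtain ⟨φ, hφ⟩ := Module.projective_lifting_property g (j ∘ₗ p) hg
  have hφ' : ∀ x, g (φ x) = j (p x) := fun x => LinearMap.congr_fun hφ x
  have hmem : ∀ x : LinearMap.ker p, φ x ∈ LinearMap.range f := by
    intro x
    apply (hfg _).1
    rw [hφ', LinearMap.mem_ker.1 x.2, map_zero]
  let fe := LinearEquiv.ofInjective f hf
  let u : LinearMap.ker p →ₗ[Aᵐᵒᵖ] P₁ :=
    fe.symm.toLinearMap ∘ₗ
      LinearMap.codRestrict (LinearMap.range f) (φ ∘ₗ (LinearMap.ker p).subtype) hmem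
  have hu : ∀ x, f (u x) = φ x := by
    intro x
    have := congrArg Subtype.val (fe.apply_symm_apply ⟨φ x, hmem x⟩)
    exact this
  obtain ⟨w, hw⟩ := aux_extend_proj p (H _ p hp) u
  have hker : LinearMap.ker p ≤ LinearMap.ker (φ - f ∘ₗ w) := by
    intro x hx
    have h1 := hw ⟨x, hx⟩
    have h2 := hu ⟨x, hx⟩
    simp only at h1 h2
    simp [h1, h2]
  let θ : M →ₗ[Aᵐᵒᵖ] P₀ :=
    (LinearMap.ker p).liftQ (φ - f ∘ₗ w) hker ∘ₗ
      (p.quotKerEquivOfSurjective hp).symm.toLinearMap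
  have hθ : ∀ x, θ (p x) = φ x - f (w x) := by
    intro x
    have : (p.quotKerEquivOfSurjective hp).symm (p x) = (LinearMap.ker p).mkQ x := by
      rw [LinearEquiv.symm_apply_eq]; rfl
    simp [θ, this]
  have hθi : Function.Injective θ := by
    rw [injective_iff_map_eq_zero]
    intro m hm
    obtain ⟨x, rfl⟩ := hp m
    rw [hθ] at hm
    have h1 := congrArg g hm
    rw [map_sub, hφ', hfg.apply_apply_eq_zero, sub_zero, map_zero] at h1
    exact hj (by rw [h1, map_zero])
  -- embed in a finite free module
  obtain ⟨s, hs⟩ := (Module.projective_def'.1 hP0)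
  have hsi : Function.Injective s :=
    Function.LeftInverse.injective (g := Finsupp.linearCombination Aᵐᵒᵖ id)
      (fun x => LinearMap.congr_fun hs x)
  classical
  let η : M →ₗ[Aᵐᵒᵖ] (P₀ →₀ Aᵐᵒᵖ) := s ∘ₗ θ
  have hη : Function.Injective η := hsi.comp hθi
  obtain ⟨G, hG⟩ := (Module.Finite.fg_top : (⊤ : Submodule Aᵐᵒᵖ M).FG)
  let T : Finset P₀ := G.biUnion fun x => (η x).support
  have hT : ∀ x, η x ∈ Finsupp.supported Aᵐᵒᵖ Aᵐᵒᵖ (T : Set P₀) := by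
    intro x
    have hx : x ∈ Submodule.span Aᵐᵒᵖ (G : Set M) := by rw [hG]; trivial
    have hle : Submodule.span Aᵐᵒᵖ (G : Set M) ≤
        (Finsupp.supported Aᵐᵒᵖ Aᵐᵒᵖ (T : Set P₀)).comap η := by
      rw [Submodule.span_le]
      intro y hy
      simp only [SetLike.mem_coe, Submodule.mem_comap, Finsupp.mem_supported]
      intro z hz
      exact Finset.mem_coe.2 (Finset.mem_biUnion.2 ⟨y, hy, hz⟩)
    exact hle hx
  let ρ : M →ₗ[Aᵐᵒᵖ] (T → Aᵐᵒᵖ) := LinearMap.pi fun i => Finsupp.lapply (i : P₀) ∘ₗ η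
  have hρ : Function.Injective ρ := by
    rw [injective_iff_map_eq_zero]
    intro m hm
    apply hη
    rw [map_zero]
    ext i : 1
    by_cases hi : i ∈ T
    · exact congrFun hm ⟨i, hi⟩
    · have := hT m
      rw [Finsupp.mem_supported] at this
      by_contra hne
      exact hi (Finset.mem_coe.1 (this (Finset.mem_coe.2 (Finsupp.mem_support_iff.2 hne))))
  have hfl : IsFiniteLength Aᵐᵒᵖ ((T → Aᵐᵒᵖ) ⧸ LinearMap.range ρ) :=
    isFiniteLength_iff_isNoetherian_isArtinian.2 ⟨inferInstance, inferInstance⟩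
  have hfinal := GR_syz hfl (T → Aᵐᵒᵖ) (LinearMap.range ρ).mkQ (Submodule.mkQ_surjective _)
  rw [Submodule.ker_mkQ] at hfinal
  exact GR_equiv (LinearEquiv.ofInjective ρ hρ) hfinal
end
end

section
/- Let A be a 2-Calabi-Yau tilted algebra, i.e., A = End_C(T) for a cluster-tilting object T in a 2-Calabi-Yau triangulated category C, and let e_i be the primitive idempotent corresponding to an indecomposable summand T_i of T. Then the quotient B = A/A e_i A is again a 2-Calabi-Yau tilted algebra; explicitly, B ≅ End_{C'}(T/T_i) where C' = T_i^⊥/(T_i) is the Iyama-Yoshino reduction of C at T_i. -/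
noncomputable section

open CategoryTheory Opposite DirectSum MulOpposite

/-- A witness that `B` is a 2-Calabi-Yau tilted algebra: a Hom-finite, idempotent
complete (hence Krull-Schmidt), `k`-linear triangulated 2-Calabi-Yau category `C`
together with a cluster-tilting object `T` such that `B ≅ End_C T`. -/
structure CYTiltedWitness (k : Type) [Field k] (B : Type) [Ring B] [Algebra k B] :
    Type 1 where
  C : Type
  [cat : Category.{0} C]
  [pre : Preadditive C]
  [lin : Linear k C]
  [shift : HasShift C ℤ]
  [zero : Limits.HasZeroObject C]
  [shiftAdd : ∀ n : ℤ, (shiftFunctor C n).Additive]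
  [tri : Pretriangulated C]
  [biprod : Limits.HasFiniteBiproducts C]
  [idem : IsIdempotentComplete C]
  homFinite : ∀ X Y : C, FiniteDimensional k (X ⟶ Y)
  /-- the 2-Calabi-Yau property: a Serre duality `D Hom(X,Y) ≅ Hom(Y, X⟦2⟧)` -/
  serre : ∀ X Y : C, Nonempty ((X ⟶ Y) ≃ₗ[k] Module.Dual k (Y ⟶ X⟦(2:ℤ)⟧))
  T : C
  /-- `T` is cluster-tilting: `add T = {X | Ext¹(T, X) = 0}` -/
  clusterTilting : ∀ X : C, (∀ f : T ⟶ X⟦(1:ℤ)⟧, f = 0) ↔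
    ∃ (n : ℕ) (s : X ⟶ ⨁ (fun _ : Fin n => T)) (r : (⨁ (fun _ : Fin n => T)) ⟶ X),
      s ≫ r = 𝟙 X
  algIso : Nonempty (B ≃ₐ[k] End T)

/-- `B` is a 2-Calabi-Yau tilted algebra. -/
def IsCYTilted (k : Type) [Field k] (B : Type) [Ring B] [Algebra k B] : Prop :=
  Nonempty (CYTiltedWitness k B)


namespace IYRed
open Limits Pretriangulated Preadditive

section Part1
variable {C : Type} [Category.{0} C] [Preadditive C]

/-- morphisms factoring through add Ti -/
def IsI (Ti : C) {A B : C} (f : A ⟶ B) : Prop :=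
  f ∈ AddSubgroup.closure {g : A ⟶ B | ∃ (u : A ⟶ Ti) (v : Ti ⟶ B), g = u ≫ v}

theorem IsI.ind {Ti A B : C} {p : (A ⟶ B) → Prop} (h0 : p 0)
    (ha : ∀ f g, p f → p g → p (f + g)) (hn : ∀ f, p f → p (-f))
    (hg : ∀ (u : A ⟶ Ti) (v : Ti ⟶ B), p (u ≫ v)) {f : A ⟶ B} (hf : IsI Ti f) : p f := by
  refine AddSubgroup.closure_induction (p := fun x _ => p x) ?_ h0
    (fun x y _ _ => ha x y) (fun x _ => hn x) hf
  rintro x ⟨u, v, rfl⟩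
  exact hg u v

variable {Ti : C}
theorem IsI.zero {A B : C} : IsI Ti (0 : A ⟶ B) := AddSubgroup.zero_mem _
theorem IsI.add {A B : C} {f g : A ⟶ B} (hf : IsI Ti f) (hg : IsI Ti g) : IsI Ti (f + g) :=
  AddSubgroup.add_mem _ hf hg
theorem IsI.neg {A B : C} {f : A ⟶ B} (hf : IsI Ti f) : IsI Ti (-f) :=
  AddSubgroup.neg_mem _ hf
theorem IsI.sub {A B : C} {f g : A ⟶ B} (hf : IsI Ti f) (hg : IsI Ti g) : IsI Ti (f - g) :=
  AddSubgroup.sub_mem _ hf hg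
theorem IsI.of {A B : C} (u : A ⟶ Ti) (v : Ti ⟶ B) : IsI Ti (u ≫ v) :=
  AddSubgroup.subset_closure ⟨u, v, rfl⟩
theorem IsI.compl {A B D : C} (h : D ⟶ A) {f : A ⟶ B} (hf : IsI Ti f) : IsI Ti (h ≫ f) := by
  refine IsI.ind (p := fun f => IsI Ti (h ≫ f)) ?_ ?_ ?_ ?_ hf
  · simpa using IsI.zero
  · intro f g hf hg; simpa using hf.add hg
  · intro f hf; simpa using hf.neg
  · intro u v; rw [← Category.assoc]; exact IsI.of _ _
theorem IsI.compr {A B D : C} {f : A ⟶ B} (hf : IsI Ti f) (h : B ⟶ D) : IsI Ti (f ≫ h) := by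
  refine IsI.ind (p := fun f => IsI Ti (f ≫ h)) ?_ ?_ ?_ ?_ hf
  · simpa using IsI.zero
  · intro f g hf hg; simpa using hf.add hg
  · intro f hf; simpa using hf.neg
  · intro u v; rw [Category.assoc]; exact IsI.of _ _
theorem IsI.smul {k : Type} [Field k] [Linear k C] {A B : C} (c : k) {f : A ⟶ B} (hf : IsI Ti f) :
    IsI Ti (c • f) := by
  have := hf.compr (c • 𝟙 B)
  simpa using this
theorem IsI.sum {A B : C} {ι : Type} (s : Finset ι) (f : ι → (A ⟶ B))
    (hf : ∀ i ∈ s, IsI Ti (f i)) : IsI Ti (∑ i ∈ s, f i) :=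
  AddSubgroup.sum_mem _ hf

theorem IsI.exists_sum {A B : C} {f : A ⟶ B} (hf : IsI Ti f) :
    ∃ (n : ℕ) (u : Fin n → (A ⟶ Ti)) (v : Fin n → (Ti ⟶ B)), f = ∑ i, u i ≫ v i := by
  refine IsI.ind (p := fun f => ∃ (n : ℕ) (u : Fin n → (A ⟶ Ti)) (v : Fin n → (Ti ⟶ B)),
    f = ∑ i, u i ≫ v i) ?_ ?_ ?_ ?_ hf
  · exact ⟨0, fun _ => 0, fun _ => 0, by simp⟩
  · rintro _ _ ⟨n, u, v, rfl⟩ ⟨m, u', v', rfl⟩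
    exact ⟨n + m, Fin.append u u', Fin.append v v', by simp [Fin.sum_univ_add]⟩
  · rintro _ ⟨n, u, v, rfl⟩
    exact ⟨n, fun i => - u i, v, by simp⟩
  · intro u v
    exact ⟨1, fun _ => u, fun _ => v, by simp⟩

theorem sum_iff_biprod [HasFiniteBiproducts C] (T : C) {A B : C} (f : A ⟶ B) (n : ℕ) :
    (∃ (u : Fin n → (A ⟶ T)) (v : Fin n → (T ⟶ B)), f = ∑ i, u i ≫ v i) ↔
    (∃ (u : A ⟶ ⨁ (fun _ : Fin n => T)) (v : (⨁ (fun _ : Fin n => T)) ⟶ B), u ≫ v = f) := by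
  constructor
  · rintro ⟨u, v, rfl⟩
    exact ⟨biproduct.lift u, biproduct.desc v, biproduct.lift_desc⟩
  · rintro ⟨u, v, rfl⟩
    refine ⟨fun i => u ≫ biproduct.π (fun _ : Fin n => T) i,
      fun i => biproduct.ι (fun _ : Fin n => T) i ≫ v, ?_⟩
    have : (∑ i : Fin n, biproduct.π (fun _ : Fin n => T) i ≫ biproduct.ι (fun _ : Fin n => T) i)
      = 𝟙 _ := biproduct.total
    calc u ≫ v = u ≫ (𝟙 _) ≫ v := by simp
      _ = _ := by rw [← this]; simp only [Preadditive.comp_sum, Preadditive.sum_comp, Category.assoc]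

theorem isI_iff_biprod [HasFiniteBiproducts C] {A B : C} (f : A ⟶ B) :
    IsI Ti f ↔ ∃ (n : ℕ) (u : A ⟶ ⨁ (fun _ : Fin n => Ti)) (v : (⨁ (fun _ : Fin n => Ti)) ⟶ B),
      u ≫ v = f := by
  constructor
  · intro h
    obtain ⟨n, u, v, h⟩ := h.exists_sum
    exact ⟨n, (sum_iff_biprod _ _ _).1 ⟨u, v, h⟩⟩
  · rintro ⟨n, h⟩
    obtain ⟨u, v, rfl⟩ := (sum_iff_biprod _ _ _).2 h
    exact IsI.sum _ _ fun i _ => IsI.of _ _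

theorem isI_id_biprod [HasFiniteBiproducts C] (n : ℕ) :
    IsI Ti (𝟙 (⨁ (fun _ : Fin n => Ti))) :=
  (isI_iff_biprod _).2 ⟨n, 𝟙 _, 𝟙 _, by simp⟩

/-- through an object of add Ti -/
theorem IsI.through {A B D : C} (hD : IsI Ti (𝟙 D)) (u : A ⟶ D) (v : D ⟶ B) : IsI Ti (u ≫ v) := by
  have := (hD.compl u).compr v
  simpa using this

theorem IsI.comp_eq_zero {A B E : C} {f : A ⟶ B} (hf : IsI Ti f) (g : B ⟶ E)
    (h : ∀ x : Ti ⟶ E, x = 0) : f ≫ g = 0 := by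
  refine IsI.ind (p := fun f => f ≫ g = 0) ?_ ?_ ?_ ?_ hf
  · simp
  · intro a b ha hb; simp [ha, hb]
  · intro a ha; simp [ha]
  · intro u v; rw [Category.assoc, h (v ≫ g), comp_zero]

theorem eq_zero_of_add {D E : C} (hD : IsI Ti (𝟙 D)) (h : ∀ x : Ti ⟶ E, x = 0) (f : D ⟶ E) :
    f = 0 := by
  simpa using hD.comp_eq_zero f h

variable [HasShift C ℤ] [∀ n : ℤ, (shiftFunctor C n).Additive]

theorem IsI.comp_shift_eq_zero {A B E : C} {f : A ⟶ B} (hf : IsI Ti f) (g : E ⟶ A⟦(1:ℤ)⟧)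
    (h : ∀ x : E ⟶ Ti⟦(1:ℤ)⟧, x = 0) : g ≫ f⟦(1:ℤ)⟧' = 0 := by
  refine IsI.ind (p := fun f => g ≫ f⟦(1:ℤ)⟧' = 0) ?_ ?_ ?_ ?_ hf
  · simp
  · intro a b ha hb; simp [ha, hb, Functor.map_add]
  · intro a ha; simp [ha, Functor.map_neg]
  · intro u v; rw [Functor.map_comp, ← Category.assoc, h (g ≫ _), zero_comp]

theorem eq_zero_of_add_shift {D E : C} (hD : IsI Ti (𝟙 D)) (h : ∀ x : E ⟶ Ti⟦(1:ℤ)⟧, x = 0)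
    (f : E ⟶ D⟦(1:ℤ)⟧) : f = 0 := by
  simpa using hD.comp_shift_eq_zero f h

variable [HasZeroObject C] [Pretriangulated C]

section
variable {A B E : C} {a : A ⟶ B} {b : B ⟶ E} {c : E ⟶ A⟦(1:ℤ)⟧}
theorem exC2 (h : Triangle.mk a b c ∈ distTriang C) {W : C} (f : W ⟶ B) (hf : f ≫ b = 0) :
    ∃ g : W ⟶ A, f = g ≫ a := Triangle.coyoneda_exact₂ _ h f hf
theorem exC3 (h : Triangle.mk a b c ∈ distTriang C) {W : C} (f : W ⟶ E) (hf : f ≫ c = 0) :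
    ∃ g : W ⟶ B, f = g ≫ b := Triangle.coyoneda_exact₃ _ h f hf
theorem exC1 (h : Triangle.mk a b c ∈ distTriang C) {W : C} (f : W ⟶ A⟦(1:ℤ)⟧)
    (hf : f ≫ a⟦(1:ℤ)⟧' = 0) :
    ∃ g : W ⟶ E, f = g ≫ c := Triangle.coyoneda_exact₁ _ h f hf
theorem exY3 (h : Triangle.mk a b c ∈ distTriang C) {W : C} (f : E ⟶ W) (hf : b ≫ f = 0) :
    ∃ g : A⟦(1:ℤ)⟧ ⟶ W, f = c ≫ g := Triangle.yoneda_exact₃ _ h f hf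
theorem exY1 (h : Triangle.mk a b c ∈ distTriang C) {W : C} (f : A⟦(1:ℤ)⟧ ⟶ W) (hf : c ≫ f = 0) :
    ∃ g : B⟦(1:ℤ)⟧ ⟶ W, f = (-a⟦(1:ℤ)⟧') ≫ g :=
  Triangle.yoneda_exact₃ _ (rot_of_distTriang _ h) f hf
theorem zero12 (h : Triangle.mk a b c ∈ distTriang C) : a ≫ b = 0 :=
  comp_distTriang_mor_zero₁₂ _ h
theorem zero23 (h : Triangle.mk a b c ∈ distTriang C) : b ≫ c = 0 :=
  comp_distTriang_mor_zero₂₃ _ h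
theorem zero31 (h : Triangle.mk a b c ∈ distTriang C) : c ≫ a⟦(1:ℤ)⟧' = 0 :=
  comp_distTriang_mor_zero₃₁ _ h
variable {A' B' E' : C} {a' : A' ⟶ B'} {b' : B' ⟶ E'} {c' : E' ⟶ A'⟦(1:ℤ)⟧}
theorem compl3 (h : Triangle.mk a b c ∈ distTriang C) (h' : Triangle.mk a' b' c' ∈ distTriang C)
    (x : A ⟶ A') (y : B ⟶ B') (hc : a ≫ y = x ≫ a') :
    ∃ z : E ⟶ E', b ≫ z = y ≫ b' ∧ c ≫ x⟦(1:ℤ)⟧' = z ≫ c' :=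
  complete_distinguished_triangle_morphism _ _ h h' x y hc
theorem compl2 (h : Triangle.mk a b c ∈ distTriang C) (h' : Triangle.mk a' b' c' ∈ distTriang C)
    (x : A ⟶ A') (z : E ⟶ E') (hc : c ≫ x⟦(1:ℤ)⟧' = z ≫ c') :
    ∃ y : B ⟶ B', a ≫ y = x ≫ a' ∧ b ≫ z = y ≫ b' :=
  complete_distinguished_triangle_morphism₂ _ _ h h' x z hc
theorem rot_mk (h : Triangle.mk a b c ∈ distTriang C) :
    Triangle.mk b c (-a⟦(1:ℤ)⟧') ∈ distTriang C := rot_of_distTriang _ h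
end

/-- yoneda in the form without inverse rotation -/
theorem yoneda₁ {A B E Y : C} {a : A ⟶ B} {b : B ⟶ E} {c : E ⟶ A⟦(1:ℤ)⟧}
    (h : Triangle.mk a b c ∈ distTriang C) (u : A ⟶ Y) (hu : c ≫ u⟦(1:ℤ)⟧' = 0) :
    ∃ s : B ⟶ Y, u = a ≫ s := by
  obtain ⟨t, ht⟩ := exY1 h (u⟦(1:ℤ)⟧') hu
  obtain ⟨s, rfl⟩ := (shiftFunctor C (1:ℤ)).map_surjective t
  refine ⟨-s, (shiftFunctor C (1:ℤ)).map_injective ?_⟩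
  rw [ht]
  simp

/-- factoring ideal maps -/
theorem IsI.factor_left {A B E Y : C} {a : A ⟶ B} {b : B ⟶ E} {c : E ⟶ A⟦(1:ℤ)⟧}
    (h : Triangle.mk a b c ∈ distTriang C) (hE : ∀ x : E ⟶ Ti⟦(1:ℤ)⟧, x = 0)
    {u : A ⟶ Y} (hu : IsI Ti u) : ∃ s : B ⟶ Y, IsI Ti s ∧ u = a ≫ s := by
  refine IsI.ind (p := fun u => ∃ s : B ⟶ Y, IsI Ti s ∧ u = a ≫ s) ?_ ?_ ?_ ?_ hu
  · exact ⟨0, IsI.zero, by simp⟩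
  · rintro _ _ ⟨s, hs, rfl⟩ ⟨t, ht, rfl⟩
    exact ⟨s + t, hs.add ht, by simp⟩
  · rintro _ ⟨s, hs, rfl⟩
    exact ⟨-s, hs.neg, by simp⟩
  · intro x y
    obtain ⟨s, rfl⟩ := yoneda₁ h x (hE _)
    exact ⟨s ≫ y, IsI.of _ _, by simp⟩

theorem IsI.factor_right {A B E W : C} {a : A ⟶ B} {b : B ⟶ E} {c : E ⟶ A⟦(1:ℤ)⟧}
    (h : Triangle.mk a b c ∈ distTriang C) (hA : ∀ x : Ti ⟶ A⟦(1:ℤ)⟧, x = 0)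
    {u : W ⟶ E} (hu : IsI Ti u) : ∃ s : W ⟶ B, IsI Ti s ∧ u = s ≫ b := by
  refine IsI.ind (p := fun u => ∃ s : W ⟶ B, IsI Ti s ∧ u = s ≫ b) ?_ ?_ ?_ ?_ hu
  · exact ⟨0, IsI.zero, by simp⟩
  · rintro _ _ ⟨s, hs, rfl⟩ ⟨t, ht, rfl⟩
    exact ⟨s + t, hs.add ht, by simp⟩
  · rintro _ ⟨s, hs, rfl⟩
    exact ⟨-s, hs.neg, by simp⟩
  · intro x y
    obtain ⟨s, hs⟩ := exC3 h y (hA _)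
    subst hs
    exact ⟨x ≫ s, IsI.of _ _, by simp⟩

/-- `γ` is the connecting map of a syzygy triangle -/
def IsSyz (Ti : C) {A B : C} (γ : B ⟶ A⟦(1:ℤ)⟧) : Prop :=
  ∃ (D : C) (α : A ⟶ D) (β : D ⟶ B), IsI Ti (𝟙 D) ∧ Triangle.mk α β γ ∈ distTriang C

section
variable {A B : C} {γ : B ⟶ A⟦(1:ℤ)⟧} (hγ : IsSyz Ti γ)
include hγ

theorem IsSyz.mem_of {W : C} (v : W ⟶ B) (hv : v ≫ γ = 0) : IsI Ti v := by
  obtain ⟨D, α, β, hD, h⟩ := hγ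
  obtain ⟨s, hs⟩ := exC3 h v hv
  rw [hs]; exact IsI.through hD _ _

theorem IsSyz.exists_v {W : C} (hW : ∀ x : W ⟶ Ti⟦(1:ℤ)⟧, x = 0) (c : W ⟶ A⟦(1:ℤ)⟧) :
    ∃ v : W ⟶ B, v ≫ γ = c := by
  obtain ⟨D, α, β, hD, h⟩ := hγ
  obtain ⟨s, hs⟩ := exC1 h c (eq_zero_of_add_shift hD hW _)
  exact ⟨s, hs.symm⟩

theorem IsSyz.mem_of' {Y : C} (u : A ⟶ Y) (hv : γ ≫ u⟦(1:ℤ)⟧' = 0) : IsI Ti u := by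
  obtain ⟨D, α, β, hD, h⟩ := hγ
  obtain ⟨s, rfl⟩ := yoneda₁ h u hv
  exact IsI.through hD _ _

theorem IsSyz.exists_u {Y : C} (hY : ∀ x : Ti ⟶ Y⟦(1:ℤ)⟧, x = 0) (c : B ⟶ Y⟦(1:ℤ)⟧) :
    ∃ u : A ⟶ Y, γ ≫ u⟦(1:ℤ)⟧' = c := by
  obtain ⟨D, α, β, hD, h⟩ := hγ
  obtain ⟨s, hs⟩ := exY3 h c (eq_zero_of_add hD hY _)
  obtain ⟨u, rfl⟩ := (shiftFunctor C (1:ℤ)).map_surjective s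
  exact ⟨u, hs.symm⟩
end

end Part1
end IYRed
namespace IYRed
open Limits Pretriangulated Preadditive

/-- extending along the integers -/
theorem int_chain (P : ℤ → Type) (r : ∀ n, P n → P (n + 1) → Prop)
    (up : ∀ n x, ∃ y, r n x y) (down : ∀ n y, ∃ x, r n x y) (x₀ : P 0) :
    ∃ f : ∀ n, P n, f 0 = x₀ ∧ ∀ n, r n (f n) (f (n + 1)) := by
  choose u hu using up
  choose d hd using down
  let pos : ∀ n : ℕ, P (n : ℤ) := fun n => Nat.rec x₀ (fun m p => u (m : ℤ) p) n
  have e1 : ∀ m : ℕ, Int.negSucc (m + 1) + 1 = Int.negSucc m := fun m => by omega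
  let neg : ∀ n : ℕ, P (Int.negSucc n) := fun n =>
    Nat.rec (d (Int.negSucc 0) x₀) (fun m p => d (Int.negSucc (m + 1)) (cast (congrArg P (e1 m).symm) p)) n
  let f : ∀ n, P n := fun n => Int.casesOn n pos neg
  refine ⟨f, rfl, ?_⟩
  have key : ∀ (a b : ℤ) (h : a = b) (x : P a), r = r := fun _ _ _ _ => rfl
  rintro (n | n)
  · exact hu (n : ℤ) (pos n)
  · rcases n with _ | n
    · exact hd (Int.negSucc 0) x₀
    · have h := hd (Int.negSucc (n + 1)) (cast (congrArg P (e1 n).symm) (neg n))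
      have h2 : cast (congrArg P (e1 n).symm) (neg n) = f (Int.negSucc (n + 1) + 1) := by
        have : ∀ (b : ℤ) (h : Int.negSucc n = b), cast (congrArg P h) (f (Int.negSucc n)) = f b := by
          rintro _ rfl; rfl
        exact this _ (e1 n).symm
      rw [h2] at h
      exact h

section Part2
variable {C : Type} [Category.{0} C] [Preadditive C]
  [HasShift C ℤ] [∀ n : ℤ, (shiftFunctor C n).Additive]
  [HasZeroObject C] [Pretriangulated C]
  {Q : Type} [Category.{0} Q] [Preadditive Q]

/-- The standing hypotheses on the object `Ti` and the quotient functor `F`. -/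
class Setup (Ti : C) (F : C ⥤ Q) : Prop where
  full : F.Full
  additive : F.Additive
  ker : ∀ {A B : C} (u : A ⟶ B), F.map u = 0 ↔ IsI Ti u
  symm : ∀ A : C, (∀ f : Ti ⟶ A⟦(1:ℤ)⟧, f = 0) ↔ (∀ f : A ⟶ Ti⟦(1:ℤ)⟧, f = 0)
  rigid : ∀ f : Ti ⟶ Ti⟦(1:ℤ)⟧, f = 0
  approxL : ∀ A : C, ∃ (D : C) (α : A ⟶ D), IsI Ti (𝟙 D) ∧ ∀ s : A ⟶ Ti, ∃ t, s = α ≫ t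
  approxR : ∀ A : C, ∃ (D : C) (β : D ⟶ A), IsI Ti (𝟙 D) ∧ ∀ s : Ti ⟶ A, ∃ t, s = t ≫ β

attribute [instance] Setup.full Setup.additive

/-- A complete resolution -/
structure Res (Ti : C) (F : C ⥤ Q) where
  X : ℤ → C
  perp : ∀ n, ∀ f : Ti ⟶ (X n)⟦(1:ℤ)⟧, f = 0
  γ : ∀ n n' : ℤ, n + 1 = n' → (X n' ⟶ (X n)⟦(1:ℤ)⟧)
  syz : ∀ n n' h, IsSyz Ti (γ n n' h)

variable {Ti : C} {F : C ⥤ Q}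

section
variable (F) [hS : Setup Ti F]
include hS
theorem map_eq {A B : C} {u v : A ⟶ B} : F.map u = F.map v ↔ IsI Ti (u - v) := by
  rw [← Setup.ker (F := F), F.map_sub, sub_eq_zero]

theorem exists_up (A : C) (hA : ∀ f : Ti ⟶ A⟦(1:ℤ)⟧, f = 0) :
    ∃ (B : C) (γ : B ⟶ A⟦(1:ℤ)⟧), (∀ f : Ti ⟶ B⟦(1:ℤ)⟧, f = 0) ∧ IsSyz Ti γ := by
  obtain ⟨D, α, hD, hα⟩ := Setup.approxL F (Ti := Ti) A
  obtain ⟨B, β, γ, h⟩ := distinguished_cocone_triangle α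
  refine ⟨B, γ, (Setup.symm F B).2 ?_, D, α, β, hD, h⟩
  intro f
  obtain ⟨g, rfl⟩ := exY3 h f (eq_zero_of_add hD (Setup.rigid F) _)
  obtain ⟨g', rfl⟩ := (shiftFunctor C (1:ℤ)).map_surjective g
  obtain ⟨t, rfl⟩ := hα g'
  rw [Functor.map_comp, ← Category.assoc, zero31 h, zero_comp]

theorem exists_down (B : C) (hB : ∀ f : Ti ⟶ B⟦(1:ℤ)⟧, f = 0) :
    ∃ (A : C) (γ : B ⟶ A⟦(1:ℤ)⟧), (∀ f : Ti ⟶ A⟦(1:ℤ)⟧, f = 0) ∧ IsSyz Ti γ := by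
  obtain ⟨D, β, hD, hβ⟩ := Setup.approxR F (Ti := Ti) B
  obtain ⟨A, α, γ, h⟩ := distinguished_cocone_triangle₁ β
  refine ⟨A, γ, ?_, D, α, β, hD, h⟩
  intro f
  obtain ⟨g, rfl⟩ := exC1 h f (eq_zero_of_add_shift hD (Setup.rigid F) _)
  obtain ⟨t, rfl⟩ := hβ g
  rw [Category.assoc, zero23 h, comp_zero]

theorem exists_res (A : C) (hA : ∀ f : Ti ⟶ A⟦(1:ℤ)⟧, f = 0) :
    ∃ R : Res Ti F, R.X 0 = A := by
  obtain ⟨f, h0, hf⟩ := int_chain (fun _ => {A : C // ∀ f : Ti ⟶ A⟦(1:ℤ)⟧, f = 0})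
    (fun _ A B => ∃ γ : B.1 ⟶ A.1⟦(1:ℤ)⟧, IsSyz Ti γ)
    (fun _ A => by
      obtain ⟨B, γ, h, h'⟩ := exists_up F A.1 A.2
      exact ⟨⟨B, h⟩, γ, h'⟩)
    (fun _ A => by
      obtain ⟨B, γ, h, h'⟩ := exists_down F A.1 A.2
      exact ⟨⟨B, h⟩, γ, h'⟩) ⟨A, hA⟩
  have hf' : ∀ n n', n + 1 = n' → ∃ γ : (f n').1 ⟶ (f n).1⟦(1:ℤ)⟧, IsSyz Ti γ := by
    rintro n _ rfl; exact hf n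
  exact ⟨⟨fun n => (f n).1, fun n => (f n).2, fun n n' h => (hf' n n' h).choose,
    fun n n' h => (hf' n n' h).choose_spec⟩, by simp [h0]⟩
end

namespace Res

theorem perp' [hS : Setup Ti F] (X : Res Ti F) (n : ℤ) : ∀ f : X.X n ⟶ Ti⟦(1:ℤ)⟧, f = 0 :=
  (Setup.symm F _).1 (X.perp n)

/-- compatibility -/
def Compat (X Y : Res Ti F) (n n' : ℤ) (h : n + 1 = n') (f : F.obj (X.X n) ⟶ F.obj (Y.X n))
    (g : F.obj (X.X n') ⟶ F.obj (Y.X n')) : Prop :=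
  ∃ (u : X.X n ⟶ Y.X n) (v : X.X n' ⟶ Y.X n'), F.map u = f ∧ F.map v = g ∧
    v ≫ Y.γ n n' h = X.γ n n' h ≫ u⟦(1:ℤ)⟧'

theorem Compat.all [Setup Ti F] {X Y : Res Ti F} {n n' : ℤ} {h : n + 1 = n'}
    {f : F.obj (X.X n) ⟶ F.obj (Y.X n)}
    {g : F.obj (X.X n') ⟶ F.obj (Y.X n')} (H : Compat X Y n n' h f g)
    (u : X.X n ⟶ Y.X n) (v : X.X n' ⟶ Y.X n') (hu : F.map u = f) (hv : F.map v = g) :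
    v ≫ Y.γ n n' h = X.γ n n' h ≫ u⟦(1:ℤ)⟧' := by
  obtain ⟨u', v', rfl, rfl, H⟩ := H
  have h1 := ((map_eq F).1 hv).comp_eq_zero (Y.γ n n' h) (Y.perp n)
  have h2 := ((map_eq F).1 hu).comp_shift_eq_zero (X.γ n n' h) (X.perp' n')
  rw [Preadditive.sub_comp, sub_eq_zero] at h1
  rw [Functor.map_sub, Preadditive.comp_sub, sub_eq_zero] at h2
  rw [h1, h2, H]

theorem Compat.comp [Setup Ti F] {X Y Z : Res Ti F} {n n' : ℤ} {h : n + 1 = n'}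
    {f : F.obj (X.X n) ⟶ F.obj (Y.X n)}
    {g : F.obj (X.X n') ⟶ F.obj (Y.X n')} (H : Compat X Y n n' h f g)
    {f' : F.obj (Y.X n) ⟶ F.obj (Z.X n)}
    {g' : F.obj (Y.X n') ⟶ F.obj (Z.X n')} (H' : Compat Y Z n n' h f' g') :
    Compat X Z n n' h (f ≫ f') (g ≫ g') := by
  obtain ⟨u, v, rfl, rfl, H⟩ := H
  obtain ⟨u', v', rfl, rfl, H'⟩ := H'
  refine ⟨u ≫ u', v ≫ v', by simp, by simp, ?_⟩
  rw [Category.assoc, H', ← Category.assoc, H, Functor.map_comp, Category.assoc]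

theorem Compat.add [Setup Ti F] {X Y : Res Ti F} {n n' : ℤ} {h : n + 1 = n'}
    {f : F.obj (X.X n) ⟶ F.obj (Y.X n)}
    {g : F.obj (X.X n') ⟶ F.obj (Y.X n')} (H : Compat X Y n n' h f g)
    {f' : F.obj (X.X n) ⟶ F.obj (Y.X n)}
    {g' : F.obj (X.X n') ⟶ F.obj (Y.X n')} (H' : Compat X Y n n' h f' g') :
    Compat X Y n n' h (f + f') (g + g') := by
  obtain ⟨u, v, rfl, rfl, H⟩ := H
  obtain ⟨u', v', rfl, rfl, H'⟩ := H'
  refine ⟨u + u', v + v', by simp, by simp, ?_⟩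
  rw [Preadditive.add_comp, H', H, Functor.map_add, Preadditive.comp_add]

theorem Compat.neg [Setup Ti F] {X Y : Res Ti F} {n n' : ℤ} {h : n + 1 = n'}
    {f : F.obj (X.X n) ⟶ F.obj (Y.X n)}
    {g : F.obj (X.X n') ⟶ F.obj (Y.X n')} (H : Compat X Y n n' h f g) :
    Compat X Y n n' h (-f) (-g) := by
  obtain ⟨u, v, rfl, rfl, H⟩ := H
  refine ⟨-u, -v, by simp, by simp, ?_⟩
  rw [Preadditive.neg_comp, H, Functor.map_neg, Preadditive.comp_neg]

theorem Compat.zero [Setup Ti F] {X Y : Res Ti F} {n n' : ℤ} {h : n + 1 = n'} :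
    Compat X Y n n' h 0 0 := ⟨0, 0, by simp, by simp, by simp⟩

theorem Compat.unique_up [Setup Ti F] {X Y : Res Ti F} {n n' : ℤ} {h : n + 1 = n'}
    {f : F.obj (X.X n) ⟶ F.obj (Y.X n)}
    {g g' : F.obj (X.X n') ⟶ F.obj (Y.X n')} (H : Compat X Y n n' h f g)
    (H' : Compat X Y n n' h f g') : g = g' := by
  have := H.add H'.neg
  rw [add_neg_cancel] at this
  obtain ⟨v, hv⟩ := F.map_surjective (g + -g')
  have h2 := this.all 0 v (by simp) hv
  rw [Functor.map_zero, comp_zero] at h2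
  have h3 := (Y.syz n n' h).mem_of v h2
  rw [← Setup.ker (F := F), hv] at h3
  exact add_neg_eq_zero.1 h3

theorem Compat.unique_down [Setup Ti F] {X Y : Res Ti F} {n n' : ℤ} {h : n + 1 = n'}
    {f f' : F.obj (X.X n) ⟶ F.obj (Y.X n)}
    {g : F.obj (X.X n') ⟶ F.obj (Y.X n')} (H : Compat X Y n n' h f g)
    (H' : Compat X Y n n' h f' g) : f = f' := by
  have := H.add H'.neg
  rw [add_neg_cancel] at this
  obtain ⟨v, hv⟩ := F.map_surjective (f + -f')
  have h2 := this.all v 0 hv (by simp)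
  rw [zero_comp] at h2
  have h3 := (X.syz n n' h).mem_of' v h2.symm
  rw [← Setup.ker (F := F), hv] at h3
  exact add_neg_eq_zero.1 h3

/-- morphisms of resolutions -/
@[ext] structure Hom (X Y : Res Ti F) where
  f : ∀ n, F.obj (X.X n) ⟶ F.obj (Y.X n)
  comm : ∀ n n' h, Compat X Y n n' h (f n) (f n')

instance [Setup Ti F] : Category.{0} (Res Ti F) where
  Hom := Hom
  id X := ⟨fun n => 𝟙 _, fun n n' h => ⟨𝟙 _, 𝟙 _, by simp, by simp, by simp⟩⟩
  comp f g := ⟨fun n => f.f n ≫ g.f n, fun n n' h => (f.comm n n' h).comp (g.comm n n' h)⟩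
  id_comp f := Hom.ext (funext fun n => Category.id_comp _)
  comp_id f := Hom.ext (funext fun n => Category.comp_id _)
  assoc f g h := Hom.ext (funext fun n => Category.assoc _ _ _)

/-- component -/
def ev [Setup Ti F] {X Y : Res Ti F} (f : X ⟶ Y) (n : ℤ) : F.obj (X.X n) ⟶ F.obj (Y.X n) :=
  Hom.f f n

section
variable [Setup Ti F]
theorem ev_comm {X Y : Res Ti F} (f : X ⟶ Y) (n n' h) : Compat X Y n n' h (ev f n) (ev f n') :=
  Hom.comm f n n' h
@[simp] theorem ev_id (X : Res Ti F) (n) : ev (𝟙 X) n = 𝟙 _ := rfl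
@[simp] theorem ev_comp {X Y Z : Res Ti F} (f : X ⟶ Y) (g : Y ⟶ Z) (n) :
    ev (f ≫ g) n = ev f n ≫ ev g n := rfl
theorem ev_ext {X Y : Res Ti F} {f g : X ⟶ Y} (h : ∀ n, ev f n = ev g n) : f = g :=
  Hom.ext (funext h)

theorem ev_ext0 {X Y : Res Ti F} {f g : X ⟶ Y} (h : ev f 0 = ev g 0) : f = g := by
  refine ev_ext fun n => ?_
  induction n using Int.induction_on with
  | zero => exact h
  | succ n ih =>
    have h1 := ev_comm f n (n + 1) rfl
    have h2 := ev_comm g n (n + 1) rfl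
    rw [ih] at h1
    exact h1.unique_up h2
  | pred n ih =>
    have h1 := ev_comm f (-n - 1) (-n) (by omega)
    have h2 := ev_comm g (-n - 1) (-n) (by omega)
    rw [ih] at h1
    exact h1.unique_down h2

theorem exists_mk {X Y : Res Ti F} (a : X.X 0 ⟶ Y.X 0) : ∃ f : X ⟶ Y, ev f 0 = F.map a := by
  obtain ⟨f, h0, hf⟩ := int_chain (fun n => (X.X n ⟶ Y.X n))
    (fun n u v => v ≫ Y.γ n (n + 1) rfl = X.γ n (n + 1) rfl ≫ u⟦(1:ℤ)⟧')
    (fun n u => (Y.syz n (n + 1) rfl).exists_v (X.perp' _) _)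
    (fun n v => by
      obtain ⟨u, hu⟩ := (X.syz n (n + 1) rfl).exists_u (Y.perp n) (v ≫ Y.γ n (n + 1) rfl)
      exact ⟨u, hu.symm⟩) a
  exact ⟨⟨fun n => F.map (f n), by rintro n _ rfl; exact ⟨f n, f (n + 1), rfl, rfl, hf n⟩⟩,
    by rw [← h0]; rfl⟩

/-- the morphism with given lift at level 0 -/
def hmk {X Y : Res Ti F} (a : X.X 0 ⟶ Y.X 0) : X ⟶ Y := (exists_mk a).choose
@[simp] theorem ev_hmk {X Y : Res Ti F} (a : X.X 0 ⟶ Y.X 0) : ev (hmk a) 0 = F.map a :=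
  (exists_mk a).choose_spec

theorem hmk_surj {X Y : Res Ti F} (f : X ⟶ Y) : ∃ a : X.X 0 ⟶ Y.X 0, hmk a = f := by
  obtain ⟨a, ha⟩ := F.map_surjective (ev f 0)
  exact ⟨a, ev_ext0 (by rw [ev_hmk, ha])⟩
theorem hmk_comp {X Y Z : Res Ti F} (a : X.X 0 ⟶ Y.X 0) (b : Y.X 0 ⟶ Z.X 0) :
    hmk (X := X) (Y := Z) (a ≫ b) = hmk (X := X) (Y := Y) a ≫ hmk b := ev_ext0 (by simp)
theorem hmk_id (X : Res Ti F) : hmk (𝟙 (X.X 0)) = 𝟙 X := ev_ext0 (by simp)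

instance (X Y : Res Ti F) : Zero (X ⟶ Y) := ⟨⟨fun _ => 0, fun _ _ _ => Compat.zero⟩⟩
instance (X Y : Res Ti F) : Add (X ⟶ Y) :=
  ⟨fun f g => ⟨fun n => ev f n + ev g n, fun _ _ _ => (ev_comm f _ _ _).add (ev_comm g _ _ _)⟩⟩
instance (X Y : Res Ti F) : Neg (X ⟶ Y) :=
  ⟨fun f => ⟨fun n => - ev f n, fun _ _ _ => (ev_comm f _ _ _).neg⟩⟩
@[simp] theorem ev_zero (X Y : Res Ti F) (n) : ev (0 : X ⟶ Y) n = 0 := rfl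
@[simp] theorem ev_add {X Y : Res Ti F} (f g : X ⟶ Y) (n) : ev (f + g) n = ev f n + ev g n := rfl
@[simp] theorem ev_neg {X Y : Res Ti F} (f : X ⟶ Y) (n) : ev (-f) n = - ev f n := rfl

instance : Preadditive (Res Ti F) where
  homGroup X Y :=
    { add_assoc := fun f g h => ev_ext fun n => by simp [add_assoc]
      zero_add := fun f => ev_ext fun n => by simp
      add_zero := fun f => ev_ext fun n => by simp
      add_comm := fun f g => ev_ext fun n => by simp [add_comm]
      neg_add_cancel := fun f => ev_ext fun n => by simp
      nsmul := nsmulRec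
      zsmul := zsmulRec }
  add_comp := fun X Y Z f g h => ev_ext fun n => by
    simp
  comp_add := fun X Y Z f g h => ev_ext fun n => by
    simp

/-- evaluation, additive -/
def evHom (X Y : Res Ti F) (n : ℤ) : (X ⟶ Y) →+ (F.obj (X.X n) ⟶ F.obj (Y.X n)) where
  toFun f := ev f n
  map_zero' := rfl
  map_add' _ _ := rfl

theorem ev_sub {X Y : Res Ti F} (f g : X ⟶ Y) (n) : ev (f - g) n = ev f n - ev g n :=
  (evHom X Y n).map_sub f g
theorem ev_sum {X Y : Res Ti F} {ι : Type} (s : Finset ι) (f : ι → (X ⟶ Y)) (n) :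
    ev (∑ i ∈ s, f i) n = ∑ i ∈ s, ev (f i) n :=
  map_sum (evHom X Y n) f s

theorem hmk_add {X Y : Res Ti F} (a b : X.X 0 ⟶ Y.X 0) :
    hmk (X := X) (Y := Y) (a + b) = hmk a + hmk b := ev_ext0 (by simp)
theorem hmk_neg {X Y : Res Ti F} (a : X.X 0 ⟶ Y.X 0) :
    hmk (X := X) (Y := Y) (-a) = - hmk a := ev_ext0 (by simp)
theorem hmk_sub {X Y : Res Ti F} (a b : X.X 0 ⟶ Y.X 0) :
    hmk (X := X) (Y := Y) (a - b) = hmk a - hmk b := ev_ext0 (by simp [ev_sub])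
theorem hmk_sum {X Y : Res Ti F} {ι : Type} (s : Finset ι) (a : ι → (X.X 0 ⟶ Y.X 0)) :
    hmk (X := X) (Y := Y) (∑ i ∈ s, a i) = ∑ i ∈ s, hmk (a i) := ev_ext0 (by simp [ev_sum])
theorem hmk_eq_zero {X Y : Res Ti F} {a : X.X 0 ⟶ Y.X 0} :
    hmk (X := X) (Y := Y) a = 0 ↔ IsI Ti a := by
  rw [← Setup.ker (F := F)]
  constructor
  · intro h
    rw [← ev_hmk (X := X) (Y := Y) a, h, ev_zero]
  · intro h
    exact ev_ext0 (by simp [h])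
theorem hmk_eq {X Y : Res Ti F} {a b : X.X 0 ⟶ Y.X 0} :
    hmk (X := X) (Y := Y) a = hmk b ↔ IsI Ti (a - b) := by
  rw [← hmk_eq_zero (X := X) (Y := Y), hmk_sub, sub_eq_zero]

/-! shift -/

/-- shift of objects -/
def sobj (a : ℤ) (X : Res Ti F) : Res Ti F where
  X n := X.X (n + a)
  perp n := X.perp (n + a)
  γ n n' h := X.γ (n + a) (n' + a) (by omega)
  syz n n' h := X.syz _ _ _

/-- shift functor -/
def S (a : ℤ) : Res Ti F ⥤ Res Ti F where
  obj X := sobj a X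
  map f := ⟨fun n => ev f (n + a), fun n n' h => ev_comm f (n + a) (n' + a) (by omega)⟩

theorem S_ev (a : ℤ) {X Y : Res Ti F} (f : X ⟶ Y) (n) :
  ev ((S a).map f) n = ev f (n + a) := rfl

end
end Res
end Part2
end IYRed
namespace IYRed
open Limits Pretriangulated Preadditive ZeroObject
section Part3
variable {C : Type} [Category.{0} C] [Preadditive C]
  [HasShift C ℤ] [∀ n : ℤ, (shiftFunctor C n).Additive]
  [HasZeroObject C] [Pretriangulated C]
  {Q : Type} [Category.{0} Q] [Preadditive Q]
  {Ti : C} {F : C ⥤ Q} [Setup Ti F]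
namespace Res

theorem γ_eq (X : Res Ti F) {n n' m m' : ℤ} (h : n + 1 = n') (h' : m + 1 = m') (e : n = m) (e' : n' = m') :
    eqToHom (congrArg X.X e') ≫ X.γ m m' h' =
      X.γ n n' h ≫ (eqToHom (congrArg X.X e))⟦(1:ℤ)⟧' := by
  subst e e'; simp

/-- transport -/
def tr (X : Res Ti F) {n m : ℤ} (e : n = m) : F.obj (X.X n) ⟶ F.obj (X.X m) :=
  F.map (eqToHom (congrArg X.X e))
theorem tr_rfl (X : Res Ti F) {n : ℤ} (e : n = n) : tr X e = 𝟙 _ := by simp [tr]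
theorem tr_trans (X : Res Ti F) {n m l : ℤ} (e : n = m) (e' : m = l) :
    tr X e ≫ tr X e' = tr X (e.trans e') := by subst e e'; simp [tr]
theorem tr_nat {X Y : Res Ti F} (f : X ⟶ Y) {n m : ℤ} (e : n = m) :
    ev f n ≫ tr Y e = tr X e ≫ ev f m := by subst e; simp [tr]

/-- zero iso -/
def sZ : (S 0 : Res Ti F ⥤ Res Ti F) ≅ 𝟭 _ :=
  NatIso.ofComponents (fun X =>
    { hom := ⟨fun n => tr X (add_zero n), fun n n' h => ⟨_, _, rfl, rfl, γ_eq _ _ _ (by omega) (by omega)⟩⟩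
      inv := ⟨fun n => tr X (add_zero n).symm, fun n n' h => ⟨_, _, rfl, rfl, γ_eq _ _ _ (by omega) (by omega)⟩⟩
      hom_inv_id := ev_ext fun n => (tr_trans X (by omega) (by omega)).trans (tr_rfl X rfl)
      inv_hom_id := ev_ext fun n => (tr_trans X (by omega) (by omega)).trans (tr_rfl X rfl) })
    (fun f => ev_ext fun n => tr_nat f (by omega))

/-- add iso -/
def sA (a b : ℤ) : (S (a + b) : Res Ti F ⥤ Res Ti F) ≅ S a ⋙ S b :=
  NatIso.ofComponents (fun X =>
    { hom := ⟨fun n => tr X (by omega : n + (a + b) = n + b + a),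
        fun n n' h => ⟨_, _, rfl, rfl, γ_eq _ _ _ (by omega) (by omega)⟩⟩
      inv := ⟨fun n => tr X (by omega : n + b + a = n + (a + b)),
        fun n n' h => ⟨_, _, rfl, rfl, γ_eq _ _ _ (by omega) (by omega)⟩⟩
      hom_inv_id := ev_ext fun n => (tr_trans X (by omega) (by omega)).trans (tr_rfl X rfl)
      inv_hom_id := ev_ext fun n => (tr_trans X (by omega) (by omega)).trans (tr_rfl X rfl) })
    (fun f => ev_ext fun n => tr_nat f (by omega))

theorem ev_eqToHom (X : Res Ti F) {a b : ℤ} (h : a = b)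
    (e : (S a : Res Ti F ⥤ Res Ti F).obj X = (S b).obj X) (n : ℤ) :
    ev (eqToHom e) n = tr X (by rw [h] : n + a = n + b) := by
  subst h
  exact (tr_rfl X rfl).symm

instance : HasShift (Res Ti F) ℤ := hasShiftMk _ _
  { F := S
    zero := sZ
    add := sA
    assoc_hom_app := fun a b c X => ev_ext fun n => by
      refine (tr_trans X (by omega : n + (a + b + c) = n + c + (a + b))
        (by omega : n + c + (a + b) = n + c + b + a)).trans ?_
      refine Eq.trans ?_ (congrArg₂ (· ≫ ·) (ev_eqToHom X (add_assoc a b c) _ n).symm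
        (tr_trans X (by omega : n + (a + (b + c)) = n + (b + c) + a)
        (by omega : n + (b + c) + a = n + c + b + a)).symm)
      exact (tr_trans X _ _).symm
    zero_add_hom_app := fun a X => ev_ext fun n => by
      refine Eq.trans ?_ (congrArg₂ (· ≫ ·) (ev_eqToHom X (zero_add a) _ n).symm
        (rfl : tr X (by omega : n + a = n + a + 0) = _))
      exact (tr_trans X _ _).symm
    add_zero_hom_app := fun a X => ev_ext fun n => by
      refine Eq.trans ?_ (congrArg₂ (· ≫ ·) (ev_eqToHom X (add_zero a) _ n).symm
        (rfl : tr X (by omega : n + a = n + 0 + a) = _))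
      exact (tr_trans X _ _).symm }

theorem ev_shift (a : ℤ) {X Y : Res Ti F} (f : X ⟶ Y) (n : ℤ) :
    ev (f⟦a⟧') n = ev f (n + a) := rfl

instance (a : ℤ) : (shiftFunctor (Res Ti F) a).Additive where
  map_add := ev_ext fun n => rfl

/-- X shifted by one -/
theorem shift_X (a : ℤ) (X : Res Ti F) (n : ℤ) : (X⟦a⟧).X n = X.X (n + a) := rfl

/-- typed version of hmk into a shift -/
def hms {X Y : Res Ti F} (d : X.X 0 ⟶ Y.X (0 + 1)) : X ⟶ Y⟦(1:ℤ)⟧ :=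
  hmk (X := X) (Y := Y⟦(1:ℤ)⟧) d
/-- typed version of hmk between shifts -/
def hmss {X Y : Res Ti F} (d : X.X (0 + 1) ⟶ Y.X (0 + 1)) : X⟦(1:ℤ)⟧ ⟶ Y⟦(1:ℤ)⟧ :=
  hmk (X := X⟦(1:ℤ)⟧) (Y := Y⟦(1:ℤ)⟧) d

theorem shift_hmk {X Y : Res Ti F} (a : X.X 0 ⟶ Y.X 0) (l : X.X (0 + 1) ⟶ Y.X (0 + 1))
    (h : l ≫ Y.γ 0 (0 + 1) rfl = X.γ 0 (0 + 1) rfl ≫ a⟦(1:ℤ)⟧') :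
    (hmk (X := X) (Y := Y) a)⟦(1:ℤ)⟧' = hmss l := by
  refine ev_ext0 ?_
  refine (ev_shift _ _ _).trans (Eq.trans ?_ (ev_hmk (X := X⟦(1:ℤ)⟧) (Y := Y⟦(1:ℤ)⟧) l).symm)
  have h1 := ev_comm (hmk (X := X) (Y := Y) a) 0 (0 + 1) rfl
  have h2 : Compat X Y 0 (0 + 1) rfl (ev (hmk (X := X) (Y := Y) a) 0) (F.map l) :=
    ⟨a, l, (ev_hmk a).symm, rfl, h⟩
  exact h1.unique_up h2

theorem exists_shift_hmk {X Y : Res Ti F} (a : X.X 0 ⟶ Y.X 0) :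
    ∃ l : X.X (0 + 1) ⟶ Y.X (0 + 1), l ≫ Y.γ 0 (0 + 1) rfl = X.γ 0 (0 + 1) rfl ≫ a⟦(1:ℤ)⟧' ∧
    (hmk (X := X) (Y := Y) a)⟦(1:ℤ)⟧' = hmss l := by
  obtain ⟨l, hl⟩ := (Y.syz 0 (0 + 1) rfl).exists_v (X.perp' _) (X.γ 0 (0 + 1) rfl ≫ a⟦(1:ℤ)⟧')
  exact ⟨l, hl, shift_hmk a l hl⟩

theorem hms_surj {X Y : Res Ti F} (f : X ⟶ Y⟦(1:ℤ)⟧) : ∃ d : X.X 0 ⟶ Y.X (0 + 1), hms d = f :=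
  hmk_surj (X := X) (Y := Y⟦(1:ℤ)⟧) f
theorem hms_eq {X Y : Res Ti F} {d d' : X.X 0 ⟶ Y.X (0 + 1)} :
    hms (X := X) (Y := Y) d = hms d' ↔ IsI Ti (d - d') :=
  hmk_eq (X := X) (Y := Y⟦(1:ℤ)⟧)
theorem hms_eq' {X Y : Res Ti F} {d d' : X.X 0 ⟶ Y.X (0 + 1)} 
    (h : d ≫ Y.γ 0 (0 + 1) rfl = d' ≫ Y.γ 0 (0 + 1) rfl) :
    hms (X := X) (Y := Y) d = hms d' := by
  rw [hms_eq]
  apply (Y.syz 0 (0 + 1) rfl).mem_of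
  rw [sub_comp, h, sub_self]
theorem hms_eq_iff {X Y : Res Ti F} {d d' : X.X 0 ⟶ Y.X (0 + 1)} :
    hms (X := X) (Y := Y) d = hms d' ↔ d ≫ Y.γ 0 (0 + 1) rfl = d' ≫ Y.γ 0 (0 + 1) rfl := by
  refine ⟨fun h => ?_, hms_eq'⟩
  have := (hms_eq.1 h).comp_eq_zero (Y.γ 0 (0 + 1) rfl) (Y.perp 0)
  rwa [sub_comp, sub_eq_zero] at this
theorem hms_zero {X Y : Res Ti F} : hms (0 : X.X 0 ⟶ Y.X (0 + 1)) = (0 : X ⟶ Y⟦(1:ℤ)⟧) :=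
  hmk_eq_zero.2 IsI.zero
theorem hms_eq_zero_iff {X Y : Res Ti F} {d : X.X 0 ⟶ Y.X (0 + 1)} :
    hms (X := X) (Y := Y) d = 0 ↔ d ≫ Y.γ 0 (0 + 1) rfl = 0 := by
  rw [← hms_zero, hms_eq_iff, zero_comp]
theorem hms_eq_zero' {X Y : Res Ti F} {d : X.X 0 ⟶ Y.X (0 + 1)} :
    hms (X := X) (Y := Y) d = 0 ↔ IsI Ti d :=
  hmk_eq_zero (X := X) (Y := Y⟦(1:ℤ)⟧)
theorem hms_comp {X Y Z : Res Ti F} (a : X.X 0 ⟶ Y.X 0) (b : Y.X 0 ⟶ Z.X (0 + 1)) :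
    hms (X := X) (Y := Z) (a ≫ b) = hmk (X := X) (Y := Y) a ≫ hms b :=
  hmk_comp (X := X) (Y := Y) (Z := Z⟦(1:ℤ)⟧) a b
theorem hms_comp' {X Y Z : Res Ti F} (a : X.X 0 ⟶ Y.X (0 + 1)) (b : Y.X (0 + 1) ⟶ Z.X (0 + 1)) :
    hms (X := X) (Y := Z) (a ≫ b) = hms (X := X) (Y := Y) a ≫ hmss b :=
  hmk_comp (X := X) (Y := Y⟦(1:ℤ)⟧) (Z := Z⟦(1:ℤ)⟧) a b
theorem hms_comp_shift {X Y Z : Res Ti F} (a : X.X 0 ⟶ Y.X (0 + 1)) (b : Y.X 0 ⟶ Z.X 0) 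
    (c : X.X 0 ⟶ Z.X (0 + 1)) (h : a ≫ Y.γ 0 (0 + 1) rfl ≫ b⟦(1:ℤ)⟧' = c ≫ Z.γ 0 (0 + 1) rfl) :
    hms (X := X) (Y := Y) a ≫ (hmk (X := Y) (Y := Z) b)⟦(1:ℤ)⟧' = hms c := by
  obtain ⟨l, hl, e⟩ := exists_shift_hmk (X := Y) (Y := Z) b
  rw [e, ← hms_comp', hms_eq_iff, Category.assoc, hl, h]

theorem isZero_of {X : Res Ti F} (h : IsI Ti (𝟙 (X.X 0))) : IsZero X := by
  rw [IsZero.iff_id_eq_zero, ← hmk_id, hmk_eq_zero]; exact h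

instance : HasZeroObject (Res Ti F) := by
  obtain ⟨R, hR⟩ := exists_res F (Ti := Ti) (0 : C) (fun f =>
    ((shiftFunctor C (1:ℤ)).map_isZero (isZero_zero C)).eq_of_tgt _ _)
  refine ⟨R, isZero_of ?_⟩
  have : 𝟙 (R.X 0) = 0 := by
    apply IsZero.eq_of_src; rw [hR]; exact isZero_zero C
  rw [this]; exact IsI.zero

end Res
end Part3
end IYRed
namespace IYRed
open Limits Pretriangulated Preadditive ZeroObject

theorem five {D : Type} [Category.{0} D] [Preadditive D] {X Y Z Z0 V V' : D}
    {f : X ⟶ Y} {g : Y ⟶ Z} {h : Z ⟶ V} {f' : V ⟶ V'} {g0 : Y ⟶ Z0} {h0 : Z0 ⟶ V} {φ : Z0 ⟶ Z}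
    (c1 : g0 ≫ φ = g) (c2 : φ ≫ h = h0) (c3 : f ≫ g0 = 0)
    (e1 : ∀ {W : D} (k : W ⟶ Y), k ≫ g = 0 → ∃ x, k = x ≫ f)
    (e2 : ∀ {W : D} (k : W ⟶ Z), k ≫ h = 0 → ∃ x, k = x ≫ g)
    (e0 : ∀ {W : D} (k : W ⟶ Z0), k ≫ h0 = 0 → ∃ x, k = x ≫ g0)
    (z : h ≫ f' = 0)
    (e3 : ∀ {W : D} (k : W ⟶ V), k ≫ f' = 0 → ∃ x, k = x ≫ h0) : IsIso φ := by
  obtain ⟨k', hk'⟩ := e3 h z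
  obtain ⟨y, hy⟩ := e2 (𝟙 Z - k' ≫ φ) (by rw [sub_comp, Category.id_comp, Category.assoc, c2, ← hk', sub_self])
  have hs : (k' + y ≫ g0) ≫ φ = 𝟙 Z := by
    rw [add_comp, Category.assoc, c1, ← hy]; abel
  have mono : ∀ {W : D} (k : W ⟶ Z0), k ≫ φ = 0 → k = 0 := by
    intro W k hk
    obtain ⟨y, rfl⟩ := e0 k (by rw [← c2, ← Category.assoc, hk, zero_comp])
    rw [Category.assoc, c1] at hk
    obtain ⟨x, rfl⟩ := e1 y hk
    rw [Category.assoc, c3, comp_zero]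
  refine ⟨k' + y ≫ g0, ?_, hs⟩
  have := mono (φ ≫ (k' + y ≫ g0) - 𝟙 _) (by
    rw [sub_comp, Category.assoc, hs, Category.comp_id, Category.id_comp, sub_self])
  exact sub_eq_zero.1 this

section Part4
variable {C : Type} [Category.{0} C] [Preadditive C]
  [HasShift C ℤ] [∀ n : ℤ, (shiftFunctor C n).Additive]
  [HasZeroObject C] [Pretriangulated C]
  {Q : Type} [Category.{0} Q] [Preadditive Q]
  {Ti : C} {F : C ⥤ Q} [hSet : Setup Ti F]

theorem exY2 {A B E : C} {a : A ⟶ B} {b : B ⟶ E} {c : E ⟶ A⟦(1:ℤ)⟧}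
    (h : Triangle.mk a b c ∈ distTriang C) {W : C} (f : B ⟶ W) (hf : a ≫ f = 0) :
    ∃ g : E ⟶ W, f = b ≫ g := Triangle.yoneda_exact₂ _ h f hf

variable (F) in
theorem exists_res_ind (A : C) (hA : ∀ f : A ⟶ Ti⟦(1:ℤ)⟧, f = 0) {p : C → Prop} (hp : p A) :
    ∃ R : Res Ti F, p (R.X 0) := by
  obtain ⟨R, hR⟩ := exists_res F A ((Setup.symm F (Ti := Ti) A).2 hA)
  exact ⟨R, hR ▸ hp⟩

namespace Res

section
variable {X Y Z : Res Ti F} {a : X.X 0 ⟶ Y.X 0} {b : Y.X 0 ⟶ Z.X 0} {d : Z.X 0 ⟶ X.X (0 + 1)}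
  (h : Triangle.mk a b (d ≫ X.γ 0 (0 + 1) rfl) ∈ distTriang C)
include h

theorem sd_z12 : hmk (X := X) (Y := Y) a ≫ hmk (X := Y) (Y := Z) b = 0 := by
  rw [← hmk_comp, zero12 h, hmk_eq_zero]; exact IsI.zero
theorem sd_z23 : hmk (X := Y) (Y := Z) b ≫ hms (X := Z) (Y := X) d = 0 := by
  rw [← hms_comp, hms_eq_zero_iff, Category.assoc, zero23 h]
theorem sd_z31 : hms (X := Z) (Y := X) d ≫ (hmk (X := X) (Y := Y) a)⟦(1:ℤ)⟧' = 0 := by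
  rw [hms_comp_shift d a 0, hms_zero]
  rw [zero_comp, ← Category.assoc, zero31 h]
theorem sd_ex2 {W : Res Ti F} (k : W ⟶ Y) (hk : k ≫ hmk (X := Y) (Y := Z) b = 0) :
    ∃ x, k = x ≫ hmk (X := X) (Y := Y) a := by
  obtain ⟨κ, rfl⟩ := hmk_surj k
  rw [← hmk_comp, hmk_eq_zero] at hk
  obtain ⟨s, hs, e⟩ := hk.factor_right h (X.perp 0)
  obtain ⟨x, hx⟩ := exC2 h (κ - s) (by rw [sub_comp, e, sub_self])
  refine ⟨hmk x, ?_⟩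
  rw [← hmk_comp, ← hx, hmk_eq, sub_sub_cancel]
  exact hs
theorem sd_ex3 {W : Res Ti F} (k : W ⟶ Z) (hk : k ≫ hms (X := Z) (Y := X) d = 0) :
    ∃ x, k = x ≫ hmk (X := Y) (Y := Z) b := by
  obtain ⟨κ, rfl⟩ := hmk_surj k
  rw [← hms_comp, hms_eq_zero_iff, Category.assoc] at hk
  obtain ⟨x, rfl⟩ := exC3 h κ hk
  exact ⟨hmk x, hmk_comp _ _⟩
theorem sd_ex1 {W : Res Ti F} (k : W ⟶ X⟦(1:ℤ)⟧) (hk : k ≫ (hmk (X := X) (Y := Y) a)⟦(1:ℤ)⟧' = 0) :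
    ∃ x, k = x ≫ hms (X := Z) (Y := X) d := by
  obtain ⟨κ, rfl⟩ := hms_surj k
  obtain ⟨l, hl, e⟩ := exists_shift_hmk (X := X) (Y := Y) a
  rw [e, ← hms_comp', hms_eq_zero_iff, Category.assoc, hl, ← Category.assoc] at hk
  obtain ⟨x, hx⟩ := exC1 h _ hk
  refine ⟨hmk x, ?_⟩
  rw [← hms_comp, hms_eq_iff, hx, Category.assoc]
end

/-- standard triangles -/
def Std (T : Triangle (Res Ti F)) : Prop :=
  ∃ (a : T.obj₁.X 0 ⟶ T.obj₂.X 0) (b : T.obj₂.X 0 ⟶ T.obj₃.X 0) (d : T.obj₃.X 0 ⟶ T.obj₁.X (0 + 1)),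
    T.mor₁ = hmk a ∧ T.mor₂ = hmk b ∧ T.mor₃ = hms d ∧
    Triangle.mk a b (d ≫ T.obj₁.γ 0 (0 + 1) rfl) ∈ distTriang C

/-- exactness -/
structure ExT (T : Triangle (Res Ti F)) : Prop where
  z12 : T.mor₁ ≫ T.mor₂ = 0
  z23 : T.mor₂ ≫ T.mor₃ = 0
  z31 : T.mor₃ ≫ T.mor₁⟦(1:ℤ)⟧' = 0
  ex2 : ∀ {W : Res Ti F} (k : W ⟶ T.obj₂), k ≫ T.mor₂ = 0 → ∃ x, k = x ≫ T.mor₁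
  ex3 : ∀ {W : Res Ti F} (k : W ⟶ T.obj₃), k ≫ T.mor₃ = 0 → ∃ x, k = x ≫ T.mor₂
  ex1 : ∀ {W : Res Ti F} (k : W ⟶ T.obj₁⟦(1:ℤ)⟧), k ≫ T.mor₁⟦(1:ℤ)⟧' = 0 → ∃ x, k = x ≫ T.mor₃

theorem Std.exT {T : Triangle (Res Ti F)} (hT : Std T) : ExT T := by
  obtain ⟨X, Y, Z, f, g, i⟩ := T
  obtain ⟨a, b, d, h1, h2, h3, h⟩ := hT
  dsimp only at a b d h1 h2 h3 h
  subst h1 h2 h3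
  exact ⟨sd_z12 h, sd_z23 h, sd_z31 h, sd_ex2 h, sd_ex3 h, sd_ex1 h⟩

theorem ExT.of_iso {T T' : Triangle (Res Ti F)} (e : T ≅ T') (h : ExT T') : ExT T := by
  have c1 := e.hom.comm₁
  have c2 := e.hom.comm₂
  have c3 := e.hom.comm₃
  have d1 := e.inv.comm₁
  have d2 := e.inv.comm₂
  have d3 := e.inv.comm₃
  have i1 : e.hom.hom₁ ≫ e.inv.hom₁ = 𝟙 _ := by rw [← comp_hom₁, e.hom_inv_id]; rfl
  have i2 : e.hom.hom₂ ≫ e.inv.hom₂ = 𝟙 _ := by rw [← comp_hom₂, e.hom_inv_id]; rfl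
  have i3 : e.hom.hom₃ ≫ e.inv.hom₃ = 𝟙 _ := by rw [← comp_hom₃, e.hom_inv_id]; rfl
  have i1' : e.hom.hom₁⟦(1:ℤ)⟧' ≫ e.inv.hom₁⟦(1:ℤ)⟧' = 𝟙 _ := by
    rw [← Functor.map_comp, i1, CategoryTheory.Functor.map_id]
  have m1 : T.mor₁ = e.hom.hom₁ ≫ T'.mor₁ ≫ e.inv.hom₂ := by
    rw [← Category.assoc, ← c1, Category.assoc, i2, Category.comp_id]
  have m2 : T.mor₂ = e.hom.hom₂ ≫ T'.mor₂ ≫ e.inv.hom₃ := by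
    rw [← Category.assoc, ← c2, Category.assoc, i3, Category.comp_id]
  have c1' : T.mor₁⟦(1:ℤ)⟧' ≫ e.hom.hom₂⟦(1:ℤ)⟧' = e.hom.hom₁⟦(1:ℤ)⟧' ≫ T'.mor₁⟦(1:ℤ)⟧' := by
    rw [← Functor.map_comp, c1, Functor.map_comp]
  have i2' : e.hom.hom₂⟦(1:ℤ)⟧' ≫ e.inv.hom₂⟦(1:ℤ)⟧' = 𝟙 _ := by
    rw [← Functor.map_comp, i2, CategoryTheory.Functor.map_id]
  refine ⟨?_, ?_, ?_, ?_, ?_, ?_⟩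
  · rw [← Category.comp_id T.mor₂, ← i3, reassoc_of% c2, reassoc_of% c1, reassoc_of% h.z12]; simp
  · rw [← Category.comp_id T.mor₃, ← i1', reassoc_of% c3, reassoc_of% c2, reassoc_of% h.z23]; simp
  · rw [← Category.comp_id (T.mor₁⟦(1:ℤ)⟧'), ← i2', reassoc_of% c1', reassoc_of% c3,
      reassoc_of% h.z31]; simp
  · intro W k hk
    obtain ⟨x, hx⟩ := h.ex2 (k ≫ e.hom.hom₂) (by rw [Category.assoc, ← c2, reassoc_of% hk, zero_comp])
    refine ⟨x ≫ e.inv.hom₁, ?_⟩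
    rw [Category.assoc, ← d1, ← Category.assoc, ← hx, Category.assoc, i2, Category.comp_id]
  · intro W k hk
    obtain ⟨x, hx⟩ := h.ex3 (k ≫ e.hom.hom₃) (by rw [Category.assoc, ← c3, reassoc_of% hk, zero_comp])
    refine ⟨x ≫ e.inv.hom₂, ?_⟩
    rw [Category.assoc, ← d2, ← Category.assoc, ← hx, Category.assoc, i3, Category.comp_id]
  · intro W k hk
    obtain ⟨x, hx⟩ := h.ex1 (k ≫ e.hom.hom₁⟦(1:ℤ)⟧') (by rw [Category.assoc, ← c1', reassoc_of% hk, zero_comp])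
    refine ⟨x ≫ e.inv.hom₃, ?_⟩
    rw [Category.assoc, ← d3, ← Category.assoc, ← hx, Category.assoc, i1', Category.comp_id]

/-- distinguished triangles -/
def Dist : Set (Triangle (Res Ti F)) := {T | ∃ T', Std T' ∧ Nonempty (T ≅ T')}

theorem Dist.exT {T : Triangle (Res Ti F)} (h : T ∈ Dist) : ExT T := by
  obtain ⟨T', h, ⟨e⟩⟩ := h
  exact h.exT.of_iso e

theorem Dist.iso {T T' : Triangle (Res Ti F)} (h : T ∈ Dist) (e : T' ≅ T) : T' ∈ Dist := by
  obtain ⟨T'', h, ⟨e'⟩⟩ := h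
  exact ⟨T'', h, ⟨e ≪≫ e'⟩⟩

theorem contr (X : Res Ti F) : contractibleTriangle X ∈ Dist (Ti := Ti) (F := F) := by
  obtain ⟨R, hR⟩ := exists_res_ind F (Ti := Ti) (0 : C) (fun f => (isZero_zero C).eq_of_src _ _)
    (p := fun W => IsZero W) (isZero_zero C)
  refine ⟨Triangle.mk (𝟙 X) (0 : X ⟶ R) 0, ⟨𝟙 _, 0, 0, (hmk_id X).symm, (hmk_eq_zero.2 IsI.zero).symm,
    hms_zero.symm, ?_⟩, ⟨?_⟩⟩
  · refine isomorphic_distinguished _ (contractible_distinguished (X.X 0)) _ ?_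
    refine Triangle.isoMk _ _ (Iso.refl _) (Iso.refl _) (hR.isoZero) ?_ ?_ ?_
    · exact (Category.comp_id _).trans (Category.id_comp _).symm
    · exact (isZero_zero C).eq_of_tgt _ _
    · exact hR.eq_of_src _ _
  · have hR' : IsZero R := isZero_of (by rw [hR.eq_of_src (𝟙 (R.X 0)) 0]; exact IsI.zero)
    refine Triangle.isoMk _ _ (Iso.refl _) (Iso.refl _) (hR'.isoZero.symm) ?_ ?_ ?_
    · exact (Category.comp_id _).trans (Category.id_comp _).symm
    · exact hR'.eq_of_tgt _ _
    · exact (isZero_zero (Res Ti F)).eq_of_src _ _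

theorem std_tr3 {T T' : Triangle (Res Ti F)} (hT : Std T) (hT' : Std T')
    (f₁ : T.obj₁ ⟶ T'.obj₁) (f₂ : T.obj₂ ⟶ T'.obj₂) (hc : T.mor₁ ≫ f₂ = f₁ ≫ T'.mor₁) :
    ∃ f₃ : T.obj₃ ⟶ T'.obj₃, T.mor₂ ≫ f₃ = f₂ ≫ T'.mor₂ ∧
      T.mor₃ ≫ f₁⟦(1:ℤ)⟧' = f₃ ≫ T'.mor₃ := by
  obtain ⟨X, Y, Z, f, g, i⟩ := T
  obtain ⟨X', Y', Z', f', g', i'⟩ := T'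
  obtain ⟨a, b, d, h1, h2, h3, h⟩ := hT
  obtain ⟨a', b', d', h1', h2', h3', h'⟩ := hT'
  dsimp only at a b d h1 h2 h3 h a' b' d' h1' h2' h3' h' f₁ f₂ hc ⊢
  subst h1 h2 h3 h1' h2' h3'
  obtain ⟨x, rfl⟩ := hmk_surj f₁
  obtain ⟨y, rfl⟩ := hmk_surj f₂
  rw [← hmk_comp, ← hmk_comp, hmk_eq] at hc
  obtain ⟨s, hs, e⟩ := hc.factor_left h (Z.perp' 0)
  obtain ⟨z, hz1, hz2⟩ := compl3 h h' x (y - s) (by rw [comp_sub, ← e]; abel)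
  refine ⟨hmk z, ?_, ?_⟩
  · have : hmk (X := Y) (Y := Y') y = hmk (y - s) := by
      rw [hmk_eq, sub_sub_cancel]; exact hs
    rw [this, ← hmk_comp, ← hmk_comp, hz1]
  · rw [← hms_comp]
    refine hms_comp_shift _ _ _ ?_
    rw [← Category.assoc, hz2, Category.assoc]

theorem dist_tr3 {T T' : Triangle (Res Ti F)} (hT : T ∈ Dist) (hT' : T' ∈ Dist)
    (f₁ : T.obj₁ ⟶ T'.obj₁) (f₂ : T.obj₂ ⟶ T'.obj₂) (hc : T.mor₁ ≫ f₂ = f₁ ≫ T'.mor₁) :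
    ∃ f₃ : T.obj₃ ⟶ T'.obj₃, T.mor₂ ≫ f₃ = f₂ ≫ T'.mor₂ ∧
      T.mor₃ ≫ f₁⟦(1:ℤ)⟧' = f₃ ≫ T'.mor₃ := by
  obtain ⟨S, hS, ⟨e⟩⟩ := hT
  obtain ⟨S', hS', ⟨e'⟩⟩ := hT'
  have i1 : e.hom.hom₁ ≫ e.inv.hom₁ = 𝟙 _ := by rw [← comp_hom₁, e.hom_inv_id]; rfl
  have i2 : e.hom.hom₂ ≫ e.inv.hom₂ = 𝟙 _ := by rw [← comp_hom₂, e.hom_inv_id]; rfl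
  have j1 : e'.hom.hom₁ ≫ e'.inv.hom₁ = 𝟙 _ := by rw [← comp_hom₁, e'.hom_inv_id]; rfl
  have j2 : e'.hom.hom₂ ≫ e'.inv.hom₂ = 𝟙 _ := by rw [← comp_hom₂, e'.hom_inv_id]; rfl
  have i1' : e.hom.hom₁⟦(1:ℤ)⟧' ≫ e.inv.hom₁⟦(1:ℤ)⟧' = 𝟙 _ := by
    rw [← Functor.map_comp, i1, CategoryTheory.Functor.map_id]
  have j1' : e'.hom.hom₁⟦(1:ℤ)⟧' ≫ e'.inv.hom₁⟦(1:ℤ)⟧' = 𝟙 _ := by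
    rw [← Functor.map_comp, j1, CategoryTheory.Functor.map_id]
  have c1 := e'.hom.comm₁
  have c2 := e.hom.comm₂
  have c3 := e.hom.comm₃
  have d1 := e.inv.comm₁
  have d2 := e'.inv.comm₂
  have d3 := e'.inv.comm₃
  obtain ⟨z, h1, h2⟩ := std_tr3 hS hS' (e.inv.hom₁ ≫ f₁ ≫ e'.hom.hom₁) (e.inv.hom₂ ≫ f₂ ≫ e'.hom.hom₂)
    (by rw [reassoc_of% d1, reassoc_of% hc, c1]; simp only [Category.assoc])
  refine ⟨e.hom.hom₃ ≫ z ≫ e'.inv.hom₃, ?_, ?_⟩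
  · rw [reassoc_of% c2, reassoc_of% h1, reassoc_of% i2, d2, reassoc_of% j2]
  · rw [Category.assoc, Category.assoc, ← d3, ← reassoc_of% h2, ← reassoc_of% c3]
    simp only [Functor.map_comp, Category.assoc]
    rw [reassoc_of% i1', j1', Category.comp_id]

theorem dist_cone {X Y : Res Ti F} (f : X ⟶ Y) :
    ∃ (Z : Res Ti F) (g : Y ⟶ Z) (h : Z ⟶ X⟦(1:ℤ)⟧), Triangle.mk f g h ∈ Dist (Ti := Ti) (F := F) := by
  obtain ⟨a, rfl⟩ := hmk_surj f
  obtain ⟨D, α, β, hD, ht⟩ := X.syz 0 (0 + 1) rfl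
  have hDp : ∀ x : D ⟶ Ti⟦(1:ℤ)⟧, x = 0 := eq_zero_of_add hD (Setup.rigid F)
  obtain ⟨Y', i, q, m, t, hiq, hqi, hmq, hmt⟩ := exists_res_ind F (Ti := Ti) (Y.X 0 ⊞ D)
    (fun f => by
      apply biprod.hom_ext'
      · rw [Y.perp' 0 (biprod.inl ≫ f), comp_zero]
      · rw [hDp (biprod.inr ≫ f), comp_zero])
    (p := fun B => ∃ (i : Y.X 0 ⟶ B) (q : B ⟶ Y.X 0) (m : X.X 0 ⟶ B) (t : B ⟶ D),
      i ≫ q = 𝟙 _ ∧ IsI Ti (𝟙 B - q ≫ i) ∧ m ≫ q = a ∧ m ≫ t = α)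
    ⟨biprod.inl, biprod.fst, biprod.lift a α, biprod.snd, by simp, by
      have : 𝟙 (Y.X 0 ⊞ D) - biprod.fst ≫ biprod.inl = biprod.snd ≫ biprod.inr := by
        rw [← biprod.total]; abel
      rw [this]
      exact IsI.through hD _ _, by simp, by simp⟩
  obtain ⟨W, b, c, hW⟩ := distinguished_cocone_triangle m
  have hWp : ∀ x : W ⟶ Ti⟦(1:ℤ)⟧, x = 0 := by
    intro x
    obtain ⟨g, rfl⟩ := exY3 hW x (Y'.perp' 0 _)
    obtain ⟨u, rfl⟩ := (shiftFunctor C (1:ℤ)).map_surjective g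
    obtain ⟨s, rfl⟩ := yoneda₁ ht u (X.perp' _ _)
    rw [← hmt]
    simp only [Functor.map_comp, Category.assoc]
    rw [← Category.assoc, zero31 hW, zero_comp]
  obtain ⟨Z, b, c, hZ⟩ := exists_res_ind F (Ti := Ti) W hWp
    (p := fun W => ∃ (b : Y'.X 0 ⟶ W) (c : W ⟶ (X.X 0)⟦(1:ℤ)⟧), Triangle.mk m b c ∈ distTriang C)
    ⟨b, c, hW⟩
  obtain ⟨d, rfl⟩ := (X.syz 0 (0 + 1) rfl).exists_v (Z.perp' 0) c
  have e1 : hmk (X := Y) (Y := Y') i ≫ hmk (X := Y') (Y := Y) q = 𝟙 _ := by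
    rw [← hmk_comp, hiq, hmk_id]
  have e2 : hmk (X := Y') (Y := Y) q ≫ hmk (X := Y) (Y := Y') i = 𝟙 _ := by
    rw [← hmk_comp, ← hmk_id, eq_comm, hmk_eq]; exact hqi
  refine ⟨Z, hmk (X := Y) (Y := Y') i ≫ hmk b, hms d, Triangle.mk (hmk (X := X) (Y := Y') m) (hmk b) (hms d),
    ⟨m, b, d, rfl, rfl, rfl, hZ⟩, ⟨Triangle.isoMk _ _ (Iso.refl _) ⟨hmk i, hmk q, e1, e2⟩ (Iso.refl _) ?_ ?_ ?_⟩⟩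
  · have : hmk (X := X) (Y := Y) a = hmk (X := X) (Y := Y') m ≫ hmk q := by rw [← hmk_comp, hmq]
    change hmk (X := X) (Y := Y) a ≫ hmk (X := Y) (Y := Y') i = 𝟙 _ ≫ hmk m
    rw [this, Category.assoc, e2, Category.comp_id, Category.id_comp]
  · exact Category.comp_id _
  · change hms (X := Z) (Y := X) d ≫ (𝟙 X)⟦(1:ℤ)⟧' = 𝟙 _ ≫ hms d
    rw [CategoryTheory.Functor.map_id, Category.comp_id, Category.id_comp]

theorem std_rot {T : Triangle (Res Ti F)} (hT : Std T) : T.rotate ∈ Dist (Ti := Ti) (F := F) := by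
  have hex := hT.exT
  obtain ⟨X, Y, Z, f, g, h⟩ := T
  obtain ⟨a, b, d, h1, h2, h3, h⟩ := hT
  dsimp only at a b d h1 h2 h3 h
  subst h1 h2 h3
  obtain ⟨l, hl, el⟩ := exists_shift_hmk (X := X) (Y := Y) a
  obtain ⟨D, α, β, hD, ht⟩ := X.syz 0 (0 + 1) rfl
  obtain ⟨E, i, p, hE⟩ := distinguished_cocone_triangle₂ (-(X.γ 0 (0 + 1) rfl ≫ a⟦(1:ℤ)⟧'))
  obtain ⟨E, i, p, hE⟩ := exists_res_ind F (Ti := Ti) E (fun x => by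
      obtain ⟨g, rfl⟩ := exY2 hE x (Y.perp' 0 _)
      rw [X.perp' _ g, comp_zero])
    (p := fun E => ∃ (i : Y.X 0 ⟶ E) (p : E ⟶ X.X (0 + 1)),
      Triangle.mk i p (-(X.γ 0 (0 + 1) rfl ≫ a⟦(1:ℤ)⟧')) ∈ distTriang C) ⟨i, p, hE⟩
  have hS : Std (Triangle.mk (hmk (X := Y) (Y := E) i) (hms (X := E) (Y := X) p)
      (-(hmk (X := X) (Y := Y) a)⟦(1:ℤ)⟧')) := by
    refine ⟨i, p, -l, rfl, rfl, ?_, ?_⟩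
    · exact (congrArg Neg.neg el).trans (hmk_neg (X := X⟦(1:ℤ)⟧) (Y := Y⟦(1:ℤ)⟧) l).symm
    · have : (-l) ≫ Y.γ 0 (0 + 1) rfl = -(X.γ 0 (0 + 1) rfl ≫ a⟦(1:ℤ)⟧') := by rw [neg_comp, hl]
      change Triangle.mk i p ((-l) ≫ Y.γ 0 (0 + 1) rfl) ∈ _
      rw [this]; exact hE
  have hSx := hS.exT
  obtain ⟨y, hy, -⟩ := compl2 ht hE (-a) (𝟙 _) (by rw [Functor.map_neg, comp_neg, Category.id_comp])
  obtain ⟨w, hw1, hw2⟩ := compl2 hE (rot_mk h) (𝟙 _) (X.γ 0 (0 + 1) rfl) (by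
    rw [CategoryTheory.Functor.map_id, Category.comp_id, comp_neg])
  have c1 : hmk (X := Y) (Y := E) i ≫ hmk (X := E) (Y := Z) w = hmk b := by
    rw [← hmk_comp, hw1, Category.id_comp]
  have c2 : hmk (X := E) (Y := Z) w ≫ hms (X := Z) (Y := X) d = hms p := by
    rw [← hms_comp, hms_eq_iff, hw2, Category.assoc]
  have c3 : hmk (X := X) (Y := Y) a ≫ hmk (X := Y) (Y := E) i = 0 := by
    rw [← hmk_comp, hmk_eq_zero]
    have : a ≫ i = -(α ≫ y) := by rw [hy, neg_comp, neg_neg]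
    rw [this]
    exact (IsI.through hD _ _).neg
  have : IsIso (hmk (X := E) (Y := Z) w) := five c1 c2 c3 hex.ex2 hex.ex3 hSx.ex2 
    (f' := (hmk (X := X) (Y := Y) a)⟦(1:ℤ)⟧') hex.z31
    (fun k hk => hSx.ex3 k (by
      change k ≫ (-(hmk (X := X) (Y := Y) a)⟦(1:ℤ)⟧') = 0
      rw [comp_neg, hk, neg_zero]))
  refine ⟨_, hS, ⟨Iso.symm (Triangle.isoMk _ _ (Iso.refl _) (@asIso _ _ _ _ _ this) (Iso.refl _) ?_ ?_ ?_)⟩⟩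
  · exact c1.trans (Category.id_comp _).symm
  · exact (Category.comp_id _).trans c2.symm
  · change (-(hmk (X := X) (Y := Y) a)⟦(1:ℤ)⟧') ≫ (𝟙 Y)⟦(1:ℤ)⟧' = 𝟙 _ ≫ (-(hmk (X := X) (Y := Y) a)⟦(1:ℤ)⟧')
    rw [CategoryTheory.Functor.map_id, Category.comp_id, Category.id_comp]

theorem dist_rot {T : Triangle (Res Ti F)} (hT : T ∈ Dist) : T.rotate ∈ Dist (Ti := Ti) (F := F) := by
  obtain ⟨S, hS, ⟨e⟩⟩ := hT
  exact Dist.iso (std_rot hS) ((rotate (Res Ti F)).mapIso e)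

theorem dist_of_rot {T : Triangle (Res Ti F)} (hT : T.rotate ∈ Dist (Ti := Ti) (F := F)) : T ∈ Dist := by
  obtain ⟨X, Y, Z, f, g, h⟩ := T
  obtain ⟨Z0, g0, h0, hT0⟩ := dist_cone f
  have r1 := Dist.exT hT
  have r3 := dist_rot (dist_rot hT)
  have s3 := dist_rot (dist_rot (dist_rot hT0))
  obtain ⟨φ', hφ1, hφ2⟩ := dist_tr3 s3 r3 (𝟙 _) (𝟙 _) (by
    exact (Category.comp_id _).trans (Category.id_comp _).symm)
  obtain ⟨φ, rfl⟩ : ∃ φ : Z0 ⟶ Z, φ⟦(1:ℤ)⟧' = φ' := (shiftFunctor (Res Ti F) (1:ℤ)).map_surjective φ'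
  have c1 : g0 ≫ φ = g := by
    apply (shiftFunctor (Res Ti F) (1:ℤ)).map_injective
    change (-(g0⟦(1:ℤ)⟧')) ≫ φ⟦(1:ℤ)⟧' = 𝟙 _ ≫ (-(g⟦(1:ℤ)⟧')) at hφ1
    have hφ1 : (-(g0⟦(1:ℤ)⟧')) ≫ φ⟦(1:ℤ)⟧' = 𝟙 (Y⟦(1:ℤ)⟧) ≫ (-(g⟦(1:ℤ)⟧')) := hφ1
    rw [neg_comp, comp_neg, neg_inj, Category.id_comp] at hφ1
    rw [Functor.map_comp, hφ1]
  have c2 : φ ≫ h = h0 := by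
    apply (shiftFunctor (Res Ti F) (1:ℤ)).map_injective
    change (-(h0⟦(1:ℤ)⟧')) ≫ (𝟙 (X⟦(1:ℤ)⟧))⟦(1:ℤ)⟧' = φ⟦(1:ℤ)⟧' ≫ (-(h⟦(1:ℤ)⟧')) at hφ2
    rw [CategoryTheory.Functor.map_id, Category.comp_id, comp_neg, neg_inj] at hφ2
    rw [Functor.map_comp, hφ2]
  have x0 := Dist.exT hT0
  have x3 := Dist.exT r3
  have : IsIso φ := five c1 c2 x0.z12 (fun {W} k hk => by
      obtain ⟨x, hx⟩ := x3.ex2 (k⟦(1:ℤ)⟧') (by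
        change k⟦(1:ℤ)⟧' ≫ (-(g⟦(1:ℤ)⟧')) = 0
        rw [comp_neg, ← Functor.map_comp, hk, Functor.map_zero, neg_zero])
      change W⟦(1:ℤ)⟧ ⟶ X⟦(1:ℤ)⟧ at x
      obtain ⟨x, rfl⟩ := (shiftFunctor (Res Ti F) (1:ℤ)).map_surjective x
      refine ⟨-x, (shiftFunctor (Res Ti F) (1:ℤ)).map_injective ?_⟩
      change k⟦(1:ℤ)⟧' = x⟦(1:ℤ)⟧' ≫ (-(f⟦(1:ℤ)⟧')) at hx
      change k⟦(1:ℤ)⟧' = ((-x) ≫ f)⟦(1:ℤ)⟧'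
      rw [hx, neg_comp, Functor.map_neg, Functor.map_comp, comp_neg]) r1.ex2 x0.ex3
    (f' := f⟦(1:ℤ)⟧') (by
      have : h ≫ (-(f⟦(1:ℤ)⟧')) = 0 := r1.z23
      rwa [comp_neg, neg_eq_zero] at this) x0.ex1
  refine Dist.iso hT0 (Iso.symm (Triangle.isoMk _ _ (Iso.refl _) (Iso.refl _) (@asIso _ _ _ _ _ this) ?_ ?_ ?_))
  · exact (Category.comp_id _).trans (Category.id_comp _).symm
  · exact c1.trans (Category.id_comp _).symm
  · change h0 ≫ (𝟙 X)⟦(1:ℤ)⟧' = φ ≫ h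
    rw [CategoryTheory.Functor.map_id, Category.comp_id, c2]

instance : Pretriangulated (Res Ti F) where
  distinguishedTriangles := Dist
  isomorphic_distinguished T h T' e := Dist.iso h e
  contractible_distinguished := contr
  distinguished_cocone_triangle f := dist_cone f
  rotate_distinguished_triangle T := ⟨dist_rot, dist_of_rot⟩
  complete_distinguished_triangle_morphism T T' h h' f g hc := dist_tr3 h h' f g hc

end Res
end Part4
end IYRed
namespace IYRed
open Limits Pretriangulated Preadditive ZeroObject

theorem exists_equivOfKer {k M N P : Type} [Field k] [AddCommGroup M] [AddCommGroup N] [AddCommGroup P]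
    [Module k M] [Module k N] [Module k P] (f : M →ₗ[k] N) (g : M →ₗ[k] P)
    (hf : Function.Surjective f) (hg : Function.Surjective g) (h : ∀ x, f x = 0 ↔ g x = 0) :
    ∃ e : N ≃ₗ[k] P, ∀ x, e (f x) = g x := by
  have hk : LinearMap.ker f = LinearMap.ker g := by
    ext x; simp [h]
  refine ⟨(f.quotKerEquivOfSurjective hf).symm ≪≫ₗ Submodule.quotEquivOfEq _ _ hk ≪≫ₗ
    g.quotKerEquivOfSurjective hg, fun x => ?_⟩
  have : (f.quotKerEquivOfSurjective hf).symm (f x) = Submodule.Quotient.mk x := by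
    rw [LinearEquiv.symm_apply_eq]; rfl
  rw [LinearEquiv.trans_apply, LinearEquiv.trans_apply, this]
  rfl

theorem exists_algEquiv {k M N P : Type} [Field k] [Ring M] [Ring N] [Ring P]
    [Algebra k M] [Algebra k N] [Algebra k P] (f : M →ₐ[k] N) (g : M →ₐ[k] P)
    (hf : Function.Surjective f) (hg : Function.Surjective g) (h : ∀ x, f x = 0 ↔ g x = 0) :
    Nonempty (N ≃ₐ[k] P) := by
  obtain ⟨e, he⟩ := exists_equivOfKer f.toLinearMap g.toLinearMap hf hg h
  have he : ∀ x, e (f x) = g x := he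
  refine ⟨AlgEquiv.ofLinearEquiv e ?_ ?_⟩
  · rw [← map_one f, he, map_one]
  · intro x y
    obtain ⟨x, rfl⟩ := hf x
    obtain ⟨y, rfl⟩ := hf y
    rw [← map_mul f, he, he, he, map_mul]

open Polynomial in
theorem exists_idem {k R : Type} [Field k] [Ring R] [Algebra k R] [FiniteDimensional k R] (e : R) :
    ∃ g h : R, g * g = g ∧ g = e + (e * e - e) * h := by
  have hp : minpoly k e ≠ 0 := minpoly.ne_zero (Algebra.IsIntegral.isIntegral e)
  obtain ⟨q, hq, hnd⟩ := exists_eq_pow_rootMultiplicity_mul_and_not_dvd (minpoly k e) hp 0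
  set n := rootMultiplicity 0 (minpoly k e) with hn
  rw [C_0, sub_zero] at hq hnd
  have hc : IsCoprime (X ^ (n + 1) : k[X]) (q * (X - C 1)) := by
    refine IsCoprime.pow_left ?_
    rw [irreducible_X.coprime_iff_not_dvd, prime_X.dvd_mul, not_or]
    refine ⟨hnd, ?_⟩
    rw [X_dvd_iff]; simp
  obtain ⟨u, v, huv⟩ := hc
  set G := u * X ^ (n + 1) with hG
  have h1 : G * G - G = - (X * u * v * (X - C 1)) * minpoly k e := by
    have e1 : v * (q * (X - C 1)) = 1 - G := by rw [← huv]; ring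
    have : G * G - G = - G * (v * (q * (X - C 1))) := by rw [e1]; ring
    rw [this, hq, hG]; ring
  obtain ⟨H, hH⟩ : (X * X - X : k[X]) ∣ G - X := by
    have hcc : IsCoprime (X : k[X]) (X - C 1) := ⟨1, -1, by simp⟩
    have := hcc.mul_dvd (z := G - X) (by
      rw [X_dvd_iff]; simp [hG]) (by
      rw [dvd_iff_isRoot, IsRoot.def]
      have := congrArg (eval 1) huv
      simpa [hG, sub_eq_zero] using this)
    convert this using 1
    simp [mul_sub]
  refine ⟨aeval e G, aeval e H, ?_, ?_⟩
  · have := congrArg (aeval e) h1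
    rw [map_mul, minpoly.aeval, mul_zero, map_sub, map_mul, sub_eq_zero] at this
    exact this
  · have := congrArg (aeval e) hH
    simp only [map_sub (aeval e) G, map_mul (aeval e) _ H, map_sub, map_mul (aeval e) X X, aeval_X] at this
    rw [← this]; abel

section Part5
variable {C : Type} [Category.{0} C] [Preadditive C]
  [HasShift C ℤ] [∀ n : ℤ, (shiftFunctor C n).Additive]
  [HasZeroObject C] [Pretriangulated C]
  {Q : Type} [Category.{0} Q] [Preadditive Q]
  {Ti : C} {F : C ⥤ Q} [hSet : Setup Ti F] {k : Type} [Field k] [Linear k C]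

namespace Res

instance instSM (X Y : Res Ti F) : SMul k (X ⟶ Y) := ⟨fun c f => hmk (c • (hmk_surj f).choose)⟩

theorem hmk_smul {X Y : Res Ti F} (c : k) (a : X.X 0 ⟶ Y.X 0) :
    hmk (X := X) (Y := Y) (c • a) = c • hmk (X := X) (Y := Y) a := by
  change _ = hmk (c • (hmk_surj (hmk (X := X) (Y := Y) a)).choose)
  rw [hmk_eq, ← smul_sub]
  apply IsI.smul
  rw [← hmk_eq (X := X) (Y := Y)]
  exact (hmk_surj (hmk (X := X) (Y := Y) a)).choose_spec.symm

instance instMod (X Y : Res Ti F) : Module k (X ⟶ Y) where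
  one_smul f := by
    obtain ⟨a, rfl⟩ := hmk_surj f
    rw [← hmk_smul, one_smul]
  mul_smul c d f := by
    obtain ⟨a, rfl⟩ := hmk_surj f
    rw [← hmk_smul, ← hmk_smul, ← hmk_smul, mul_smul]
  smul_zero c := by
    have : (0 : X ⟶ Y) = hmk 0 := (hmk_eq_zero.2 IsI.zero).symm
    rw [this, ← hmk_smul, smul_zero]
  smul_add c f g := by
    obtain ⟨a, rfl⟩ := hmk_surj f
    obtain ⟨b, rfl⟩ := hmk_surj g
    rw [← hmk_add, ← hmk_smul, ← hmk_smul, ← hmk_smul, ← hmk_add, smul_add]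
  add_smul c d f := by
    obtain ⟨a, rfl⟩ := hmk_surj f
    rw [← hmk_smul, ← hmk_smul, ← hmk_smul, ← hmk_add, add_smul]
  zero_smul f := by
    obtain ⟨a, rfl⟩ := hmk_surj f
    rw [← hmk_smul, zero_smul]
    exact hmk_eq_zero.2 IsI.zero

instance instLin : Linear k (Res Ti F) where
  homModule X Y := instMod X Y
  smul_comp X Y Z c f g := by
    obtain ⟨a, rfl⟩ := hmk_surj f
    obtain ⟨b, rfl⟩ := hmk_surj g
    rw [← hmk_smul, ← hmk_comp, ← hmk_comp, ← hmk_smul, Linear.smul_comp]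
  comp_smul X Y Z f c g := by
    obtain ⟨a, rfl⟩ := hmk_surj f
    obtain ⟨b, rfl⟩ := hmk_surj g
    rw [← hmk_smul, ← hmk_comp, ← hmk_comp, ← hmk_smul, Linear.comp_smul]

/-- hmk as a linear map -/
def hmkL (k : Type) [Field k] [Linear k C] (X Y : Res Ti F) : (X.X 0 ⟶ Y.X 0) →ₗ[k] (X ⟶ Y) where
  toFun := hmk
  map_add' := hmk_add
  map_smul' c a := hmk_smul c a

theorem hmkL_surj (X Y : Res Ti F) : Function.Surjective (hmkL k X Y) := hmk_surj

theorem fd (hfin : ∀ X Y : C, FiniteDimensional k (X ⟶ Y)) (X Y : Res Ti F) :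
    FiniteDimensional k (X ⟶ Y) := by
  have := hfin (X.X 0) (Y.X 0)
  exact Module.Finite.of_surjective (hmkL k X Y) (hmkL_surj X Y)

theorem serreR
    (serre : ∀ X Y : C, Nonempty ((X ⟶ Y) ≃ₗ[k] Module.Dual k (Y ⟶ X⟦(2:ℤ)⟧)))
    (X Y : Res Ti F) : Nonempty ((X ⟶ Y) ≃ₗ[k] Module.Dual k (Y ⟶ X⟦(2:ℤ)⟧)) := by
  let e : (X.X (0+1))⟦(-1:ℤ)⟧⟦(1:ℤ)⟧ ≅ X.X (0+1) := shiftNegShift (X.X (0+1)) (1:ℤ)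
  obtain ⟨g, hg⟩ := (shiftFunctor C (1:ℤ)).map_surjective (e.hom ≫ X.γ 0 (0+1) rfl)
  obtain ⟨E1, -⟩ := exists_equivOfKer (hmkL k X Y) (Linear.leftComp k (Y.X 0) g) (hmkL_surj X Y)
    (fun c => by
      obtain ⟨u, hu⟩ := (X.syz 0 (0+1) rfl).exists_u (Y.perp 0) (e.inv ≫ c⟦(1:ℤ)⟧')
      refine ⟨u, (shiftFunctor C (1:ℤ)).map_injective ?_⟩
      rw [Linear.leftComp_apply, Functor.map_comp, hg, Category.assoc]
      rw [hu, Iso.hom_inv_id_assoc])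
    (fun u => by
      change hmk u = 0 ↔ g ≫ u = 0
      rw [hmk_eq_zero]
      constructor
      · intro h
        apply (shiftFunctor C (1:ℤ)).map_injective
        rw [Functor.map_comp, hg, Category.assoc, h.comp_shift_eq_zero _ (X.perp' _), comp_zero,
          Functor.map_zero]
      · intro h
        apply (X.syz 0 (0+1) rfl).mem_of'
        have := congrArg (fun t => e.inv ≫ t⟦(1:ℤ)⟧') h
        simpa [hg] using this)
  have s2 : (0 + 1 : ℤ) + 1 = 0 + 2 := by omega
  obtain ⟨E2, -⟩ := exists_equivOfKer (hmkL k Y (X⟦(2:ℤ)⟧))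
    (Linear.rightComp k (Y.X 0) (X.γ (0+1) (0+2) s2)) (hmkL_surj _ _)
    (fun c => by
      obtain ⟨u, hu⟩ := (X.syz (0+1) (0+2) s2).exists_v (Y.perp' 0) c
      exact ⟨u, hu⟩)
    (fun u => by
      change hmk (X := Y) (Y := X⟦(2:ℤ)⟧) u = 0 ↔ _
      rw [hmk_eq_zero]
      constructor
      · intro h
        exact h.comp_eq_zero _ (X.perp _)
      · intro h
        exact (X.syz (0+1) (0+2) s2).mem_of _ h)
  obtain ⟨E3⟩ := serre ((X.X (0+1))⟦(-1:ℤ)⟧) (Y.X 0)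
  let i : (X.X (0+1))⟦(1:ℤ)⟧ ≅ (X.X (0+1))⟦(-1:ℤ)⟧⟦(2:ℤ)⟧ := (shiftFunctorAdd' C (-1) 2 1 (by norm_num)).app _
  let E4 := E2 ≪≫ₗ Linear.homCongr k (Iso.refl (Y.X 0)) i
  exact ⟨E1 ≪≫ₗ E3 ≪≫ₗ E4.dualMap⟩

theorem idemR [IsIdempotentComplete C] (hfin : ∀ X Y : C, FiniteDimensional k (X ⟶ Y)) :
    IsIdempotentComplete (Res Ti F) where
  idempotents_split X p hp := by
    obtain ⟨a, rfl⟩ := hmk_surj p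
    rw [← hmk_comp, hmk_eq] at hp
    have : FiniteDimensional k (End (X.X 0)) := hfin _ _
    obtain ⟨g, h, hg, hgh⟩ := exists_idem (k := k) (R := End (X.X 0)) a
    change X.X 0 ⟶ X.X 0 at g h
    change g ≫ g = g at hg
    change g = a + h ≫ (a ≫ a - a) at hgh
    have hI : IsI Ti (a - g) := by
      have e : a - g = -(h ≫ (a ≫ a - a)) := by
        nth_rw 1 [hgh]; abel
      rw [e]
      exact (hp.compl _).neg
    obtain ⟨Y, i, r, h1, h2⟩ := IsIdempotentComplete.idempotents_split (X.X 0) g hg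
    obtain ⟨Y, i, r, h1, h2⟩ := exists_res_ind F (Ti := Ti) Y (fun f => by
        rw [← Category.id_comp f, ← h1, Category.assoc, X.perp' 0 (r ≫ f), comp_zero])
      (p := fun Y => ∃ (i : Y ⟶ X.X 0) (r : X.X 0 ⟶ Y), i ≫ r = 𝟙 Y ∧ r ≫ i = g) ⟨i, r, h1, h2⟩
    refine ⟨Y, hmk i, hmk r, ?_, ?_⟩
    · rw [← hmk_comp, h1, hmk_id]
    · rw [← hmk_comp, h2]
      exact (hmk_eq.2 hI).symm

end Res
end Part5
end IYRed
namespace IYRed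
open Limits Pretriangulated Preadditive ZeroObject

section Part6
variable {C : Type} [Category.{0} C] [Preadditive C]
  [HasShift C ℤ] [∀ n : ℤ, (shiftFunctor C n).Additive]
  [HasZeroObject C] [Pretriangulated C]
  {Q : Type} [Category.{0} Q] [Preadditive Q]
  {Ti : C} {F : C ⥤ Q} [hSet : Setup Ti F] {k : Type} [Field k] [Linear k C]

theorem IsI.split [HasBinaryBiproducts C] {T T' : C} (hdec : T ≅ Ti ⊞ T') {A B : C} {f : A ⟶ B}
    (hf : IsI T f) : ∃ f1 f2, f = f1 + f2 ∧ IsI Ti f1 ∧ IsI T' f2 := by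
  refine IsI.ind (p := fun f => ∃ f1 f2, f = f1 + f2 ∧ IsI Ti f1 ∧ IsI T' f2) ?_ ?_ ?_ ?_ hf
  · exact ⟨0, 0, by simp, IsI.zero, IsI.zero⟩
  · rintro _ _ ⟨f1, f2, rfl, h1, h2⟩ ⟨g1, g2, rfl, h3, h4⟩
    exact ⟨f1 + g1, f2 + g2, by abel, h1.add h3, h2.add h4⟩
  · rintro _ ⟨f1, f2, rfl, h1, h2⟩
    exact ⟨-f1, -f2, by abel, h1.neg, h2.neg⟩
  · intro u v
    refine ⟨(u ≫ hdec.hom ≫ biprod.fst) ≫ (biprod.inl ≫ hdec.inv ≫ v),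
      (u ≫ hdec.hom ≫ biprod.snd) ≫ (biprod.inr ≫ hdec.inv ≫ v), ?_, IsI.of _ _, IsI.of _ _⟩
    have : u ≫ v = u ≫ hdec.hom ≫ (𝟙 _) ≫ hdec.inv ≫ v := by simp
    rw [this, ← biprod.total]
    simp only [add_comp, comp_add, Category.assoc]

namespace Res
theorem ctR [HasBinaryBiproducts C] {T : C} 
    (hct : ∀ X : C, (∀ f : T ⟶ X⟦(1:ℤ)⟧, f = 0) ↔ IsI T (𝟙 X)) (R : Res Ti F)
    (hdec : T ≅ Ti ⊞ R.X 0) (X : Res Ti F) :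
    (∀ f : R ⟶ X⟦(1:ℤ)⟧, f = 0) ↔ IsI R (𝟙 X) := by
  constructor
  · intro h
    have h1 : ∀ c : R.X 0 ⟶ (X.X 0)⟦(1:ℤ)⟧, c = 0 := by
      intro c
      obtain ⟨v, hv⟩ := (X.syz 0 (0+1) rfl).exists_v (R.perp' _) c
      rw [← hv]
      exact hms_eq_zero_iff.1 (h (hms v))
    have h2 : IsI T (𝟙 (X.X 0)) := by
      rw [← hct]
      intro f
      have : hdec.inv ≫ f = 0 := by
        apply biprod.hom_ext'
        · rw [X.perp 0 (biprod.inl ≫ hdec.inv ≫ f), comp_zero]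
        · rw [h1 (biprod.inr ≫ hdec.inv ≫ f), comp_zero]
      rw [← hdec.hom_inv_id_assoc f, this, comp_zero]
    obtain ⟨f1, f2, h3, h4, h5⟩ := h2.split hdec
    rw [← hmk_id, h3, hmk_add, hmk_eq_zero.2 h4, zero_add]
    refine IsI.ind (p := fun f2 => IsI R (hmk (X := X) (Y := X) f2)) ?_ ?_ ?_ ?_ h5
    · rw [hmk_eq_zero.2 IsI.zero]; exact IsI.zero
    · intro f g hf hg; rw [hmk_add]; exact hf.add hg
    · intro f hf; rw [hmk_neg]; exact hf.neg
    · intro u v; rw [hmk_comp (Y := R)]; exact IsI.of _ _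
  · intro h f
    refine eq_zero_of_add_shift h ?_ f
    intro x
    obtain ⟨d, rfl⟩ := hms_surj x
    rw [hms_eq_zero_iff]
    have h0 := (hct T).2 (by rw [← Category.comp_id (𝟙 T)]; exact IsI.of _ _)
    set y := d ≫ R.γ 0 (0+1) rfl
    have := h0 (hdec.hom ≫ biprod.snd ≫ y ≫ (biprod.inr ≫ hdec.inv)⟦(1:ℤ)⟧')
    have h6 : (biprod.inr ≫ hdec.inv) ≫ (hdec.hom ≫ biprod.snd ≫ y ≫ (biprod.inr ≫ hdec.inv)⟦(1:ℤ)⟧')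
       ≫ (hdec.hom ≫ biprod.snd)⟦(1:ℤ)⟧' = y := by
      simp only [Category.assoc, ← Functor.map_comp, Iso.inv_hom_id_assoc, biprod.inr_snd_assoc,
        biprod.inr_snd, CategoryTheory.Functor.map_id, Category.comp_id]
    rw [← h6, this, zero_comp, comp_zero]

/-- the algebra map -/
def Psi (k : Type) [Field k] [Linear k C] (R : Res Ti F) : End (R.X 0) →ₐ[k] End R :=
  AlgHom.ofLinearMap (hmkL k R R) (hmk_id R) (fun a b => hmk_comp (X := R) (Y := R) (Z := R) b a)

end Res

section
variable [HasBinaryBiproducts C] {T T' : C} (hdec : T ≅ Ti ⊞ T')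

/-- the ideal -/
abbrev J : TwoSidedIdeal (End T) := TwoSidedIdeal.span
  ({hdec.hom ≫ biprod.fst ≫ biprod.inl ≫ hdec.inv} : Set (End T))

theorem J_mem {x : End T} : x ∈ J hdec ↔ IsI Ti (x : T ⟶ T) := by
  constructor
  · intro hx
    let K : TwoSidedIdeal (End T) := TwoSidedIdeal.mk' {x : End T | IsI Ti (x : T ⟶ T)}
      IsI.zero (fun h h' => IsI.add h h') (fun h => IsI.neg h)
      (fun {x y} h => IsI.compr (C := C) h x) (fun {x y} h => IsI.compl (C := C) y h)
    have := TwoSidedIdeal.mem_span_iff.1 hx K (by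
      rintro _ rfl
      rw [SetLike.mem_coe, TwoSidedIdeal.mem_mk']
      have : IsI Ti ((hdec.hom ≫ biprod.fst) ≫ (biprod.inl ≫ hdec.inv)) := IsI.of _ _
      change IsI Ti (hdec.hom ≫ biprod.fst ≫ biprod.inl ≫ hdec.inv)
      simpa only [Category.assoc] using this)
    rw [TwoSidedIdeal.mem_mk'] at this
    exact this
  · intro hx
    refine IsI.ind (p := fun x : T ⟶ T => (show End T from x) ∈ J hdec) ?_ ?_ ?_ ?_ hx
    · exact (J hdec).zero_mem
    · intro f g hf hg; exact (J hdec).add_mem hf hg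
    · intro f hf; exact (J hdec).neg_mem hf
    · intro u v
      have h1 : (hdec.hom ≫ biprod.fst ≫ biprod.inl ≫ hdec.inv : T ⟶ T) ∈ J hdec :=
        TwoSidedIdeal.subset_span rfl
      have h2 := (J hdec).mul_mem_left (show End T from hdec.hom ≫ biprod.fst ≫ v) _ h1
      have h3 := (J hdec).mul_mem_right _ (show End T from u ≫ biprod.inl ≫ hdec.inv) h2
      have e : (u ≫ v : T ⟶ T) = (show End T from hdec.hom ≫ biprod.fst ≫ v) *
         (show End T from (hdec.hom ≫ biprod.fst ≫ biprod.inl ≫ hdec.inv : T ⟶ T)) *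
         (show End T from u ≫ biprod.inl ≫ hdec.inv) := by
        change u ≫ v = (u ≫ biprod.inl ≫ hdec.inv) ≫ (hdec.hom ≫ biprod.fst ≫ biprod.inl ≫ hdec.inv) ≫
          hdec.hom ≫ biprod.fst ≫ v
        simp
      exact e ▸ h3

theorem e_eq : hdec.hom ≫ biprod.snd ≫ biprod.inr ≫ hdec.inv =
    𝟙 T - hdec.hom ≫ biprod.fst ≫ biprod.inl ≫ hdec.inv := by
  have := biprod.total (X := Ti) (Y := T')
  have h2 := congrArg (fun t => hdec.hom ≫ t ≫ hdec.inv) this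
  simp only [add_comp, comp_add, Category.assoc, Category.id_comp, Iso.hom_inv_id] at h2
  rw [← h2]; abel

/-- compression -/
def cmp (f : T' ⟶ T') : T ⟶ T := hdec.hom ≫ biprod.snd ≫ f ≫ biprod.inr ≫ hdec.inv

theorem mk_eq {x y : T ⟶ T} : ((J hdec).ringCon.mk' x = (J hdec).ringCon.mk' y) ↔ IsI Ti (x - y) := by
  rw [← J_mem hdec, ← TwoSidedIdeal.rel_iff]
  exact (J hdec).ringCon.eq

theorem cmp_add (f g : T' ⟶ T') : cmp hdec (f + g) = cmp hdec f + cmp hdec g := by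
  simp only [cmp, add_comp, comp_add]
theorem cmp_smul (c : k) (f : T' ⟶ T') : cmp hdec (c • f) = c • cmp hdec f := by
  simp only [cmp, Linear.smul_comp, Linear.comp_smul]
theorem cmp_comp (f g : T' ⟶ T') : cmp hdec (f ≫ g) = cmp hdec f ≫ cmp hdec g := by
  simp [cmp]

/-- the algebra map -/
def Phi (k : Type) [Field k] [Linear k C] : End T' →ₐ[k] (J hdec).ringCon.Quotient :=
  AlgHom.ofLinearMap
    { toFun := fun f => (J hdec).ringCon.mk' (cmp hdec f)
      map_add' := fun f g => congrArg (J hdec).ringCon.mk' (cmp_add hdec f g)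
      map_smul' := fun c f => congrArg (J hdec).ringCon.mk' (cmp_smul hdec c f) }
    (by
      refine (mk_eq hdec (x := cmp hdec (𝟙 T')) (y := 𝟙 T)).2 ?_
      have : cmp hdec (𝟙 T') = hdec.hom ≫ biprod.snd ≫ biprod.inr ≫ hdec.inv := by simp [cmp]
      rw [this, e_eq, sub_sub_cancel_left]
      have := (IsI.of (hdec.hom ≫ biprod.fst) (biprod.inl ≫ hdec.inv)).neg
      simpa only [Category.assoc] using this)
    (fun f g => congrArg (J hdec).ringCon.mk' (cmp_comp hdec g f))

theorem Phi_apply (f : End T') : Phi hdec k f = (J hdec).ringCon.mk' (cmp hdec f) := rfl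

theorem Phi_surj : Function.Surjective (Phi hdec k) := by
  intro b
  obtain ⟨a, rfl⟩ := (J hdec).ringCon.mk'_surjective b
  change T ⟶ T at a
  refine ⟨biprod.inr ≫ hdec.inv ≫ a ≫ hdec.hom ≫ biprod.snd, ?_⟩
  refine (mk_eq hdec).2 ?_
  set e := hdec.hom ≫ biprod.fst ≫ biprod.inl ≫ hdec.inv with he
  have hI : IsI Ti e := by
    have := (IsI.of (hdec.hom ≫ biprod.fst) (biprod.inl ≫ hdec.inv))
    simpa only [Category.assoc] using this
  have : cmp hdec (biprod.inr ≫ hdec.inv ≫ a ≫ hdec.hom ≫ biprod.snd) = (𝟙 T - e) ≫ a ≫ (𝟙 T - e) := by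
    rw [he, ← e_eq]; simp [cmp]
  have h2 : (𝟙 T - e) ≫ a ≫ (𝟙 T - e) - a = -(e ≫ a ≫ (𝟙 T - e)) - a ≫ e := by
    simp only [sub_comp, comp_sub, Category.id_comp, Category.comp_id]; abel
  rw [this, h2]
  exact (hI.compr _).neg.sub (hI.compl _)

theorem Phi_ker (f : End T') : Phi hdec k f = 0 ↔ IsI Ti (f : T' ⟶ T') := by
  refine (mk_eq hdec (x := cmp hdec f) (y := 0)).trans ?_
  rw [sub_zero]
  constructor
  · intro h
    have := (h.compl (biprod.inr ≫ hdec.inv)).compr (hdec.hom ≫ biprod.snd)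
    have e : ((biprod.inr ≫ hdec.inv) ≫ cmp hdec f) ≫ (hdec.hom ≫ biprod.snd) = f := by
      simp [cmp]
    rwa [e] at this
  · intro h
    exact ((h.compr (biprod.inr ≫ hdec.inv)).compl _).compl _
end
end Part6
end IYRed
namespace IYRed
open Limits Pretriangulated Preadditive ZeroObject

section Part7
variable {C : Type} [Category.{0} C] [Preadditive C]

/-- the congruence -/
def rel (Ti : C) : HomRel C := fun _ _ f g => IsI Ti (f - g)

instance (Ti : C) : Congruence (rel Ti) where
  comp_left f g g' h := by
    change IsI Ti (_ - _)
    rw [← comp_sub]; exact IsI.compl f h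
  comp_right g h := by
    change IsI Ti (_ - _)
    rw [← sub_comp]; exact IsI.compr h g
  equivalence :=
    { refl := fun f => by change IsI Ti (f - f); rw [sub_self]; exact IsI.zero
      symm := fun {f g} h => by change IsI Ti (g - f); rw [← neg_sub]; exact IsI.neg h
      trans := fun {f g h} h1 h2 => by
        change IsI Ti (f - h); rw [← sub_add_sub_cancel f g h]; exact IsI.add h1 h2 }

theorem rel_add (Ti : C) : ∀ ⦃X Y : C⦄ (f₁ f₂ g₁ g₂ : X ⟶ Y) (_ : rel Ti f₁ f₂) (_ : rel Ti g₁ g₂),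
    rel Ti (f₁ + g₁) (f₂ + g₂) := by
  intro X Y f₁ f₂ g₁ g₂ h h'
  change IsI Ti _
  rw [add_sub_add_comm]; exact IsI.add h h'

/-- The quotient -/
abbrev Qc (Ti : C) := CategoryTheory.Quotient (rel Ti)
instance (Ti : C) : Preadditive (Qc Ti) := CategoryTheory.Quotient.preadditive _ (rel_add Ti)
/-- functor -/
abbrev Fc (Ti : C) : C ⥤ Qc Ti := CategoryTheory.Quotient.functor (rel Ti)

variable [HasShift C ℤ] [∀ n : ℤ, (shiftFunctor C n).Additive]
  [HasZeroObject C] [Pretriangulated C] [HasFiniteBiproducts C] [HasBinaryBiproducts C]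
  {k : Type} [Field k] [Linear k C]

theorem setup (homFinite : ∀ X Y : C, FiniteDimensional k (X ⟶ Y))
    (serre : ∀ X Y : C, Nonempty ((X ⟶ Y) ≃ₗ[k] Module.Dual k (Y ⟶ X⟦(2:ℤ)⟧)))
    (Ti : C) (rigid : ∀ f : Ti ⟶ Ti⟦(1:ℤ)⟧, f = 0) : Setup Ti (Fc Ti) where
  full := inferInstance
  additive := CategoryTheory.Quotient.functor_additive _ (rel_add Ti)
  ker {A B} u := by
    have : (Fc Ti).Additive := CategoryTheory.Quotient.functor_additive _ (rel_add Ti)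
    rw [← (Fc Ti).map_zero, CategoryTheory.Quotient.functor_map_eq_iff]
    change IsI Ti (u - 0) ↔ _
    rw [sub_zero]
  symm A := by
    have key : (∀ f : A ⟶ Ti⟦(1:ℤ)⟧, f = 0) ↔ (∀ f : Ti⟦(1:ℤ)⟧ ⟶ A⟦(2:ℤ)⟧, f = 0) := by
      obtain ⟨E⟩ := serre A (Ti⟦(1:ℤ)⟧)
      rw [← subsingleton_iff_forall_eq, ← subsingleton_iff_forall_eq, E.toEquiv.subsingleton_congr]
      exact Module.subsingleton_dual_iff k
    rw [key]
    let i : A⟦(2:ℤ)⟧ ≅ A⟦(1:ℤ)⟧⟦(1:ℤ)⟧ := (shiftFunctorAdd' C 1 1 2 (by norm_num)).app A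
    constructor
    · intro h f
      obtain ⟨g, hg⟩ := (shiftFunctor C (1:ℤ)).map_surjective (f ≫ i.hom)
      rw [h g, Functor.map_zero] at hg
      rw [← cancel_mono i.hom, zero_comp, hg]
    · intro h f
      apply (shiftFunctor C (1:ℤ)).map_injective
      have := h (f⟦(1:ℤ)⟧' ≫ i.inv)
      rw [← cancel_mono i.inv, this, Functor.map_zero, zero_comp]
  rigid := rigid
  approxL A := by
    have := homFinite A Ti
    let b := Module.finBasis k (A ⟶ Ti)
    refine ⟨⨁ (fun _ : Fin (Module.finrank k (A ⟶ Ti)) => Ti), biproduct.lift b, isI_id_biprod _, fun s => ?_⟩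
    refine ⟨biproduct.desc (fun j => (b.repr s j) • 𝟙 Ti), ?_⟩
    rw [biproduct.lift_desc]
    conv_lhs => rw [← b.sum_repr s]
    simp
  approxR A := by
    have := homFinite Ti A
    let b := Module.finBasis k (Ti ⟶ A)
    refine ⟨⨁ (fun _ : Fin (Module.finrank k (Ti ⟶ A)) => Ti), biproduct.desc b, isI_id_biprod _, fun s => ?_⟩
    refine ⟨biproduct.lift (fun j => (b.repr s j) • 𝟙 Ti), ?_⟩
    rw [biproduct.lift_desc]
    conv_lhs => rw [← b.sum_repr s]
    simp

instance resBip (Ti : C) [Setup Ti (Fc Ti)] : HasFiniteBiproducts (Res Ti (Fc Ti)) := inferInstance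

end Part7
end IYRed

/-- Let `C` be a Hom-finite, idempotent complete, `k`-linear
2-Calabi-Yau triangulated category, `T` a cluster-tilting object in `C`, and
`A = End_C(T)` the associated 2-Calabi-Yau tilted algebra. Let `T ≅ T_i ⊞ T'` with `T_i`
indecomposable, let `e_i ∈ A` be the corresponding idempotent and `J = A e_i A`. Then the
quotient `B = A/J` is again a 2-Calabi-Yau tilted algebra; explicitly,
`B ≅ End_{C'}(T/T_i)` where `C' = T_i^⊥/(T_i)` is the Iyama-Yoshino reduction of `C` at
`T_i`: there is a surjective ring homomorphism `End_C(T') → B` whose kernel is exactly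
the ideal of endomorphisms of `T'` factoring through `add T_i`. -/
theorem reduction_of_two_CY_tilted
    (k : Type) [Field k] [IsAlgClosed k]
    (C : Type) [Category.{0} C] [Preadditive C] [Linear k C] [HasShift C ℤ]
    [Limits.HasZeroObject C] [∀ n : ℤ, (shiftFunctor C n).Additive] [Pretriangulated C]
    [Limits.HasFiniteBiproducts C] [Limits.HasBinaryBiproducts C] [IsIdempotentComplete C]
    (homFinite : ∀ X Y : C, FiniteDimensional k (X ⟶ Y))
    -- the 2-Calabi-Yau property
    (serre : ∀ X Y : C, Nonempty ((X ⟶ Y) ≃ₗ[k] Module.Dual k (Y ⟶ X⟦(2:ℤ)⟧)))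
    -- `T` is a cluster-tilting object
    (T : C)
    (hct : ∀ X : C, (∀ f : T ⟶ X⟦(1:ℤ)⟧, f = 0) ↔
      ∃ (n : ℕ) (s : X ⟶ ⨁ (fun _ : Fin n => T)) (r : (⨁ (fun _ : Fin n => T)) ⟶ X),
        s ≫ r = 𝟙 X)
    -- a decomposition `T ≅ T_i ⊞ T'` with `T_i` indecomposable
    (Ti T' : C) (hdec : T ≅ Ti ⊞ T')
    (hTi : ¬ Limits.IsZero Ti ∧
      ∀ f : Ti ⟶ Ti, f ≫ f = f → f = 0 ∨ f = 𝟙 Ti) :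
    -- with `e_i` the idempotent of `A = End T` given by the summand `T_i`,
    -- and `B = A / A e_i A`:
    IsCYTilted k
      ((TwoSidedIdeal.span
        ({hdec.hom ≫ Limits.biprod.fst ≫ Limits.biprod.inl ≫ hdec.inv} : Set (End T))).ringCon.Quotient) ∧
    ∃ φ : End T' →+*
      (TwoSidedIdeal.span
        ({hdec.hom ≫ Limits.biprod.fst ≫ Limits.biprod.inl ≫ hdec.inv} : Set (End T))).ringCon.Quotient,
      Function.Surjective φ ∧
      ∀ f : End T', φ f = 0 ↔
        ∃ (n : ℕ) (u : T' ⟶ ⨁ (fun _ : Fin n => Ti))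
          (v : (⨁ (fun _ : Fin n => Ti)) ⟶ T'), u ≫ v = f := by
  have hct' : ∀ X : C, (∀ f : T ⟶ X⟦(1:ℤ)⟧, f = 0) ↔ IYRed.IsI T (𝟙 X) := fun X =>
    (hct X).trans (IYRed.isI_iff_biprod (𝟙 X)).symm
  have hTT : ∀ f : T ⟶ T⟦(1:ℤ)⟧, f = 0 :=
    (hct' T).2 (by rw [← Category.comp_id (𝟙 T)]; exact IYRed.IsI.of _ _)
  have hT2 : ∀ f : T ⟶ (Ti ⊞ T')⟦(1:ℤ)⟧, f = 0 := fun f => by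
    have := hTT (f ≫ hdec.inv⟦(1:ℤ)⟧')
    rwa [Preadditive.IsIso.comp_right_eq_zero] at this
  have hTi' : ∀ (W : C) (i : Ti ⊞ T' ⟶ W) (s : W ⟶ Ti ⊞ T'), s ≫ i = 𝟙 W →
      ∀ f : Ti ⟶ W⟦(1:ℤ)⟧, f = 0 := by
    intro W i s h f
    have h1 := hT2 (hdec.hom ≫ Limits.biprod.fst ≫ f ≫ s⟦(1:ℤ)⟧')
    have h2 : (Limits.biprod.inl ≫ hdec.inv) ≫
        (hdec.hom ≫ Limits.biprod.fst ≫ f ≫ s⟦(1:ℤ)⟧') ≫ i⟦(1:ℤ)⟧' = f := by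
      simp only [Category.assoc, ← Functor.map_comp, h, Iso.inv_hom_id_assoc,
        Limits.biprod.inl_fst_assoc, CategoryTheory.Functor.map_id, Category.comp_id]
    rw [← h2, h1, Limits.zero_comp, Limits.comp_zero]
  have hS : IYRed.Setup Ti (IYRed.Fc Ti) := IYRed.setup homFinite serre Ti
    (hTi' Ti Limits.biprod.fst Limits.biprod.inl Limits.biprod.inl_fst)
  obtain ⟨R, hR⟩ := IYRed.exists_res (IYRed.Fc Ti) T'
    (hTi' T' Limits.biprod.snd Limits.biprod.inr Limits.biprod.inr_snd)
  subst hR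
  refine ⟨⟨?_⟩, (IYRed.Phi hdec k).toRingHom, IYRed.Phi_surj hdec, fun f => ?_⟩
  · have idm : IsIdempotentComplete (IYRed.Res Ti (IYRed.Fc Ti)) := IYRed.Res.idemR homFinite
    exact
      { C := IYRed.Res Ti (IYRed.Fc Ti)
        homFinite := IYRed.Res.fd homFinite
        serre := IYRed.Res.serreR serre
        T := R
        clusterTilting := fun X => (IYRed.Res.ctR hct' R hdec X).trans
          (IYRed.isI_iff_biprod (𝟙 X))
        algIso := IYRed.exists_algEquiv (IYRed.Phi hdec k) (IYRed.Res.Psi k R)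
          (IYRed.Phi_surj hdec) IYRed.Res.hmk_surj
          (fun f => (IYRed.Phi_ker hdec f).trans IYRed.Res.hmk_eq_zero.symm) }
  · exact (IYRed.Phi_ker (k := k) hdec f).trans (IYRed.isI_iff_biprod f)
end
end

section
/- Let A be a 2-Calabi-Yau tilted algebra, J = A e_i A, and let X be a Cohen-Macaulay A-module with Ext^1_A(J, X) = 0 = Ext^1_A(X, J). If f_X : J_X → X is an add-J approximation of X, then the cokernel F(X) = X / im f_X is a Cohen-Macaulay module over B = A/J, i.e., Ext^1_B(F(X), B) = 0. -/
noncomputable section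

open CategoryTheory Opposite DirectSum MulOpposite

/-- `M` is a module over `B = A/AeA`: the ideal `J = AeA` acts trivially. -/
def JTriv {A : Type} [Ring A] (e : A) (M : Type) [AddCommGroup M]
    [Module Aᵐᵒᵖ M] : Prop :=
  ∀ a ∈ genIdeal e, ∀ m : M, (MulOpposite.op a) • m = 0

/-- `N` belongs to `add J`, i.e. is a direct summand of a finite direct sum of
copies of `J = AeA`. -/
def InAddJ {A : Type} [Ring A] (e : A) (N : ModuleCat.{0} Aᵐᵒᵖ) : Prop :=
  ∃ (n : ℕ) (s : N →ₗ[Aᵐᵒᵖ] (Fin n → ↥(genIdeal e)))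
    (r : (Fin n → ↥(genIdeal e)) →ₗ[Aᵐᵒᵖ] N), r ∘ₗ s = LinearMap.id

/-- `f : J_X → X` is an `add J`-approximation: `J_X ∈ add J` and every map from a
module of `add J` to `X` factors through `f`. -/
def IsAddJApprox {A : Type} [Ring A] (e : A) (JX X : ModuleCat.{0} Aᵐᵒᵖ)
    (f : JX →ₗ[Aᵐᵒᵖ] X) : Prop :=
  InAddJ e JX ∧ ∀ (Z : ModuleCat.{0} Aᵐᵒᵖ), InAddJ e Z →
    ∀ g : Z →ₗ[Aᵐᵒᵖ] X, ∃ h : Z →ₗ[Aᵐᵒᵖ] JX, f ∘ₗ h = g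

section CatLevel

set_option linter.unusedSectionVars false

open Pretriangulated Limits

theorem rankLemma {k : Type} [Field k] {M V U1 M1 M1' U1' V' M' : Type}
    [AddCommGroup M] [AddCommGroup V] [AddCommGroup U1] [AddCommGroup M1]
    [AddCommGroup M'] [AddCommGroup V'] [AddCommGroup U1'] [AddCommGroup M1']
    [Module k M] [Module k V] [Module k U1] [Module k M1]
    [Module k M'] [Module k V'] [Module k U1'] [Module k M1']
    [FiniteDimensional k M] [FiniteDimensional k V] [FiniteDimensional k U1]
    [FiniteDimensional k M1]
    [FiniteDimensional k M'] [FiniteDimensional k V'] [FiniteDimensional k U1']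
    [FiniteDimensional k M1']
    (a1 : M →ₗ[k] V) (a2 : V →ₗ[k] U1) (a3 : U1 →ₗ[k] M1)
    (b1 : M1' →ₗ[k] U1') (b2 : U1' →ₗ[k] V') (b3 : V' →ₗ[k] M')
    (h1 : Function.Injective a1) (h12 : Function.Exact a1 a2) (h23 : Function.Exact a2 a3)
    (g1 : Function.Injective b1) (g12 : Function.Exact b1 b2) (g23 : Function.Exact b2 b3)
    (g3 : Function.Surjective b3)
    (eM : Module.finrank k M = Module.finrank k M')
    (eV : Module.finrank k V = Module.finrank k V')
    (eU : Module.finrank k U1 = Module.finrank k U1')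
    (eN : Module.finrank k M1 = Module.finrank k M1') : Function.Surjective a3 := by
  have r1 := LinearMap.finrank_range_of_inj h1
  have r2 := LinearMap.finrank_range_add_finrank_ker a2
  have r3 := LinearMap.finrank_range_add_finrank_ker a3
  rw [LinearMap.exact_iff.1 h12] at r2
  rw [LinearMap.exact_iff.1 h23] at r3
  have s1 := LinearMap.finrank_range_of_inj g1
  have s2 := LinearMap.finrank_range_add_finrank_ker b2
  have s3 := LinearMap.finrank_range_add_finrank_ker b3
  rw [LinearMap.exact_iff.1 g12] at s2
  rw [LinearMap.exact_iff.1 g23, LinearMap.range_eq_top.2 g3, finrank_top] at s3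
  rw [← LinearMap.range_eq_top]
  apply Submodule.eq_top_of_finrank_eq
  omega

variable {k : Type} [Field k] {C : Type} [Category.{0} C] [Preadditive C] [Linear k C]
  [HasShift C ℤ] [HasZeroObject C] [∀ n : ℤ, (shiftFunctor C n).Additive] [Pretriangulated C]
  [HasFiniteBiproducts C]

section Tri

variable {X Y Z W : C} {f : X ⟶ Y} {g : Y ⟶ Z} {h : Z ⟶ X⟦(1:ℤ)⟧}

theorem tr_z12 (ht : Triangle.mk f g h ∈ distTriang C) : f ≫ g = 0 :=
  comp_distTriang_mor_zero₁₂ _ ht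
theorem tr_z23 (ht : Triangle.mk f g h ∈ distTriang C) : g ≫ h = 0 :=
  comp_distTriang_mor_zero₂₃ _ ht
theorem tr_z31 (ht : Triangle.mk f g h ∈ distTriang C) : h ≫ f⟦(1:ℤ)⟧' = 0 :=
  comp_distTriang_mor_zero₃₁ _ ht
theorem tr_c1 (ht : Triangle.mk f g h ∈ distTriang C) (a : W ⟶ X⟦(1:ℤ)⟧)
    (ha : a ≫ f⟦(1:ℤ)⟧' = 0) : ∃ b : W ⟶ Z, a = b ≫ h :=
  Triangle.coyoneda_exact₁ _ ht a ha
theorem tr_c2 (ht : Triangle.mk f g h ∈ distTriang C) (a : W ⟶ Y)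
    (ha : a ≫ g = 0) : ∃ b : W ⟶ X, a = b ≫ f :=
  Triangle.coyoneda_exact₂ _ ht a ha
theorem tr_c3 (ht : Triangle.mk f g h ∈ distTriang C) (a : W ⟶ Z)
    (ha : a ≫ h = 0) : ∃ b : W ⟶ Y, a = b ≫ g :=
  Triangle.coyoneda_exact₃ _ ht a ha
theorem tr_y2 (ht : Triangle.mk f g h ∈ distTriang C) (a : Y ⟶ W)
    (ha : f ≫ a = 0) : ∃ b : Z ⟶ W, a = g ≫ b :=
  Triangle.yoneda_exact₂ _ ht a ha
theorem tr_y3 (ht : Triangle.mk f g h ∈ distTriang C) (a : Z ⟶ W)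
    (ha : g ≫ a = 0) : ∃ b : X⟦(1:ℤ)⟧ ⟶ W, a = h ≫ b :=
  Triangle.yoneda_exact₃ _ ht a ha
theorem tr_y4 (ht : Triangle.mk f g h ∈ distTriang C) (a : X⟦(1:ℤ)⟧ ⟶ W)
    (ha : h ≫ a = 0) : ∃ b : Y⟦(1:ℤ)⟧ ⟶ W, a = f⟦(1:ℤ)⟧' ≫ b := by
  obtain ⟨b, hb⟩ : ∃ b : Y⟦(1:ℤ)⟧ ⟶ W, a = (-f⟦(1:ℤ)⟧') ≫ b :=
    Triangle.yoneda_exact₃ _ (rot_of_distTriang _ ht) a ha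
  exact ⟨-b, by rw [hb]; simp⟩

end Tri

/-- vanishing of all maps -/
def HZ (X Y : C) : Prop := ∀ f : X ⟶ Y, f = 0

theorem HZ.shift {X Y : C} (h : HZ X Y) : HZ (X⟦(1:ℤ)⟧) (Y⟦(1:ℤ)⟧) := by
  intro f
  obtain ⟨g, rfl⟩ := (shiftFunctor C (1:ℤ)).map_surjective f
  rw [h g, Functor.map_zero]

theorem HZ.unshift {X Y : C} (h : HZ (X⟦(1:ℤ)⟧) (Y⟦(1:ℤ)⟧)) : HZ X Y := by
  intro f
  apply (shiftFunctor C (1:ℤ)).map_injective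
  rw [h (f⟦(1:ℤ)⟧'), Functor.map_zero]

abbrev pw (T : C) (n : ℕ) : C := biproduct (fun _ : Fin n => T)

theorem HZ.pw_right {X Y : C} (h : HZ X Y) (n : ℕ) : HZ X (pw Y n) := by
  intro f
  apply biproduct.hom_ext
  intro j
  rw [h (f ≫ _), zero_comp]

theorem HZ.pw_left {X Y : C} (h : HZ X Y) (n : ℕ) : HZ (pw X n) Y := by
  intro f
  apply biproduct.hom_ext'
  intro j
  rw [h (_ ≫ f), comp_zero]

theorem HZ.retr_left {X Y Z : C} (h : HZ X Y) (s : Z ⟶ X) (r : X ⟶ Z) (e : s ≫ r = 𝟙 Z) :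
    HZ Z Y := by
  intro f
  rw [← Category.id_comp f, ← e, Category.assoc, h (r ≫ f), comp_zero]

theorem HZ.retr_right {X Y Z : C} (h : HZ X Y) (s : Z ⟶ Y) (r : Y ⟶ Z) (e : s ≫ r = 𝟙 Z) :
    HZ X Z := by
  intro f
  rw [← Category.comp_id f, ← e, ← Category.assoc, h (f ≫ s), zero_comp]

/-- being in add T -/
def AddT (T X : C) : Prop := ∃ (n : ℕ) (s : X ⟶ pw T n) (r : pw T n ⟶ X), s ≫ r = 𝟙 X

theorem AddT.pw (T : C) (n : ℕ) : AddT T (pw T n) := ⟨n, 𝟙 _, 𝟙 _, by simp⟩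

theorem AddT.pw_retract {T P : C} (i : P ⟶ T) (p : T ⟶ P) (h : i ≫ p = 𝟙 P) (n : ℕ) :
    AddT T (_root_.pw P n) :=
  ⟨n, biproduct.map (fun _ => i), biproduct.map (fun _ => p), by
    apply biproduct.hom_ext
    intro j
    simp [h]⟩

theorem AddT.hz_left {T X Y : C} (h : AddT T X) (hz : HZ T Y) : HZ X Y := by
  obtain ⟨n, s, r, e⟩ := h
  exact (hz.pw_left n).retr_left s r e

theorem AddT.hz_shift_left {T X Y : C} (h : AddT T X) (hz : HZ (T⟦(1:ℤ)⟧) (Y⟦(1:ℤ)⟧)) :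
    HZ (X⟦(1:ℤ)⟧) (Y⟦(1:ℤ)⟧) :=  (h.hz_left hz.unshift).shift

theorem AddT.hz_right {T X Y : C} (h : AddT T X) (hz : HZ Y (T⟦(1:ℤ)⟧)) : HZ Y (X⟦(1:ℤ)⟧) := by
  obtain ⟨n, s, r, e⟩ := h
  have : HZ Y ((_root_.pw T n)⟦(1:ℤ)⟧) := by
    intro f
    have : f = f ≫ (∑ j, biproduct.π (fun _ : Fin n => T) j ≫ biproduct.ι (fun _ : Fin n => T) j)⟦(1:ℤ)⟧' := by
      rw [biproduct.total]; simp
    rw [this, Functor.map_sum, Preadditive.comp_sum]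
    apply Finset.sum_eq_zero
    intro j _
    rw [Functor.map_comp, ← Category.assoc, hz (f ≫ _), zero_comp]
  exact this.retr_right (s⟦(1:ℤ)⟧') (r⟦(1:ℤ)⟧') (by rw [← Functor.map_comp, e]; simp)

/-- approximations -/
theorem exists_approx (hf : ∀ X Y : C, FiniteDimensional k (X ⟶ Y)) (P M : C) :
    ∃ (n : ℕ) (f : pw P n ⟶ M), ∀ g : P ⟶ M, ∃ h : P ⟶ pw P n, h ≫ f = g := by
  have := hf P M
  let b := Module.finBasis k (P ⟶ M)
  refine ⟨_, biproduct.desc b, fun g => ⟨biproduct.lift (fun i => b.repr g i • 𝟙 P), ?_⟩⟩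
  rw [biproduct.lift_desc]
  simp [b.sum_repr]

theorem approx_pw {P R M : C} {f : R ⟶ M} (h : ∀ g : P ⟶ M, ∃ h : P ⟶ R, h ≫ f = g) (m : ℕ)
    (g : pw P m ⟶ M) : ∃ h : pw P m ⟶ R, h ≫ f = g := by
  choose c hc using h
  refine ⟨biproduct.desc (fun j => c (biproduct.ι (fun _ : Fin m => P) j ≫ g)), ?_⟩
  apply biproduct.hom_ext'
  intro j
  simp [hc]

variable (k) in
/-- Serre duality at the level of dimensions. -/
def SerreDim (C : Type) [Category.{0} C] [Preadditive C] [Linear k C] [HasShift C ℤ] : Prop :=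
    ∀ X Y : C, Module.finrank k (X ⟶ Y) = Module.finrank k (Y ⟶ X⟦(1:ℤ)⟧⟦(1:ℤ)⟧)

theorem serreDim_of (serre : ∀ X Y : C, Nonempty ((X ⟶ Y) ≃ₗ[k] Module.Dual k (Y ⟶ X⟦(2:ℤ)⟧))) :
    SerreDim k C := by
  intro X Y
  obtain ⟨s⟩ := serre X Y
  rw [s.finrank_eq, Subspace.dual_finrank_eq]
  let i : X⟦(2:ℤ)⟧ ≅ X⟦(1:ℤ)⟧⟦(1:ℤ)⟧ := (shiftFunctorAdd' C (1:ℤ) 1 2 (by norm_num)).app X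
  exact (LinearEquiv.ofLinearMap (Linear.rightComp k Y i.hom) (Linear.rightComp k Y i.inv)
    (by ext; simp) (by ext; simp)).finrank_eq

theorem lemS (hf : ∀ X Y : C, FiniteDimensional k (X ⟶ Y)) (hs : SerreDim k C) {Q M : C}
    (hQ : HZ Q (Q⟦(1:ℤ)⟧)) (h : M ⟶ Q⟦(1:ℤ)⟧⟦(1:ℤ)⟧) (hh : ∀ a : Q ⟶ M, a ≫ h = 0) : h = 0 := by
  obtain ⟨L, f, g, ht⟩ := distinguished_cocone_triangle₂ h
  have := hf Q L
  have := hf Q M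
  have i1 : Function.Bijective (Linear.rightComp k Q g) := by
    constructor
    · rw [injective_iff_map_eq_zero]
      intro a ha
      obtain ⟨b, hb⟩ := tr_c2 ht a ha
      rw [hb, hQ b]; exact zero_comp
    · intro a
      obtain ⟨b, hb⟩ := tr_c3 ht a (hh a)
      exact ⟨b, hb.symm⟩
  have e1 := (LinearEquiv.ofBijective _ i1).finrank_eq
  rw [hs Q L, hs Q M] at e1
  have := hf M (Q⟦(1:ℤ)⟧⟦(1:ℤ)⟧)
  have := hf L (Q⟦(1:ℤ)⟧⟦(1:ℤ)⟧)
  have i2 : Function.Surjective (Linear.leftComp k (Q⟦(1:ℤ)⟧⟦(1:ℤ)⟧) g) := by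
    intro a
    obtain ⟨b, hb⟩ := tr_y2 ht a (hQ.shift _)
    exact ⟨b, hb.symm⟩
  have i3 := (LinearMap.injective_iff_surjective_of_finrank_eq_finrank e1.symm).2 i2
  apply i3
  rw [map_zero]
  exact tr_z23 ht

/-- Step (1): if `M` is such that every `M ⟶ T[1]` killing all `T[1] ⟶ M` vanishes, then
every composite `T[1] ⟶ T ⟶ M[1]` vanishes. -/
theorem step1 (hf : ∀ X Y : C, FiniteDimensional k (X ⟶ Y)) (hs : SerreDim k C) {T M : C}
    (hT : HZ T (T⟦(1:ℤ)⟧))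
    (hM : ∀ φ : M ⟶ T⟦(1:ℤ)⟧, (∀ t : T⟦(1:ℤ)⟧ ⟶ M, t ≫ φ = 0) → φ = 0)
    (b : T ⟶ M⟦(1:ℤ)⟧) (s : T⟦(1:ℤ)⟧ ⟶ T) : s ≫ b = 0 := by
  obtain ⟨n, p, hp⟩ := exists_approx hf (T⟦(1:ℤ)⟧) M
  obtain ⟨V, g, d, ht⟩ := distinguished_cocone_triangle p
  let T2 := T⟦(1:ℤ)⟧⟦(1:ℤ)⟧
  have hU : HZ T (pw (T⟦(1:ℤ)⟧) n) := hT.pw_right n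
  have hU' : HZ (pw (T⟦(1:ℤ)⟧) n) T2 := hT.shift.pw_left n
  have key : Function.Surjective (Linear.rightComp k T (p⟦(1:ℤ)⟧')) := by
    have := hf
    refine rankLemma (Linear.rightComp k T g) (Linear.rightComp k T d) _
      (Linear.leftComp k T2 (p⟦(1:ℤ)⟧')) (Linear.leftComp k T2 d) (Linear.leftComp k T2 g)
      ?_ ?_ ?_ ?_ ?_ ?_ ?_ (hs _ _) (hs _ _) (hs _ _) (hs _ _)
    · rw [injective_iff_map_eq_zero]
      intro a ha
      obtain ⟨c, hc⟩ := tr_c2 ht a ha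
      rw [hc, hU c]; exact zero_comp
    · intro a
      constructor
      · intro ha
        obtain ⟨c, hc⟩ := tr_c3 ht a ha
        exact ⟨c, hc.symm⟩
      · rintro ⟨c, rfl⟩
        have := tr_z23 ht
        change (c ≫ _) ≫ _ = 0
        rw [Category.assoc, this, comp_zero]
    · intro a
      constructor
      · intro ha
        obtain ⟨c, hc⟩ := tr_c1 ht a ha
        exact ⟨c, hc.symm⟩
      · rintro ⟨c, rfl⟩
        have := tr_z31 ht
        change (c ≫ _) ≫ _ = 0
        rw [Category.assoc, this, comp_zero]
    · rw [injective_iff_map_eq_zero]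
      intro a ha
      obtain ⟨a, rfl⟩ := (shiftFunctor C (1:ℤ)).map_surjective a
      have ha : p⟦(1:ℤ)⟧' ≫ a⟦(1:ℤ)⟧' = 0 := ha
      rw [← Functor.map_comp, Functor.map_eq_zero_iff] at ha
      rw [hM a, Functor.map_zero]
      intro t
      obtain ⟨c, rfl⟩ := hp t
      rw [Category.assoc, ha, comp_zero]
    · intro a
      constructor
      · intro ha
        obtain ⟨c, hc⟩ := tr_y4 ht a ha
        exact ⟨c, hc.symm⟩
      · rintro ⟨c, rfl⟩
        have := tr_z31 ht
        change _ ≫ (_ ≫ c) = 0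
        rw [← Category.assoc, this, zero_comp]
    · intro a
      constructor
      · intro ha
        obtain ⟨c, hc⟩ := tr_y3 ht a ha
        exact ⟨c, hc.symm⟩
      · rintro ⟨c, rfl⟩
        have := tr_z23 ht
        change _ ≫ (_ ≫ c) = 0
        rw [← Category.assoc, this, zero_comp]
    · intro a
      obtain ⟨c, hc⟩ := tr_y2 ht a (hU' _)
      exact ⟨c, hc.symm⟩
  obtain ⟨c, rfl⟩ := key b
  have : s ≫ c = 0 := hU.shift _
  change s ≫ (c ≫ _) = 0
  rw [← Category.assoc, this, zero_comp]

theorem Q_rigid (hf : ∀ X Y : C, FiniteDimensional k (X ⟶ Y)) (hs : SerreDim k C)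
    {T P Q : C} {n : ℕ} {r : Q ⟶ pw P n} {ρ : pw P n ⟶ T} {q : T ⟶ Q⟦(1:ℤ)⟧}
    (ht : Triangle.mk r ρ q ∈ distTriang C) (hR : AddT T (pw P n))
    (hT : HZ T (T⟦(1:ℤ)⟧)) (hρ : ∀ g : P ⟶ T, ∃ h : P ⟶ pw P n, h ≫ ρ = g) :
    HZ Q (Q⟦(1:ℤ)⟧) := by
  have z : ρ ≫ q = 0 := tr_z23 ht
  have a1 : HZ (pw P n) (Q⟦(1:ℤ)⟧) := by
    intro f
    obtain ⟨g, hg⟩ := tr_c1 ht f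
      (hR.hz_left (hR.hz_right hT) _)
    obtain ⟨h, rfl⟩ := approx_pw hρ n g
    rw [hg]
    rw [Category.assoc, z, comp_zero]
  have a2 : HZ Q ((pw P n)⟦(1:ℤ)⟧) := by
    apply HZ.unshift
    have := hs (pw P n) (Q⟦(1:ℤ)⟧)
    have e : Module.finrank k (pw P n ⟶ Q⟦(1:ℤ)⟧) = 0 := by
      have : Subsingleton (pw P n ⟶ Q⟦(1:ℤ)⟧) := ⟨fun a b => by rw [a1 a, a1 b]⟩
      exact Module.finrank_zero_of_subsingleton
    rw [e] at this
    have := hf (Q⟦(1:ℤ)⟧) ((pw P n)⟦(1:ℤ)⟧⟦(1:ℤ)⟧)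
    have : Subsingleton (Q⟦(1:ℤ)⟧ ⟶ (pw P n)⟦(1:ℤ)⟧⟦(1:ℤ)⟧) :=
      Module.finrank_zero_iff.1 (by assumption : 0 = _).symm
    intro f
    exact Subsingleton.elim _ _
  intro f
  obtain ⟨g, hg⟩ := tr_c1 ht f (a2 _)
  change f = g ≫ q at hg
  obtain ⟨g', hg'⟩ := tr_y4 ht (g⟦(1:ℤ)⟧') (hT _)
  obtain ⟨g', rfl⟩ := (shiftFunctor C (1:ℤ)).map_surjective g'
  have hg2 : g = r ≫ g' := by
    apply (shiftFunctor C (1:ℤ)).map_injective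
    rw [hg', Functor.map_comp]
  obtain ⟨x, hx⟩ := approx_pw hρ n g'
  rw [hg, hg2, ← hx]
  simp [z]

/-- the factoring lemma: `a2` killing all maps from `T` factors through add T[1] -/
theorem factor_T1 (hf : ∀ X Y : C, FiniteDimensional k (X ⟶ Y)) {T : C}
    (hct : ∀ X : C, HZ T (X⟦(1:ℤ)⟧) ↔ AddT T X) {Q M : C} (a : Q ⟶ M)
    (ha : ∀ t : T ⟶ Q, t ≫ a = 0) {N : C} (h : M ⟶ N)
    (hh : ∀ t : T⟦(1:ℤ)⟧ ⟶ M, t ≫ h = 0) : a ≫ h = 0 := by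
  have hT : HZ T (T⟦(1:ℤ)⟧) := by
    rw [hct]
    exact ⟨1, biproduct.ι (fun _ : Fin 1 => T) 0, biproduct.π _ 0, by simp⟩
  obtain ⟨n, p, hp⟩ := exists_approx hf T Q
  obtain ⟨Z, g, d, ht⟩ := distinguished_cocone_triangle₁ p
  have hZ : AddT T Z := by
    rw [← hct]
    intro f
    obtain ⟨c, hc⟩ := tr_c1 ht f ((AddT.pw T n).hz_right hT _)
    obtain ⟨c', rfl⟩ := hp c
    rw [hc]
    have := tr_z23 ht
    rw [Category.assoc, this, comp_zero]
  obtain ⟨c, hc⟩ := tr_y3 ht a (by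
    apply biproduct.hom_ext'
    intro j
    rw [comp_zero]
    change biproduct.ι _ j ≫ p ≫ a = 0
    rw [← Category.assoc, ha])
  obtain ⟨m, s, r, e⟩ := hZ
  have e' : s⟦(1:ℤ)⟧' ≫ r⟦(1:ℤ)⟧' = 𝟙 (Z⟦(1:ℤ)⟧) := by rw [← Functor.map_comp, e]; simp
  have k1 : r⟦(1:ℤ)⟧' ≫ c ≫ h = 0 := by
    have tot : 𝟙 _ = (∑ j, biproduct.π (fun _ : Fin m => T) j ≫ biproduct.ι (fun _ : Fin m => T) j)⟦(1:ℤ)⟧' := by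
      rw [biproduct.total]; simp
    rw [← Category.id_comp (r⟦(1:ℤ)⟧' ≫ c ≫ h), tot, Functor.map_sum, Preadditive.sum_comp]
    apply Finset.sum_eq_zero
    intro j _
    rw [Functor.map_comp]
    have := hh ((biproduct.ι (fun _ : Fin m => T) j)⟦(1:ℤ)⟧' ≫ r⟦(1:ℤ)⟧' ≫ c)
    simp only [Category.assoc] at this ⊢
    rw [this, comp_zero]
  rw [hc, Category.assoc]
  change d ≫ c ≫ h = 0
  rw [← Category.id_comp (c ≫ h), ← e', Category.assoc, k1, comp_zero, comp_zero]

end CatLevel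

section ModLevel

theorem exists_factor {S V P N : Type} [Ring S] [AddCommGroup V] [Module S V]
    [AddCommGroup P] [Module S P] [AddCommGroup N] [Module S N]
    (σ : V →ₗ[S] P) (hσ : Function.Surjective σ) (α : V →ₗ[S] N)
    (h : ∀ v, σ v = 0 → α v = 0) : ∃ φ : P →ₗ[S] N, ∀ v, φ (σ v) = α v := by
  refine ⟨((LinearMap.ker σ).liftQ α h) ∘ₗ (σ.quotKerEquivOfSurjective hσ).symm.toLinearMap, ?_⟩
  intro v
  have : (σ.quotKerEquivOfSurjective hσ).symm (σ v) = Submodule.Quotient.mk v := by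
    rw [LinearEquiv.symm_apply_eq]; rfl
  change (LinearMap.ker σ).liftQ α h ((σ.quotKerEquivOfSurjective hσ).symm (σ v)) = α v
  rw [this]
  rfl

/-- elementary form of the vanishing of Ext¹ -/
def E1 (S M N : Type) [Ring S] [AddCommGroup M] [Module S M] [AddCommGroup N] [Module S N] :
    Prop :=
  ∀ (V P : Type) [AddCommGroup V] [Module S V] [AddCommGroup P] [Module S P]
    (i : V →ₗ[S] P) (p : P →ₗ[S] M), Function.Surjective p → Function.Exact i p →
    ∀ α : V →ₗ[S] N, (∀ v, i v = 0 → α v = 0) → ∃ β : P →ₗ[S] N, ∀ v, β (i v) = α v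

theorem E1.congr {S M N M' N' : Type} [Ring S] [AddCommGroup M] [Module S M]
    [AddCommGroup N] [Module S N] [AddCommGroup M'] [Module S M']
    [AddCommGroup N'] [Module S N'] (h : E1 S M N) (f : M ≃ₗ[S] M') (g : N ≃ₗ[S] N') :
    E1 S M' N' := by
  intro V P _ _ _ _ i p hp hip α hα
  obtain ⟨β, hβ⟩ := h V P i (f.symm.toLinearMap ∘ₗ p) (f.symm.surjective.comp hp)
    (by intro x; rw [← hip x]; simp) (g.symm.toLinearMap ∘ₗ α) (by intro v hv; simp [hα v hv])
  exact ⟨g.toLinearMap ∘ₗ β, fun v => by simp [hβ]⟩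

theorem E1_of_rext1 (k : Type) [Field k] (A : Type) [Ring A] [Algebra k A]
    (M N : ModuleCat.{0} Aᵐᵒᵖ) (h : Subsingleton (rext1 k A M N)) : E1 Aᵐᵒᵖ M N := by
  intro V P _ _ _ _ i p hp hip α hα
  let R := ProjectiveResolution.of M
  have hz : Limits.IsZero ((R.complex.linearYonedaObj k N).homology 1) :=
    (ModuleCat.isZero_of_subsingleton _).of_iso (R.isoExt (R := k) 1 N).symm
  rw [← HomologicalComplex.exactAt_iff_isZero_homology,
    HomologicalComplex.exactAt_iff' _ 0 1 2 (by simp) (by simp)] at hz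
  have hz' : ∀ φ : R.complex.X 1 ⟶ N, R.complex.d 2 1 ≫ φ = 0 →
      ∃ ψ : R.complex.X 0 ⟶ N, R.complex.d 1 0 ≫ ψ = φ := by
    intro φ hφ
    exact (ShortComplex.moduleCat_exact_iff _).1 hz φ hφ
  have pr : ∀ n, Module.Projective Aᵐᵒᵖ (R.complex.X n) := fun n =>
    (IsProjective.iff_projective _).2 (R.projective n)
  have e0 := R.exact₀
  have e1 := R.exact_succ 0
  rw [ShortComplex.moduleCat_exact_iff] at e0 e1
  have := pr 0
  have := pr 1
  let ε : R.complex.X 0 →ₗ[Aᵐᵒᵖ] M := (R.π.f 0).hom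
  have hε : Function.Surjective ε := (ModuleCat.epi_iff_surjective (R.π.f 0)).1 inferInstance
  let d1 : R.complex.X 1 →ₗ[Aᵐᵒᵖ] R.complex.X 0 := (R.complex.d 1 0).hom
  let d2 : R.complex.X 2 →ₗ[Aᵐᵒᵖ] R.complex.X 1 := (R.complex.d 2 1).hom
  have dd : ∀ x, d1 (d2 x) = 0 := fun x => by
    have := R.complex.d_comp_d 2 1 0
    exact congrArg (fun f => f.hom x) this
  have εd : ∀ x, ε (d1 x) = 0 := fun x => by
    have := R.complex_d_comp_π_f_zero
    exact congrArg (fun f => f.hom x) this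
  have ex : ∀ x, ε x = 0 → ∃ y, d1 y = x := fun x hx => e0 x hx
  obtain ⟨l0, hl0⟩ := Module.projective_lifting_property p ε hp
  have hl0' : ∀ x, p (l0 x) = ε x := fun x => LinearMap.congr_fun hl0 x
  obtain ⟨l1, hl1⟩ := Module.projective_lifting_property i.rangeRestrict
    ((l0 ∘ₗ d1).codRestrict (LinearMap.range i) (fun x => by
      have := (hip (l0 (d1 x))).1 (by rw [hl0', εd])
      simpa using this)) i.surjective_rangeRestrict
  have hl1' : ∀ x, i (l1 x) = l0 (d1 x) := fun x => congrArg Subtype.val (LinearMap.congr_fun hl1 x)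
  obtain ⟨β, hβ⟩ := hz' (ModuleCat.ofHom (α ∘ₗ l1)) (by
    ext x
    change α (l1 (d2 x)) = 0
    apply hα
    rw [hl1', dd, map_zero])
  have hβ' : ∀ x, β.hom (d1 x) = α (l1 x) := fun x => congrArg (fun f => f.hom x) hβ
  obtain ⟨γ, hγ⟩ := exists_factor (l0.coprod i) (by
      intro y
      obtain ⟨x, hx⟩ := hε (p y)
      obtain ⟨v, hv⟩ := (hip (y - l0 x)).1 (by rw [map_sub, hl0', hx, sub_self])
      exact ⟨(x, v), by simp [hv]⟩) (LinearMap.coprod β.hom α) (by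
      rintro ⟨x, v⟩ hxv
      simp only [LinearMap.coprod_apply] at hxv ⊢
      have : ε x = 0 := by
        have h1 := congrArg p hxv
        rw [map_add, hl0', map_zero, (hip (i v)).2 ⟨v, rfl⟩, add_zero] at h1
        exact h1
      obtain ⟨y, rfl⟩ := ex x this
      rw [hβ', ← map_add]
      apply hα
      rw [map_add, hl1', hxv])
  exact ⟨γ, fun v => by simpa using hγ (0, v)⟩

theorem e_mem {A : Type} [Ring A] (e : A) : e ∈ genIdeal e :=
  Submodule.subset_span ⟨1, by simp⟩

theorem be_mem {A : Type} [Ring A] (b e c : A) : b * e * c ∈ genIdeal e := by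
  have : b * e * c = (MulOpposite.op c) • (b * e) := rfl
  rw [this]
  exact Submodule.smul_mem _ _ (Submodule.subset_span ⟨b, rfl⟩)

theorem J_hom_zero {A : Type} [Ring A] {e : A} (he : IsIdempotentElem e) {E : Type}
    [AddCommGroup E] [Module Aᵐᵒᵖ E] (hE : JTriv e E) (γ : genIdeal e →ₗ[Aᵐᵒᵖ] E) : γ = 0 := by
  have : ∀ (x : A) (hx : x ∈ genIdeal e), γ ⟨x, hx⟩ = 0 := by
    intro x hx
    induction hx using Submodule.span_induction with
    | mem x h =>
      obtain ⟨b, rfl⟩ := h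
      have hm : b * e ∈ genIdeal e := Submodule.subset_span ⟨b, rfl⟩
      have : (⟨b * e, hm⟩ : genIdeal e) = (MulOpposite.op e) • (⟨b * e, hm⟩ : genIdeal e) := by
        ext
        change b * e = b * e * e
        rw [mul_assoc, he.eq]
      rw [this, map_smul]
      exact hE e (e_mem e) _
    | zero => exact map_zero γ
    | add x y hx hy h1 h2 =>
      have := map_add γ ⟨x, hx⟩ ⟨y, hy⟩
      rw [h1, h2, add_zero] at this
      exact this
    | smul a x hx h =>
      have := map_smul γ a ⟨x, hx⟩
      rw [h, smul_zero] at this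
      exact this
  ext ⟨x, hx⟩
  exact this x hx

theorem addJ_hom_zero {A : Type} [Ring A] {e : A} (he : IsIdempotentElem e) {E : Type}
    [AddCommGroup E] [Module Aᵐᵒᵖ E] (hE : JTriv e E) (N : ModuleCat.{0} Aᵐᵒᵖ) (hN : InAddJ e N)
    (γ : N →ₗ[Aᵐᵒᵖ] E) : γ = 0 := by
  obtain ⟨n, s, r, h⟩ := hN
  have : γ ∘ₗ r = 0 := by
    apply LinearMap.pi_ext'
    intro j
    rw [J_hom_zero he hE ((γ ∘ₗ r) ∘ₗ _), LinearMap.zero_comp]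
  rw [← LinearMap.comp_id γ, ← h, ← LinearMap.comp_assoc, this, LinearMap.zero_comp]

theorem JTriv_coker {A : Type} [Ring A] (e : A) (X JX : ModuleCat.{0} Aᵐᵒᵖ)
    (fX : JX →ₗ[Aᵐᵒᵖ] X) (hfX : IsAddJApprox e JX X fX) : JTriv e (X ⧸ LinearMap.range fX) := by
  intro a ha m
  obtain ⟨x, rfl⟩ := Submodule.Quotient.mk_surjective _ m
  let g : A →ₗ[Aᵐᵒᵖ] X :=
    { toFun := fun a => MulOpposite.op a • x
      map_add' := fun a b => by rw [MulOpposite.op_add, add_smul]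
      map_smul' := fun c a => by
        simp [← mul_smul, MulOpposite.smul_eq_mul_unop] }
  obtain ⟨h, hh⟩ := hfX.2 (ModuleCat.of Aᵐᵒᵖ (genIdeal e))
    ⟨1, LinearMap.pi (fun _ => LinearMap.id), LinearMap.proj 0, by ext; rfl⟩
    (g ∘ₗ (genIdeal e).subtype)
  rw [← Submodule.Quotient.mk_smul, Submodule.Quotient.mk_eq_zero]
  exact ⟨h ⟨a, ha⟩, LinearMap.congr_fun hh ⟨a, ha⟩⟩

end ModLevel

section Core

set_option linter.unusedSectionVars false

open Pretriangulated Limits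

variable {k : Type} [Field k] {C : Type} [Category.{0} C] [Preadditive C] [Linear k C]
  [HasShift C ℤ] [HasZeroObject C] [∀ n : ℤ, (shiftFunctor C n).Additive] [Pretriangulated C]
  [HasFiniteBiproducts C]

theorem coreC (hf : ∀ X Y : C, FiniteDimensional k (X ⟶ Y)) (hs : SerreDim k C) {T : C}
    (hct : ∀ X : C, HZ T (X⟦(1:ℤ)⟧) ↔ AddT T X) (hT : HZ T (T⟦(1:ℤ)⟧))
    {P Q : C} {N : ℕ} {r : Q ⟶ pw P N} {ρ : pw P N ⟶ T} {q : T ⟶ Q⟦(1:ℤ)⟧}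
    (ht : Triangle.mk r ρ q ∈ distTriang C) (hR : AddT T (pw P N))
    (hρ : ∀ g : P ⟶ T, ∃ h : P ⟶ pw P N, h ≫ ρ = g)
    {T1 T0 M : C} (hT1 : AddT T T1) (hT0 : AddT T T0)
    {g : T1 ⟶ T0} {c : T0 ⟶ M} {δ : M ⟶ T1⟦(1:ℤ)⟧} (ht' : Triangle.mk g c δ ∈ distTriang C)
    (hCM : ∀ φ : M ⟶ T⟦(1:ℤ)⟧, (∀ t : T⟦(1:ℤ)⟧ ⟶ M, t ≫ φ = 0) → φ = 0)
    (hJ : ∀ a : Q ⟶ M, (∀ t : T ⟶ Q, t ≫ r = 0 → t ≫ a = 0) →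
      ∃ y : pw P N ⟶ M, ∀ t : T ⟶ Q, t ≫ a = t ≫ r ≫ y)
    (w : T1 ⟶ T) (hw : ∀ t : T ⟶ T1, t ≫ g = 0 → t ≫ w ≫ q = 0) :
    ∃ (c1 : T0 ⟶ T) (x : T1 ⟶ pw P N), w - g ≫ c1 = x ≫ ρ := by
  have hQ := Q_rigid hf hs ht hR hT hρ
  let h : M ⟶ Q⟦(1:ℤ)⟧⟦(1:ℤ)⟧ := δ ≫ (w ≫ q)⟦(1:ℤ)⟧'
  have h0 : h = 0 := by
    apply lemS hf hs hQ
    intro a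
    have ha : ∀ t : T ⟶ Q, t ≫ r = 0 → t ≫ a = 0 := by
      intro t htr
      obtain ⟨s, hs'⟩ := tr_c1 ht (t⟦(1:ℤ)⟧') (by rw [← Functor.map_comp, htr, Functor.map_zero])
      apply (shiftFunctor C (1:ℤ)).map_injective
      rw [Functor.map_comp, hs', Functor.map_zero, Category.assoc]
      exact step1 hf hs hT hCM _ _
    obtain ⟨y, hy⟩ := hJ a ha
    have k1 : (a - r ≫ y) ≫ h = 0 := by
      apply factor_T1 hf hct
      · intro t
        rw [Preadditive.comp_sub, hy, sub_self]
      · intro t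
        obtain ⟨t', ht2⟩ := (shiftFunctor C (1:ℤ)).map_surjective (t ≫ δ)
        have : t' ≫ g = 0 := by
          apply (shiftFunctor C (1:ℤ)).map_injective
          rw [Functor.map_comp, ht2, Category.assoc, tr_z31 ht', comp_zero, Functor.map_zero]
        change t ≫ δ ≫ _ = 0
        rw [← Category.assoc, ← ht2, ← Functor.map_comp, hw t' this, Functor.map_zero]
    have k2 : y ≫ δ = 0 := hR.hz_left (hT1.hz_right hT) _
    rw [Preadditive.sub_comp, sub_eq_zero] at k1
    rw [k1]
    change (r ≫ y) ≫ δ ≫ _ = 0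
    rw [Category.assoc, ← Category.assoc y, k2, zero_comp, comp_zero]
  obtain ⟨c0, hc0⟩ := tr_y4 ht' _ h0
  obtain ⟨c0, rfl⟩ := (shiftFunctor C (1:ℤ)).map_surjective c0
  rw [← Functor.map_comp] at hc0
  have hc0 := (shiftFunctor C (1:ℤ)).map_injective hc0
  have z : c0 ≫ r⟦(1:ℤ)⟧' = 0 := hT0.hz_left (hR.hz_right hT) _
  obtain ⟨c1, rfl⟩ := tr_c1 ht c0 z
  obtain ⟨x, hx⟩ := tr_c3 ht (w - g ≫ c1) (by
    rw [Preadditive.sub_comp, hc0, Category.assoc, sub_self])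
  exact ⟨c1, x, hx⟩

/-- `Hom(T, Y)` as a right `A`-module. -/
def FH {A : Type} [Ring A] {T : C} (_ψ : A ≃+* End T) (Y : C) : Type := T ⟶ Y

variable {A : Type} [Ring A] {T : C} (ψ : A ≃+* End T)

instance (Y : C) : AddCommGroup (FH ψ Y) := inferInstanceAs (AddCommGroup (T ⟶ Y))

theorem psi_mul (a b : A) : (ψ (a * b) : T ⟶ T) = ψ b ≫ ψ a := by
  rw [map_mul]; rfl

instance (Y : C) : Module Aᵐᵒᵖ (FH ψ Y) where
  smul a f := ((ψ a.unop : T ⟶ T) ≫ (f : T ⟶ Y) : T ⟶ Y)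
  one_smul f := by
    change (ψ (1 : A) : T ⟶ T) ≫ (f : T ⟶ Y) = f
    rw [map_one]; exact Category.id_comp _
  mul_smul a b f := by
    change (ψ (b.unop * a.unop) : T ⟶ T) ≫ (f : T ⟶ Y) = (ψ a.unop : T ⟶ T) ≫ (ψ b.unop : T ⟶ T) ≫ f
    rw [psi_mul]; exact Category.assoc _ _ _
  smul_zero a := comp_zero
  smul_add a f g := Preadditive.comp_add _ _ _ _ _ _
  add_smul a b f := by
    change (ψ (a.unop + b.unop) : T ⟶ T) ≫ (f : T ⟶ Y) = (ψ a.unop : T ⟶ T) ≫ f + (ψ b.unop : T ⟶ T) ≫ f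
    rw [map_add]; exact Preadditive.add_comp _ _ _ _ _ _
  zero_smul f := by
    change (ψ (0 : A) : T ⟶ T) ≫ (f : T ⟶ Y) = 0
    rw [map_zero]; exact zero_comp

/-- wrap -/
def FH.mk {Y : C} (f : T ⟶ Y) : FH ψ Y := f

def FH.un {Y : C} (f : FH ψ Y) : T ⟶ Y := f

theorem FH.smul_un {Y : C} (a : A) (f : FH ψ Y) :
    FH.un ψ (MulOpposite.op a • f) = (ψ a : T ⟶ T) ≫ FH.un ψ f := rfl

def FH.map {Y Z : C} (g : Y ⟶ Z) : FH ψ Y →ₗ[Aᵐᵒᵖ] FH ψ Z where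
  toFun f := FH.mk ψ (FH.un ψ f ≫ g)
  map_add' _ _ := Preadditive.add_comp _ _ _ _ _ _
  map_smul' _ _ := Category.assoc _ _ _

/-- `A ≃ Hom(T,T)` -/
def FH.equivA : A ≃ₗ[Aᵐᵒᵖ] FH ψ T :=
  { ψ.toAddEquiv with
    toFun := fun a => FH.mk ψ (ψ a)
    map_smul' := fun a b => psi_mul ψ b a.unop }

theorem FH.sum_eq {n : ℕ} (f : FH ψ (pw T n)) :
    f = ∑ i, MulOpposite.op (ψ.symm (FH.un ψ f ≫ biproduct.π (fun _ : Fin n => T) i)) •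
      FH.mk ψ (biproduct.ι (fun _ : Fin n => T) i) := by
  have : FH.un ψ f = ∑ i, (FH.un ψ f ≫ biproduct.π (fun _ : Fin n => T) i) ≫
      (biproduct.ι (fun _ : Fin n => T) i) := by
    simp only [Category.assoc]
    rw [← Preadditive.comp_sum, biproduct.total, Category.comp_id]
  refine Eq.trans this ?_
  apply Finset.sum_congr rfl
  intro i _
  refine Eq.trans ?_ (FH.smul_un ψ _ _).symm
  rw [RingEquiv.apply_symm_apply]
  rfl

theorem FH.ext_pw {n : ℕ} {N : Type} [AddCommGroup N] [Module Aᵐᵒᵖ N]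
    (α β : FH ψ (pw T n) →ₗ[Aᵐᵒᵖ] N)
    (h : ∀ i, α (FH.mk ψ (biproduct.ι (fun _ : Fin n => T) i)) =
      β (FH.mk ψ (biproduct.ι (fun _ : Fin n => T) i))) : α = β := by
  ext f
  rw [FH.sum_eq ψ f]
  simp only [map_sum, map_smul, h]

theorem FH.free {n : ℕ} {N : Type} [AddCommGroup N] [Module Aᵐᵒᵖ N] (y : Fin n → N) :
    ∃ α : FH ψ (pw T n) →ₗ[Aᵐᵒᵖ] N,
      ∀ i, α (FH.mk ψ (biproduct.ι (fun _ : Fin n => T) i)) = y i := by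
  let α : FH ψ (pw T n) →ₗ[Aᵐᵒᵖ] N :=
    { toFun := fun f => ∑ i, MulOpposite.op
        (ψ.symm (FH.un ψ f ≫ biproduct.π (fun _ : Fin n => T) i)) • y i
      map_add' := fun f g => by
        rw [← Finset.sum_add_distrib]
        apply Finset.sum_congr rfl
        intro i _
        rw [← add_smul, ← MulOpposite.op_add, ← map_add]
        congr 3
        exact Preadditive.add_comp _ _ _ _ _ _
      map_smul' := fun a f => by
        rw [Finset.smul_sum]
        apply Finset.sum_congr rfl
        intro i _
        rw [← mul_smul]
        congr 1
        apply MulOpposite.unop_injective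
        apply ψ.injective
        simp only [MulOpposite.unop_op, MulOpposite.unop_mul, RingHom.id_apply]
        refine Eq.trans (RingEquiv.apply_symm_apply _ _) ?_
        refine Eq.trans ?_ (psi_mul ψ _ _).symm
        rw [RingEquiv.apply_symm_apply]
        exact Category.assoc _ _ _ }
  refine ⟨α, fun i => ?_⟩
  change ∑ j, MulOpposite.op (ψ.symm (biproduct.ι (fun _ : Fin n => T) i ≫
    biproduct.π (fun _ : Fin n => T) j)) • y j = y i
  rw [Finset.sum_eq_single i]
  · rw [biproduct.ι_π_self]
    have : ψ.symm (𝟙 T : End T) = 1 := map_one ψ.symm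
    rw [this]; simp
  · intro j _ hj
    rw [biproduct.ι_π_ne _ (Ne.symm hj)]
    have : ψ.symm (0 : End T) = 0 := map_zero ψ.symm
    rw [this]; simp
  · simp

theorem FH.full_pw {n : ℕ} {Y : C} (φ : FH ψ (pw T n) →ₗ[Aᵐᵒᵖ] FH ψ Y) :
    ∃ y : pw T n ⟶ Y, φ = FH.map ψ y := by
  refine ⟨biproduct.desc (fun i => FH.un ψ (φ (FH.mk ψ (biproduct.ι (fun _ : Fin n => T) i)))), ?_⟩
  apply FH.ext_pw
  intro i
  refine Eq.symm (biproduct.ι_desc _ _)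

theorem FH.full {Z Y : C} (hZ : AddT T Z) (φ : FH ψ Z →ₗ[Aᵐᵒᵖ] FH ψ Y) :
    ∃ y : Z ⟶ Y, φ = FH.map ψ y := by
  obtain ⟨n, s, r, e⟩ := hZ
  obtain ⟨y, hy⟩ := FH.full_pw ψ (φ ∘ₗ FH.map ψ r)
  refine ⟨s ≫ y, ?_⟩
  ext f
  have h1 := LinearMap.congr_fun hy (FH.map ψ s f)
  have h2 : FH.map ψ r (FH.map ψ s f) = f := by
    change (FH.un ψ f ≫ s) ≫ r = FH.un ψ f
    rw [Category.assoc, e, Category.comp_id]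
  rw [LinearMap.comp_apply, h2] at h1
  rw [h1]
  exact Category.assoc _ _ _

theorem FH.faithful_pw {n : ℕ} {Y : C} (a b : pw T n ⟶ Y) (h : FH.map ψ a = FH.map ψ b) :
    a = b := by
  apply biproduct.hom_ext'
  intro i
  exact LinearMap.congr_fun h (FH.mk ψ (biproduct.ι (fun _ : Fin n => T) i))


theorem FH.isFinite (n : ℕ) : Module.Finite Aᵐᵒᵖ (FH ψ (pw T n)) := by
  classical
  refine ⟨⟨Finset.univ.image (fun i => FH.mk ψ (biproduct.ι (fun _ : Fin n => T) i)), ?_⟩⟩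
  rw [eq_top_iff]
  intro f _
  rw [FH.sum_eq ψ f]
  apply Submodule.sum_mem
  intro i _
  apply Submodule.smul_mem
  apply Submodule.subset_span
  simp

theorem FH.factor_mem {e : A} {P : C} {i : P ⟶ T} {p : T ⟶ P} (hpi : p ≫ i = ψ e)
    (hip : i ≫ p = 𝟙 P) {N : ℕ} (ρ : pw P N ⟶ T) (f : T ⟶ pw P N) :
    ψ.symm (f ≫ ρ : T ⟶ T) ∈ genIdeal e := by
  have h1 : (f ≫ ρ : T ⟶ T) = ∑ j, ((f ≫ biproduct.π (fun _ : Fin N => P) j ≫ i) ≫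
      (p ≫ i) ≫ (p ≫ biproduct.ι (fun _ : Fin N => P) j ≫ ρ)) := by
    have h2 : f ≫ ρ = f ≫ (∑ j, biproduct.π (fun _ : Fin N => P) j ≫
      biproduct.ι (fun _ : Fin N => P) j) ≫ ρ := by
      rw [biproduct.total, Category.id_comp]
    rw [h2, Preadditive.sum_comp, Preadditive.comp_sum]
    apply Finset.sum_congr rfl
    intro j _
    simp only [Category.assoc, reassoc_of% hip]
  have h3 : ψ.symm (f ≫ ρ : T ⟶ T) = ∑ j, ψ.symm
      ((f ≫ biproduct.π (fun _ : Fin N => P) j ≫ i) ≫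
      (p ≫ i) ≫ (p ≫ biproduct.ι (fun _ : Fin N => P) j ≫ ρ) : T ⟶ T) := by
    rw [h1]; exact map_sum ψ.symm _ _
  rw [h3]
  apply Submodule.sum_mem
  intro j _
  rw [hpi]
  have h4 : ψ.symm ((f ≫ biproduct.π (fun _ : Fin N => P) j ≫ i) ≫
      (ψ e : T ⟶ T) ≫ (p ≫ biproduct.ι (fun _ : Fin N => P) j ≫ ρ) : T ⟶ T) =
      ψ.symm (p ≫ biproduct.ι (fun _ : Fin N => P) j ≫ ρ : T ⟶ T) * e *
        ψ.symm (f ≫ biproduct.π (fun _ : Fin N => P) j ≫ i : T ⟶ T) := by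
    apply ψ.injective
    rw [RingEquiv.apply_symm_apply]
    refine Eq.trans ?_ (psi_mul ψ _ _).symm
    rw [psi_mul, RingEquiv.apply_symm_apply, RingEquiv.apply_symm_apply]
  rw [h4]
  exact be_mem _ _ _

theorem FH.mem_factor {e : A} {P : C} {i : P ⟶ T} {p : T ⟶ P} (hpi : p ≫ i = ψ e)
    {N : ℕ} {ρ : pw P N ⟶ T} (hρ : ∀ g : P ⟶ T, ∃ h : P ⟶ pw P N, h ≫ ρ = g)
    (a : A) (ha : a ∈ genIdeal e) : ∃ f : T ⟶ pw P N, (ψ a : T ⟶ T) = f ≫ ρ := by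
  induction ha using Submodule.span_induction with
  | mem x h =>
    obtain ⟨b, rfl⟩ := h
    obtain ⟨h, hh⟩ := hρ (i ≫ (ψ b : T ⟶ T))
    refine ⟨p ≫ h, ?_⟩
    rw [psi_mul, ← hpi, Category.assoc, Category.assoc, hh]
  | zero => exact ⟨0, by rw [map_zero, zero_comp]⟩
  | add x y hx hy h1 h2 =>
    obtain ⟨f, hf⟩ := h1
    obtain ⟨f', hf'⟩ := h2
    exact ⟨f + f', by rw [Preadditive.add_comp, ← hf, ← hf', map_add]⟩
  | smul c x hx h =>
    obtain ⟨f, hf⟩ := h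
    refine ⟨(ψ c.unop : T ⟶ T) ≫ f, ?_⟩
    rw [Category.assoc, ← hf]
    exact psi_mul ψ x c.unop

theorem main_aux [IsIdempotentComplete C] (hf : ∀ X Y : C, FiniteDimensional k (X ⟶ Y))
    (hs : SerreDim k C)
    (hct : ∀ X : C, HZ T (X⟦(1:ℤ)⟧) ↔ AddT T X) [IsNoetherianRing Aᵐᵒᵖ]
    (e : A) (he : IsIdempotentElem e) (X : Type) [AddCommGroup X] [Module Aᵐᵒᵖ X]
    [Module.Finite Aᵐᵒᵖ X] (hX : E1 Aᵐᵒᵖ X A) (h1 : E1 Aᵐᵒᵖ (genIdeal e) X) :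
    ∃ (n m : ℕ) (π : FH ψ (pw T n) →ₗ[Aᵐᵒᵖ] X) (g : pw T m ⟶ pw T n),
      Function.Surjective π ∧ Function.Exact (FH.map ψ g) π ∧
      ∀ α : FH ψ (pw T m) →ₗ[Aᵐᵒᵖ] (A ⧸ genIdeal e), (∀ f, FH.map ψ g f = 0 → α f = 0) →
        ∃ β : FH ψ (pw T n) →ₗ[Aᵐᵒᵖ] (A ⧸ genIdeal e), ∀ f, β (FH.map ψ g f) = α f := by
  have hT : HZ T (T⟦(1:ℤ)⟧) := by
    rw [hct]
    exact ⟨1, biproduct.ι (fun _ : Fin 1 => T) 0, biproduct.π _ 0, by simp⟩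
  -- presentation of X
  obtain ⟨n, x, hx⟩ := Module.Finite.exists_fin (R := Aᵐᵒᵖ) (M := X)
  obtain ⟨π, hπ⟩ := FH.free ψ x
  have hsurj : Function.Surjective π := by
    rw [← LinearMap.range_eq_top, eq_top_iff, ← hx, Submodule.span_le]
    rintro _ ⟨i, rfl⟩
    exact ⟨_, hπ i⟩
  have := FH.isFinite ψ n
  have hfg : (LinearMap.ker π).FG := IsNoetherian.noetherian _
  obtain ⟨m, κ, hκ⟩ := Submodule.fg_iff_exists_fin_generating_family.1 hfg
  let g : pw T m ⟶ pw T n := biproduct.desc (fun j => FH.un ψ (κ j))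
  have hgι : ∀ j, FH.map ψ g (FH.mk ψ (biproduct.ι (fun _ : Fin m => T) j)) = κ j :=
    fun j => biproduct.ι_desc _ _
  have hex : Function.Exact (FH.map ψ g) π := by
    rw [LinearMap.exact_iff, ← hκ]
    apply le_antisymm
    · rw [Submodule.span_le]
      rintro _ ⟨j, rfl⟩
      exact ⟨_, hgι j⟩
    · rintro _ ⟨f, rfl⟩
      rw [FH.sum_eq ψ f, map_sum]
      apply Submodule.sum_mem
      intro j _
      rw [map_smul, hgι]
      exact Submodule.smul_mem _ _ (Submodule.subset_span ⟨j, rfl⟩)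
  obtain ⟨M, c, δ, ht'⟩ := distinguished_cocone_triangle g
  have hcs : Function.Surjective (FH.map ψ c) := by
    intro f
    obtain ⟨b, hb⟩ := tr_c3 ht' (FH.un ψ f) ((AddT.pw T m).hz_right hT _)
    exact ⟨FH.mk ψ b, hb.symm⟩
  have hgc : Function.Exact (FH.map ψ g) (FH.map ψ c) := by
    intro f
    constructor
    · intro h
      obtain ⟨b, hb⟩ := tr_c2 ht' (FH.un ψ f) h
      exact ⟨FH.mk ψ b, hb.symm⟩
    · rintro ⟨b, rfl⟩
      change (FH.un ψ b ≫ g) ≫ c = 0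
      rw [Category.assoc, tr_z12 ht', comp_zero]
  let θ : X ≃ₗ[Aᵐᵒᵖ] FH ψ M :=
    (π.quotKerEquivOfSurjective hsurj).symm ≪≫ₗ
      (Submodule.quotEquivOfEq _ _ (by
        rw [LinearMap.exact_iff.1 hex, LinearMap.exact_iff.1 hgc])) ≪≫ₗ
      ((FH.map ψ c).quotKerEquivOfSurjective hcs)
  have hX' : E1 Aᵐᵒᵖ (FH ψ M) (FH ψ T) := hX.congr θ (FH.equivA ψ)
  have h1' : E1 Aᵐᵒᵖ (genIdeal e) (FH ψ M) := h1.congr (LinearEquiv.refl _ _) θ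
  refine ⟨n, m, π, g, hsurj, hex, ?_⟩
  -- CM
  have hCM : ∀ φ : M ⟶ T⟦(1:ℤ)⟧, (∀ t : T⟦(1:ℤ)⟧ ⟶ M, t ≫ φ = 0) → φ = 0 := by
    intro φ hφ
    obtain ⟨w, hw⟩ := tr_y3 ht' φ ((AddT.pw T n).hz_left hT _)
    obtain ⟨w, rfl⟩ := (shiftFunctor C (1:ℤ)).map_surjective w
    obtain ⟨β, hβ⟩ := hX' _ _ (FH.map ψ g) (FH.map ψ c) hcs hgc (FH.map ψ w) (by
      intro t ht
      have ht : FH.un ψ t ≫ g = 0 := ht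
      change FH.un ψ t ≫ w = 0
      obtain ⟨t', h'⟩ := tr_c1 ht' ((FH.un ψ t)⟦(1:ℤ)⟧') (by
        rw [← Functor.map_comp, ht, Functor.map_zero])
      apply (shiftFunctor C (1:ℤ)).map_injective
      rw [Functor.map_comp, h', Functor.map_zero, Category.assoc, ← hw, hφ])
    obtain ⟨y, rfl⟩ := FH.full_pw ψ β
    have hy : w = g ≫ y := by
      apply FH.faithful_pw ψ
      ext f
      rw [← hβ]
      exact Category.assoc _ _ _
    rw [hw, hy, Functor.map_comp, ← Category.assoc, tr_z31 ht', zero_comp]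
  -- the ideal
  have hee : (ψ e : T ⟶ T) ≫ (ψ e : T ⟶ T) = ψ e := by rw [← psi_mul, he.eq]
  obtain ⟨P, i, p, hip, hpi⟩ := IsIdempotentComplete.idempotents_split T (ψ e : T ⟶ T) hee
  obtain ⟨N, ρ, hρ⟩ := exists_approx hf P T
  obtain ⟨Q, r, q, ht⟩ := distinguished_cocone_triangle₁ ρ
  have hR := AddT.pw_retract i p hip N
  let pJ : FH ψ (pw P N) →ₗ[Aᵐᵒᵖ] genIdeal e :=
    ((FH.equivA ψ).symm.toLinearMap ∘ₗ FH.map ψ ρ).codRestrict (genIdeal e)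
      (fun f => FH.factor_mem ψ hpi hip ρ (FH.un ψ f))
  have hJ : ∀ a : Q ⟶ M, (∀ t : T ⟶ Q, t ≫ r = 0 → t ≫ a = 0) →
      ∃ y : pw P N ⟶ M, ∀ t : T ⟶ Q, t ≫ a = t ≫ r ≫ y := by
    intro a ha
    obtain ⟨β, hβ⟩ := h1' _ _ (FH.map ψ r) pJ (by
      rintro ⟨z, hz⟩
      obtain ⟨f, hf⟩ := FH.mem_factor ψ hpi hρ z hz
      refine ⟨FH.mk ψ f, Subtype.ext ?_⟩
      change ψ.symm (f ≫ ρ : T ⟶ T) = z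
      rw [← hf]; exact ψ.symm_apply_apply z) (by
      intro f
      have : pJ f = 0 ↔ FH.un ψ f ≫ ρ = 0 := by
        rw [← Subtype.coe_inj]
        change ψ.symm (FH.un ψ f ≫ ρ : T ⟶ T) = 0 ↔ _
        exact EmbeddingLike.map_eq_zero_iff
      rw [this]
      constructor
      · intro h
        obtain ⟨b, hb⟩ := tr_c2 ht (FH.un ψ f) h
        exact ⟨FH.mk ψ b, hb.symm⟩
      · rintro ⟨b, rfl⟩
        change (FH.un ψ b ≫ r) ≫ ρ = 0
        rw [Category.assoc, tr_z12 ht, comp_zero]) (FH.map ψ a) (fun t h => ha t h)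
    obtain ⟨y, rfl⟩ := FH.full ψ hR β
    refine ⟨y, fun t => ?_⟩
    rw [← Category.assoc]
    exact (hβ t).symm
  intro α hα
  -- lift α
  choose y hy using fun j => Submodule.Quotient.mk_surjective (genIdeal e)
    (α (FH.mk ψ (biproduct.ι (fun _ : Fin m => T) j)))
  let w : pw T m ⟶ T := biproduct.desc (fun j => (ψ (y j) : T ⟶ T))
  have hw : α = (genIdeal e).mkQ ∘ₗ (FH.equivA ψ).symm.toLinearMap ∘ₗ FH.map ψ w := by
    apply FH.ext_pw
    intro j
    rw [← hy]
    have : biproduct.ι (fun _ : Fin m => T) j ≫ w = (ψ (y j) : T ⟶ T) := biproduct.ι_desc _ _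
    change _ = Submodule.Quotient.mk (ψ.symm (biproduct.ι (fun _ : Fin m => T) j ≫ w : T ⟶ T))
    rw [this]
    congr 1
    exact (ψ.symm_apply_apply _).symm
  obtain ⟨c1, z, hz⟩ := coreC hf hs hct hT ht hR hρ (AddT.pw T m) (AddT.pw T n) ht' hCM hJ w (by
    intro t htg
    have h2 := hα (FH.mk ψ t) htg
    rw [hw] at h2
    have h3 : ψ.symm (t ≫ w : T ⟶ T) ∈ genIdeal e := (Submodule.Quotient.mk_eq_zero _).1 h2
    obtain ⟨f, hf⟩ := FH.mem_factor ψ hpi hρ _ h3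
    have h4 : t ≫ w = f ≫ ρ := by rw [← hf]; exact (ψ.apply_symm_apply _).symm
    rw [← Category.assoc, h4, Category.assoc, tr_z23 ht, comp_zero])
  refine ⟨(genIdeal e).mkQ ∘ₗ (FH.equivA ψ).symm.toLinearMap ∘ₗ FH.map ψ c1, fun f => ?_⟩
  rw [hw]
  symm
  apply (Submodule.Quotient.eq _).2
  have h5 := FH.factor_mem ψ hpi hip ρ (FH.un ψ f ≫ z)
  rw [Category.assoc, ← hz] at h5
  convert h5 using 1
  change ψ.symm (FH.un ψ f ≫ w : T ⟶ T) - ψ.symm ((FH.un ψ f ≫ g) ≫ c1 : T ⟶ T) = _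
  rw [Preadditive.comp_sub, ← Category.assoc]
  exact (map_sub ψ.symm _ _).symm

end Core


/-- Let `A` be a 2-Calabi-Yau tilted algebra, `J = A e A`, and let `X` be
a Cohen-Macaulay `A`-module with `Ext¹_A(J, X) = 0 = Ext¹_A(X, J)`. If `f_X : J_X → X` is
an `add J`-approximation of `X`, then the cokernel `F(X) = X / im f_X` is a Cohen-Macaulay
module over `B = A/J`: it is a `B`-module, and `Ext¹_B(F(X), B) = 0`, i.e. every short
exact sequence of `B`-modules `0 → B → E → F(X) → 0` splits. -/
theorem cokernel_of_approximation_is_CM_over_B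
    (k A : Type) [Field k] [IsAlgClosed k] [Ring A] [Algebra k A] [FiniteDimensional k A]
    (hA : IsCYTilted k A) (e : A) (he : IsPrimitiveIdempotent e)
    (X : ModuleCat.{0} Aᵐᵒᵖ) [Module.Finite Aᵐᵒᵖ X] (hX : IsCM k A X)
    (h1 : Subsingleton (rext1 k A (ModuleCat.of Aᵐᵒᵖ ↥(genIdeal e)) X))
    (h2 : Subsingleton (rext1 k A X (ModuleCat.of Aᵐᵒᵖ ↥(genIdeal e))))
    (JX : ModuleCat.{0} Aᵐᵒᵖ) (fX : JX →ₗ[Aᵐᵒᵖ] X) (hfX : IsAddJApprox e JX X fX) :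
    JTriv e (X ⧸ LinearMap.range fX) ∧
    ∀ (E : ModuleCat.{0} Aᵐᵒᵖ) (u : (A ⧸ genIdeal e) →ₗ[Aᵐᵒᵖ] E)
      (v : E →ₗ[Aᵐᵒᵖ] (X ⧸ LinearMap.range fX)),
      JTriv e E → Function.Injective u → Function.Surjective v → Function.Exact u v →
      ∃ s : (X ⧸ LinearMap.range fX) →ₗ[Aᵐᵒᵖ] E, v ∘ₗ s = LinearMap.id := by
  obtain ⟨W⟩ := hA
  letI := W.cat
  letI := W.pre
  letI := W.lin
  letI := W.shift
  letI := W.zero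
  letI := W.shiftAdd
  letI := W.tri
  letI := W.biprod
  letI := W.idem
  obtain ⟨ψ⟩ := W.algIso
  have hJT := JTriv_coker e X JX fX hfX
  refine ⟨hJT, ?_⟩
  intro E u v hE hu hv huv
  haveI : IsNoetherianRing Aᵐᵒᵖ := IsNoetherianRing.of_finite k Aᵐᵒᵖ
  obtain ⟨n, m, π, g, hπ, hex, key⟩ := main_aux (k := k) ψ.toRingEquiv W.homFinite
    (serreDim_of W.serre) W.clusterTilting e he.1 X (E1_of_rext1 k A _ _ hX)
    (E1_of_rext1 k A _ _ h1)
  choose y hy using fun i => hv (Submodule.Quotient.mk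
    (π (FH.mk ψ.toRingEquiv (Limits.biproduct.ι (fun _ : Fin n => W.T) i))))
  obtain ⟨l, hl⟩ := FH.free ψ.toRingEquiv y
  have hl' : v ∘ₗ l = (LinearMap.range fX).mkQ ∘ₗ π := by
    apply FH.ext_pw
    intro i
    rw [LinearMap.comp_apply, hl, hy]
    rfl
  have hl2 : ∀ f, v (l f) = Submodule.Quotient.mk (π f) := fun f => LinearMap.congr_fun hl' f
  have hr : ∀ f, l (FH.map ψ.toRingEquiv g f) ∈ LinearMap.range u := by
    intro f
    apply (huv _).1
    rw [hl2, (hex _).2 ⟨f, rfl⟩]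
    rfl
  let u' := LinearEquiv.ofInjective u hu
  let α := u'.symm.toLinearMap ∘ₗ (l ∘ₗ FH.map ψ.toRingEquiv g).codRestrict (LinearMap.range u) hr
  have hα : ∀ f, u (α f) = l (FH.map ψ.toRingEquiv g f) := fun f =>
    congrArg Subtype.val (u'.apply_symm_apply ⟨l (FH.map ψ.toRingEquiv g f), hr f⟩)
  obtain ⟨β, hβ⟩ := key α (by
    intro f hf
    apply hu
    rw [hα, hf, map_zero, map_zero])
  obtain ⟨μ, hμ⟩ := exists_factor π hπ (l - u ∘ₗ β) (by
    intro f hf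
    obtain ⟨f', rfl⟩ := (hex f).1 hf
    rw [LinearMap.sub_apply, LinearMap.comp_apply, hβ, hα, sub_self])
  have hz : μ ∘ₗ fX = 0 := addJ_hom_zero he.1 hE JX hfX.1 _
  refine ⟨(LinearMap.range fX).liftQ μ (by
    rintro _ ⟨z, rfl⟩
    exact LinearMap.congr_fun hz z), ?_⟩
  apply LinearMap.ext
  intro z
  obtain ⟨x, rfl⟩ := Submodule.Quotient.mk_surjective _ z
  obtain ⟨f, rfl⟩ := hπ x
  change v (μ (π f)) = _
  rw [hμ, LinearMap.sub_apply, map_sub, hl2, LinearMap.comp_apply, (huv _).2 ⟨_, rfl⟩, sub_zero]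
  rfl
end
end
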